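/- arXiv:2306.13825 — 2 statements merged into one kernel-verified Lean document; each statement's English description precedes it below -/
import Mathlib

section
/- Let n ≥ 2 and 2 ≤ p ≤ n. Let u : ℝⁿ → ℝ be a smooth entire p-plurisubharmonic function which has quadratic growth and solves M_p(D²u(x)) = 1 for all x ∈ ℝⁿ. Assume there is a uniform constant A > 0 such that for every x ∈ ℝⁿ and every (p−1)-tuple of indices 1 ≤ i₁ < ⋯ < i_{p−1} ≤ n one has λ_{i₁}(D²u(x)) + ⋯ + λ_{i_{p−1}}(D²u(x)) ≥ −A. Then u is a quadratic polynomial, i.e. there exist a symmetric matrix A', a vector b ∈ ℝⁿ and c ∈ ℝ with u(x) = ½ xᵀA'x + b·x + c for all x. -/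
open scoped BigOperators

noncomputable section

/-- The positive orthant `Γₙ = (0,∞)ⁿ` in `ℝⁿ`. -/
def PosOrthant (n : ℕ) : Set (Fin n → ℝ) := {lam | ∀ i, 0 < lam i}

/-- A convex invariant cone: an open cone `Γ ⊆ ℝⁿ` with vertex at the origin, `Γ ≠ ℝⁿ`,
which is convex, satisfies `Γ + Γₙ ⊆ Γ`, and is invariant under permutations of coordinates. -/
def IsConvexInvariantCone {n : ℕ} (Γ : Set (Fin n → ℝ)) : Prop :=
  IsOpen Γ ∧ Γ ≠ Set.univ ∧ Convex ℝ Γ ∧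
    (∀ lam ∈ Γ, ∀ t : ℝ, 0 < t → t • lam ∈ Γ) ∧
    (∀ lam ∈ Γ, ∀ tau ∈ PosOrthant n, lam + tau ∈ Γ) ∧
    (∀ lam ∈ Γ, ∀ σ : Equiv.Perm (Fin n), lam ∘ σ ∈ Γ)

/-- The partial derivative `∂f/∂λᵢ(λ)`. -/
def fpd {n : ℕ} (f : (Fin n → ℝ) → ℝ) (i : Fin n) (lam : Fin n → ℝ) : ℝ :=
  fderiv ℝ f lam (Pi.single i 1)

/-- A concave elliptic Hessian operator on a convex invariant cone `Γ`:
a `C²`, permutation-invariant, concave function `f` on `Γ` which is elliptic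
(`∂f/∂λᵢ > 0`), positive, and positively homogeneous of degree one. -/
def IsConcaveEllipticHessianOp {n : ℕ} (Γ : Set (Fin n → ℝ)) (f : (Fin n → ℝ) → ℝ) : Prop :=
  ContDiffOn ℝ 2 f Γ ∧ ConcaveOn ℝ Γ f ∧
    (∀ lam ∈ Γ, ∀ σ : Equiv.Perm (Fin n), f (lam ∘ σ) = f lam) ∧
    (∀ lam ∈ Γ, ∀ i, 0 < fpd f i lam) ∧
    (∀ lam ∈ Γ, 0 < f lam) ∧
    (∀ lam ∈ Γ, ∀ t : ℝ, 0 < t → f (t • lam) = t * f lam)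

/-- Condition N: whenever `λ ∈ Γ` satisfies `f(λ) = 1` and `Σᵢ ∂f/∂λᵢ(λ) ≤ C` for some `C > 0`,
then `∂f/∂λᵢ(λ) ≥ 1/(N₁ C^{N₂})` for every `i`. -/
def ConditionN {n : ℕ} (Γ : Set (Fin n → ℝ)) (f : (Fin n → ℝ) → ℝ) (N₁ N₂ : ℝ) : Prop :=
  ∀ lam ∈ Γ, f lam = 1 → ∀ C : ℝ, 0 < C → (∑ i, fpd f i lam) ≤ C →
    ∀ i, 1 / (N₁ * C ^ N₂) ≤ fpd f i lam

/-- The Hessian matrix `D²u(x)`. -/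
def hessianMatrix {n : ℕ} (u : EuclideanSpace ℝ (Fin n) → ℝ) (x : EuclideanSpace ℝ (Fin n)) :
    Matrix (Fin n) (Fin n) ℝ :=
  fun i j => iteratedFDeriv ℝ 2 u x ![EuclideanSpace.single i 1, EuclideanSpace.single j 1]

/-- The vector of eigenvalues `λ(D²u(x))` of the Hessian of `u` at `x`
(junk value `0` if the Hessian matrix fails to be symmetric). -/
def hessEigen {n : ℕ} (u : EuclideanSpace ℝ (Fin n) → ℝ) (x : EuclideanSpace ℝ (Fin n)) :
    Fin n → ℝ :=
  if h : (hessianMatrix u x).IsHermitian then h.eigenvalues else 0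

/-- Condition D for a solution `u` of `F(D²u) = 1` on a set `Ω`: at every point, if an
eigenvalue `λᵢ` of `D²u` exceeds `D₁` then `∂f/∂λᵢ(λ) ⬝ λᵢ ≤ D₂`. -/
def ConditionD {n : ℕ} (f : (Fin n → ℝ) → ℝ) (u : EuclideanSpace ℝ (Fin n) → ℝ)
    (Ω : Set (EuclideanSpace ℝ (Fin n))) (D₁ D₂ : ℝ) : Prop :=
  ∀ x ∈ Ω, ∀ i, D₁ < hessEigen u x i →
    fpd f i (hessEigen u x) * hessEigen u x i ≤ D₂

/-- The `k`-th elementary symmetric polynomial `σ_k` on `ℝⁿ`. -/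
def esymmF (n k : ℕ) (lam : Fin n → ℝ) : ℝ :=
  ∑ s ∈ (Finset.univ : Finset (Fin n)).powersetCard k, ∏ i ∈ s, lam i

/-- The Gårding cone `Γ_k = {λ : σ_j(λ) > 0, j = 1,…,k}`. -/
def GammaK (n k : ℕ) : Set (Fin n → ℝ) :=
  {lam | ∀ j : ℕ, 1 ≤ j → j ≤ k → 0 < esymmF n j lam}

/-- The cone `Γ̂_p` of vectors all of whose sums of `p` distinct coordinates are positive. -/
def GammaHat (n p : ℕ) : Set (Fin n → ℝ) :=
  {lam | ∀ s : Finset (Fin n), s.card = p → 0 < ∑ i ∈ s, lam i}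

/-- The `p`-Monge–Ampère operator `M_p(λ) = ∏_{i₁<⋯<i_p} (λ_{i₁} + ⋯ + λ_{i_p})`. -/
def pMA (n p : ℕ) (lam : Fin n → ℝ) : ℝ :=
  ∏ s ∈ (Finset.univ : Finset (Fin n)).powersetCard p, ∑ i ∈ s, lam i

/-- Quadratic growth: `u(x) ≥ C⁻¹|x|² − C` for some `C > 0`. -/
def QuadraticGrowth {n : ℕ} (u : EuclideanSpace ℝ (Fin n) → ℝ) : Prop :=
  ∃ C : ℝ, 0 < C ∧ ∀ x, C⁻¹ * ‖x‖ ^ 2 - C ≤ u x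

/-- `u` is a quadratic polynomial: `u(x) = ½ xᵀAx + b·x + c` with `A` symmetric. -/
def IsQuadraticPolynomial {n : ℕ} (u : EuclideanSpace ℝ (Fin n) → ℝ) : Prop :=
  ∃ (A : Matrix (Fin n) (Fin n) ℝ) (b : Fin n → ℝ) (c : ℝ), A.IsSymm ∧
    ∀ x, u x = (1 / 2) * (∑ i, ∑ j, A i j * x i * x j) + (∑ i, b i * x i) + c

noncomputable section
open Filter Topology in
/-- second derivative test: at a local max the second derivative is nonpositive. -/
lemma lv_second_deriv_nonpos {h h' : ℝ → ℝ} {c : ℝ} (hmax : IsLocalMax h 0)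
    (hd : ∀ᶠ t in 𝓝 (0:ℝ), HasDerivAt h (h' t) t) (hd2 : HasDerivAt h' c 0) :
    h' 0 = 0 ∧ c ≤ 0 := by
  have h0 : HasDerivAt h (h' 0) 0 := hd.self_of_nhds
  have e0 : h' 0 = 0 := hmax.hasDerivAt_eq_zero h0
  refine ⟨e0, ?_⟩
  by_contra hc
  push Not at hc
  have hdeq : deriv h =ᶠ[𝓝 0] h' := by
    filter_upwards [hd] with t ht using ht.deriv
  have hdd : deriv (deriv h) 0 = c := by
    rw [hdeq.deriv_eq]; exact hd2.deriv
  have hmin := isLocalMin_of_deriv_deriv_pos (f := h) (x₀ := 0) (by rw [hdd]; exact hc)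
    (by rw [hdeq.eq_of_nhds, e0]) h0.continuousAt
  have hconst : h =ᶠ[𝓝 0] fun _ => h 0 := by
    filter_upwards [hmax, hmin] with t h1 h2 using le_antisymm h1 h2
  have h1 : h' =ᶠ[𝓝 0] fun _ => 0 := by
    have := hconst.deriv
    filter_upwards [hdeq, this] with t h1 h2
    rw [← h1, h2]; simp
  have h2 := h1.deriv_eq
  rw [hd2.deriv] at h2
  simp at h2
  linarith

open Filter Topology in
lemma lv_second_deriv_nonneg {h h' : ℝ → ℝ} {c : ℝ} (hmin : IsLocalMin h 0)
    (hd : ∀ᶠ t in 𝓝 (0:ℝ), HasDerivAt h (h' t) t) (hd2 : HasDerivAt h' c 0) :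
    h' 0 = 0 ∧ 0 ≤ c := by
  have := lv_second_deriv_nonpos (h := fun t => - h t) (h' := fun t => - h' t) (c := -c)
    hmin.neg (by filter_upwards [hd] with t ht using ht.neg) hd2.neg
  constructor
  · linarith [this.1]
  · linarith [this.2]

section lcalc
variable {E : Type*} [NormedAddCommGroup E] [NormedSpace ℝ E]

/-- directional derivative -/
def ldd (v : E) (g : E → ℝ) : E → ℝ := fun x => fderiv ℝ g x v

lemma ldd_smooth {g : E → ℝ} (hg : ContDiff ℝ (⊤ : ℕ∞) g) (v : E) :
    ContDiff ℝ (⊤ : ℕ∞) (ldd v g) := by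
  unfold ldd
  exact (hg.fderiv_right (m := (⊤ : ℕ∞)) (by simp)).clm_apply contDiff_const

lemma lsm_diff {g : E → ℝ} (hg : ContDiff ℝ (⊤ : ℕ∞) g) : Differentiable ℝ g :=
  hg.differentiable (by simp)

lemma lsm_fderiv {g : E → ℝ} (hg : ContDiff ℝ (⊤ : ℕ∞) g) :
    ContDiff ℝ (⊤ : ℕ∞) (fderiv ℝ g) := hg.fderiv_right (m := (⊤ : ℕ∞)) (by simp)

lemma ldd_ldd {g : E → ℝ} (hg : ContDiff ℝ (⊤ : ℕ∞) g) (v w x : E) :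
    ldd v (ldd w g) x = fderiv ℝ (fderiv ℝ g) x v w := by
  unfold ldd
  have h : DifferentiableAt ℝ (fderiv ℝ g) x :=
    ((lsm_fderiv hg).differentiable (by simp)) x
  rw [fderiv_clm_apply h (by fun_prop)]
  simp

lemma ldd_comm {g : E → ℝ} (hg : ContDiff ℝ (⊤ : ℕ∞) g) (v w : E) :
    ldd v (ldd w g) = ldd w (ldd v g) := by
  funext x
  rw [ldd_ldd hg, ldd_ldd hg]
  exact (hg.contDiffAt.isSymmSndFDerivAt (by
    simp only [minSmoothness_of_isRCLikeNormedField]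
    exact WithTop.coe_le_coe.2 (le_top : (2:ℕ∞) ≤ ⊤))).eq v w

lemma ldd_line {g : E → ℝ} (hg : ContDiff ℝ (⊤ : ℕ∞) g) (x v : E) (t : ℝ) :
    HasDerivAt (fun t : ℝ => g (x + t • v)) (ldd v g (x + t • v)) t := by
  have h1 : HasFDerivAt g (fderiv ℝ g (x + t • v)) (x + t • v) :=
    (lsm_diff hg _).hasFDerivAt
  have h2 : HasDerivAt (fun t : ℝ => x + t • v) v t := by
    simpa using ((hasDerivAt_id t).smul_const v).const_add x
  exact h1.comp_hasDerivAt t h2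

lemma ldd_const_sub {g : E → ℝ} (c : ℝ) (v : E) :
    ldd v (fun x => c - g x) = fun x => - ldd v g x := by
  funext x
  simp [ldd, fderiv_const_sub]

lemma ldd_neg {g : E → ℝ} (v : E) :
    ldd v (fun x => - g x) = fun x => - ldd v g x := by
  funext x
  have := congrFun (ldd_const_sub (g := g) 0 v) x
  simpa using this
end lcalc

section hess
variable {n : ℕ}
local notation "EE" => EuclideanSpace ℝ (Fin n)

/-- second derivative as a bilinear form -/
def lH (u : EE → ℝ) (x v w : EE) : ℝ := ldd v (ldd w u) x

lemma lH_eq {u : EE → ℝ} (hu : ContDiff ℝ (⊤ : ℕ∞) u) (x v w : EE) :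
    lH u x v w = fderiv ℝ (fderiv ℝ u) x v w := ldd_ldd hu v w x

lemma lH_symm {u : EE → ℝ} (hu : ContDiff ℝ (⊤ : ℕ∞) u) (x v w : EE) :
    lH u x v w = lH u x w v := congrFun (ldd_comm hu v w) x

lemma lhess_eq {u : EE → ℝ} (hu : ContDiff ℝ (⊤ : ℕ∞) u) (x : EE) (i j : Fin n) :
    hessianMatrix u x i j = lH u x (EuclideanSpace.single i 1) (EuclideanSpace.single j 1) := by
  unfold hessianMatrix
  rw [iteratedFDeriv_two_apply, lH_eq hu]
  simp

lemma lhess_herm {u : EE → ℝ} (hu : ContDiff ℝ (⊤ : ℕ∞) u) (x : EE) :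
    (hessianMatrix u x).IsHermitian := by
  ext i j
  simp only [Matrix.conjTranspose_apply, star_trivial]
  rw [lhess_eq hu, lhess_eq hu, lH_symm hu]

lemma lvec_sum (v : EE) : v = ∑ i, v i • EuclideanSpace.single i (1:ℝ) := by
  ext j
  simp [Finset.sum_apply, Pi.single_apply]

lemma lH_mulVec {u : EE → ℝ} (hu : ContDiff ℝ (⊤ : ℕ∞) u) (x v w : EE) :
    lH u x v w = ∑ i, v i * ((hessianMatrix u x).mulVec w i) := by
  simp only [Matrix.mulVec, dotProduct, lhess_eq hu]
  simp only [lH_eq hu]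
  conv_lhs => rw [lvec_sum v, lvec_sum w]
  simp only [map_sum, map_smul, ContinuousLinearMap.coe_sum', Finset.sum_apply,
    ContinuousLinearMap.coe_smul', Pi.smul_apply, smul_eq_mul, Finset.mul_sum]
  rw [Finset.sum_comm]
  refine Finset.sum_congr rfl fun i _ => Finset.sum_congr rfl fun j _ => ?_
  ring

/-- eigenbasis of the Hessian. -/
lemma leig {u : EE → ℝ} (hu : ContDiff ℝ (⊤ : ℕ∞) u) (x : EE) :
    ∃ b : OrthonormalBasis (Fin n) ℝ EE, ∀ i v, lH u x v (b i) =
      hessEigen u x i * inner ℝ (b i) v := by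
  have hh := lhess_herm hu x
  refine ⟨hh.eigenvectorBasis, fun i v => ?_⟩
  rw [lH_mulVec hu]
  have h1 : hessEigen u x = hh.eigenvalues := by unfold hessEigen; rw [dif_pos hh]
  rw [hh.mulVec_eigenvectorBasis i, h1]
  simp only [PiLp.inner_apply, Finset.mul_sum]
  refine Finset.sum_congr rfl fun j _ => ?_
  simp
  ring

lemma lH_basis {u : EE → ℝ} (hu : ContDiff ℝ (⊤ : ℕ∞) u) (x : EE)
    (b : OrthonormalBasis (Fin n) ℝ EE) (lam : Fin n → ℝ)
    (hb : ∀ i v, lH u x v (b i) = lam i * inner ℝ (b i) v) (v : EE) :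
    lH u x v v = ∑ i, (inner ℝ (b i) v) ^ 2 * lam i := by
  have : lH u x v v = ∑ i, (inner ℝ (b i) v) * lH u x v (b i) := by
    conv_lhs => rw [lH_eq hu]; arg 2; rw [← b.sum_repr' v]
    simp [map_sum, lH_eq hu]
  rw [this]
  refine Finset.sum_congr rfl fun i _ => ?_
  rw [hb]; ring

lemma lH_trace {u : EE → ℝ} (hu : ContDiff ℝ (⊤ : ℕ∞) u) (x : EE)
    (b b' : OrthonormalBasis (Fin n) ℝ EE) :
    ∑ i, lH u x (b i) (b i) = ∑ i, lH u x (b' i) (b' i) := by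
  obtain ⟨c, hc⟩ := leig hu x
  have key : ∀ d : OrthonormalBasis (Fin n) ℝ EE,
      ∑ i, lH u x (d i) (d i) = ∑ j, hessEigen u x j := by
    intro d
    simp_rw [lH_basis hu x c _ hc]
    rw [Finset.sum_comm]
    refine Finset.sum_congr rfl fun j _ => ?_
    rw [← Finset.sum_mul, d.sum_sq_inner_left]
    simp
  rw [key, key]
end hess
end

noncomputable section
section alg
variable {n : ℕ}

/-- the family of `p`-subsets -/
abbrev lP (n p : ℕ) : Finset (Finset (Fin n)) := (Finset.univ : Finset (Fin n)).powersetCard p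

/-- the weights `∂ log M_p / ∂ λ_i` -/
def lfw (p : ℕ) (lam : Fin n → ℝ) (i : Fin n) : ℝ :=
  ∑ I ∈ lP n p, if i ∈ I then 1 / (∑ j ∈ I, lam j) else 0

lemma lP_card {p : ℕ} {I : Finset (Fin n)} : I ∈ lP n p ↔ I.card = p := by
  simp [lP, Finset.mem_powersetCard]

lemma lfw_sum (p : ℕ) (lam d : Fin n → ℝ) :
    ∑ i, lfw p lam i * d i = ∑ I ∈ lP n p, (∑ i ∈ I, d i) / (∑ j ∈ I, lam j) := by
  simp only [lfw, Finset.sum_mul]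
  rw [Finset.sum_comm]
  refine Finset.sum_congr rfl fun I _ => ?_
  rw [Finset.sum_div]
  simp only [ite_mul, zero_mul]
  rw [← Finset.sum_filter]
  simp only [Finset.filter_mem_eq_inter, Finset.univ_inter]
  refine Finset.sum_congr rfl fun i _ => ?_
  ring

lemma lfw_self {p : ℕ} {lam : Fin n → ℝ} (h : lam ∈ GammaHat n p) :
    ∑ i, lfw p lam i * lam i = (n.choose p : ℝ) := by
  rw [lfw_sum]
  rw [Finset.sum_congr rfl (g := fun _ => (1:ℝ))]
  · simp [lP]
  · intro I hI
    exact div_self (h I (lP_card.1 hI)).ne'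

lemma lamgm {ι : Type*} (s : Finset ι) (z : ι → ℝ) (hz : ∀ i ∈ s, 0 < z i)
    (hp : ∏ i ∈ s, z i = 1) : (s.card : ℝ) ≤ ∑ i ∈ s, z i := by
  have h1 : ∑ i ∈ s, Real.log (z i) = 0 := by
    rw [← Real.log_prod (fun i hi => (hz i hi).ne'), hp, Real.log_one]
  have h2 : ∑ i ∈ s, Real.log (z i) ≤ ∑ i ∈ s, (z i - 1) :=
    Finset.sum_le_sum fun i hi => Real.log_le_sub_one_of_pos (hz i hi)
  rw [h1, Finset.sum_sub_distrib] at h2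
  simp at h2
  exact h2

lemma lperm_ineq {p : ℕ} {lam mu : Fin n → ℝ} (hl : lam ∈ GammaHat n p) (hm : mu ∈ GammaHat n p)
    (el : pMA n p lam = 1) (em : pMA n p mu = 1) (σ : Equiv.Perm (Fin n)) :
    (n.choose p : ℝ) ≤ ∑ i, lfw p lam i * mu (σ i) := by
  rw [lfw_sum]
  have hc : ((lP n p).card : ℝ) = n.choose p := by simp [lP]
  rw [← hc]
  have hs : ∀ I : Finset (Fin n), ∑ i ∈ I, mu (σ i) = ∑ j ∈ I.map σ.toEmbedding, mu j := by
    intro I; simp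
  apply lamgm
  · intro I hI
    apply div_pos
    · rw [hs]; apply hm; simpa using lP_card.1 hI
    · exact hl I (lP_card.1 hI)
  · rw [Finset.prod_div_distrib]
    have : ∏ I ∈ lP n p, ∑ i ∈ I, mu (σ i) = pMA n p mu := by
      unfold pMA
      refine Finset.prod_bij (fun I _ => I.map σ.toEmbedding) ?_ ?_ ?_ ?_
      · intro I hI
        rw [lP_card] at *
        simpa using hI
      · intro I _ J _ h
        exact Finset.map_injective _ h
      · intro J hJ
        refine ⟨J.map σ.symm.toEmbedding, ?_, ?_⟩
        · rw [lP_card] at *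
          simpa using hJ
        · ext k; simp
      · intro I _
        exact hs I
    rw [this, em]
    have : ∏ I ∈ lP n p, ∑ j ∈ I, lam j = 1 := el
    rw [this]; simp

lemma lds_ineq {p : ℕ} {lam mu : Fin n → ℝ} (hl : lam ∈ GammaHat n p) (hm : mu ∈ GammaHat n p)
    (el : pMA n p lam = 1) (em : pMA n p mu = 1) (Q : Matrix (Fin n) (Fin n) ℝ)
    (hQ : Q ∈ doublyStochastic ℝ (Fin n)) :
    (n.choose p : ℝ) ≤ ∑ i, lfw p lam i * (∑ j, Q i j * mu j) := by
  obtain ⟨w, hw0, hw1, hw⟩ := exists_eq_sum_perm_of_mem_doublyStochastic hQ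
  have h1 : ∀ i, ∑ j, Q i j * mu j = ∑ σ : Equiv.Perm (Fin n), w σ * mu (σ i) := by
    intro i
    rw [← hw]
    simp only [Matrix.sum_apply, Matrix.smul_apply, Finset.sum_mul]
    rw [Finset.sum_comm]
    refine Finset.sum_congr rfl fun σ _ => ?_
    simp [Equiv.Perm.permMatrix, PEquiv.toMatrix_apply]
  simp only [h1, Finset.mul_sum]
  rw [Finset.sum_comm]
  calc (n.choose p : ℝ) = ∑ σ, w σ * (n.choose p : ℝ) := by rw [← Finset.sum_mul, hw1, one_mul]
    _ ≤ ∑ σ, w σ * ∑ i, lfw p lam i * mu (σ i) :=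
        Finset.sum_le_sum fun σ _ =>
          mul_le_mul_of_nonneg_left (lperm_ineq hl hm el em σ) (hw0 σ)
    _ = _ := by
        refine Finset.sum_congr rfl fun σ _ => ?_
        rw [Finset.mul_sum]
        refine Finset.sum_congr rfl fun i _ => ?_
        ring

lemma lfw_nonneg {p : ℕ} {lam : Fin n → ℝ} (hl : lam ∈ GammaHat n p) (i : Fin n) :
    0 ≤ lfw p lam i := by
  refine Finset.sum_nonneg fun I hI => ?_
  split_ifs
  · exact one_div_nonneg.2 (hl I (lP_card.1 hI)).le
  · exact le_rfl

/-- upper bound for weights -/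
lemma lfw_le {p : ℕ} {lam : Fin n → ℝ} {c : ℝ} (hc : 0 < c) (i : Fin n)
    (h : ∀ I ∈ lP n p, i ∈ I → c ≤ ∑ j ∈ I, lam j) :
    lfw p lam i ≤ n.choose p * (1 / c) := by
  have : lfw p lam i ≤ ∑ I ∈ lP n p, 1 / c := by
    refine Finset.sum_le_sum fun I hI => ?_
    split_ifs with hi
    · exact one_div_le_one_div_of_le hc (h I hI hi)
    · positivity
  simpa [lP] using this

lemma lsum_erase {p : ℕ} {lam : Fin n → ℝ} {A : ℝ}
    (hA : ∀ s : Finset (Fin n), s.card = p - 1 → -A ≤ ∑ i ∈ s, lam i)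
    {I : Finset (Fin n)} (hI : I ∈ lP n p) {j : Fin n} (hj : j ∈ I) :
    lam j - A ≤ ∑ i ∈ I, lam i := by
  have h1 := hA (I.erase j) (by rw [Finset.card_erase_of_mem hj, lP_card.1 hI])
  rw [← Finset.add_sum_erase I lam hj]
  linarith

lemma lexists_mem {p : ℕ} (hp : 1 ≤ p) (hpn : p ≤ n) (i : Fin n) : ∃ I ∈ lP n p, i ∈ I := by
  obtain ⟨I, h1, -, h3⟩ := Finset.exists_subsuperset_card_eq (s := {i})
    (t := (Finset.univ : Finset (Fin n))) (n := p) (by simp) (by simpa using hp) (by simpa using hpn)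
  exact ⟨I, lP_card.2 h3, by simpa using h1⟩

lemma lfw_single_le {p : ℕ} {lam : Fin n → ℝ} (hl : lam ∈ GammaHat n p) {I : Finset (Fin n)}
    (hI : I ∈ lP n p) {i : Fin n} (hi : i ∈ I) : 1 / (∑ j ∈ I, lam j) ≤ lfw p lam i := by
  have := Finset.single_le_sum (f := fun I => if i ∈ I then 1 / (∑ j ∈ I, lam j) else 0)
    (s := lP n p) (fun J hJ => by
      split_ifs
      · exact one_div_nonneg.2 (hl J (lP_card.1 hJ)).le
      · exact le_rfl) hI
  simpa [hi, lfw] using this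

/-- uniform ellipticity under an upper bound. -/
lemma lfw_bounds {p : ℕ} (hp : 1 ≤ p) (hpn : p ≤ n) {K : ℝ} (hK : 1 ≤ K) :
    ∃ c C : ℝ, 0 < c ∧ 0 < C ∧ ∀ lam : Fin n → ℝ, lam ∈ GammaHat n p → pMA n p lam = 1 →
      (∀ i, lam i ≤ K) → ∀ i, c ≤ lfw p lam i ∧ lfw p lam i ≤ C := by
  have hp' : (1:ℝ) ≤ p := by exact_mod_cast hp
  have hL : 1 ≤ p * K := by nlinarith
  set L := (p:ℝ) * K with hLdef
  have hch : (0:ℝ) < n.choose p := by exact_mod_cast Nat.choose_pos hpn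
  refine ⟨1 / L, n.choose p * (1 / (1 / L ^ (lP n p).card)), by positivity, by positivity, ?_⟩
  intro lam hl el hlK i
  have hub : ∀ I ∈ lP n p, ∑ j ∈ I, lam j ≤ L := by
    intro I hI
    calc ∑ j ∈ I, lam j ≤ ∑ j ∈ I, K := Finset.sum_le_sum fun j _ => hlK j
      _ = L := by simp [lP_card.1 hI, hLdef]
  constructor
  · obtain ⟨I, hI, hi⟩ := lexists_mem hp hpn i
    refine le_trans ?_ (lfw_single_le hl hI hi)
    exact one_div_le_one_div_of_le (hl I (lP_card.1 hI)) (hub I hI)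
  · refine lfw_le (by positivity) i fun I hI _ => ?_
    have h1 : (∑ j ∈ I, lam j) * ∏ J ∈ (lP n p).erase I, ∑ j ∈ J, lam j = 1 := by
      rw [Finset.mul_prod_erase (lP n p) (fun J => ∑ j ∈ J, lam j) hI]; exact el
    have h2 : ∏ J ∈ (lP n p).erase I, ∑ j ∈ J, lam j ≤ L ^ (lP n p).card := by
      calc ∏ J ∈ (lP n p).erase I, ∑ j ∈ J, lam j ≤ ∏ J ∈ (lP n p).erase I, L :=
            Finset.prod_le_prod
              (fun J hJ => (hl J (lP_card.1 (Finset.mem_of_mem_erase hJ))).le)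
              (fun J hJ => hub J (Finset.mem_of_mem_erase hJ))
        _ = L ^ ((lP n p).erase I).card := by simp
        _ ≤ L ^ (lP n p).card := pow_le_pow_right₀ hL (Finset.card_le_card (Finset.erase_subset _ _))
    have h3 := hl I (lP_card.1 hI)
    rw [div_le_iff₀ (by positivity)]
    nlinarith

/-- dichotomy for the weights -/
lemma ldichotomy {p : ℕ} (hp : 2 ≤ p) {lam : Fin n → ℝ} (hl : lam ∈ GammaHat n p)
    {A : ℝ} (hA0 : 0 < A)
    (hA : ∀ s : Finset (Fin n), s.card = p - 1 → -A ≤ ∑ i ∈ s, lam i)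
    {m : Fin n} (hm : ∀ i, lam i ≤ lam m) (hbig : 16 * p * A ≤ lam m) (i : Fin n) :
    lfw p lam i * lam m ≤ 16 * p * n.choose p ∨
    (lam i < lam m ∧ (5/4) * lfw p lam i ≤
      2 * lam m * ((lfw p lam i - lfw p lam m) / (lam m - lam i))) := by
  have hp' : (2:ℝ) ≤ p := by exact_mod_cast hp
  have hmpos : 0 < lam m := lt_of_lt_of_le (by positivity) hbig
  have hAm : 2 * A ≤ lam m := by nlinarith
  have hN : (0:ℝ) ≤ n.choose p := by positivity
  have key : ∀ c : ℝ, 0 < c → ∀ k, (∀ I ∈ lP n p, k ∈ I → lam m / c ≤ ∑ j ∈ I, lam j) →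
      lfw p lam k * lam m ≤ c * n.choose p := by
    intro c hc k hk
    have := lfw_le (p := p) (lam := lam) (c := lam m / c) (by positivity) k hk
    calc lfw p lam k * lam m ≤ (n.choose p * (1 / (lam m / c))) * lam m :=
          mul_le_mul_of_nonneg_right this hmpos.le
      _ = c * n.choose p := by field_simp
  have hfm : lfw p lam m * lam m ≤ 2 * n.choose p := by
    refine key 2 (by norm_num) m fun I hI hmI => ?_
    have := lsum_erase hA hI hmI
    linarith
  by_cases h1 : lfw p lam i * lam m ≤ 16 * p * n.choose p
  · exact Or.inl h1
  right
  have hlow : - lam m / 8 < lam i := by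
    by_contra hcon
    push Not at hcon
    apply h1
    refine key (16 * p) (by positivity) i fun I hI hiI => ?_
    have hex : ∃ j ∈ I, lam m / (8 * p) ≤ lam j := by
      by_contra hno
      push Not at hno
      have hs := hl I (lP_card.1 hI)
      rw [← Finset.add_sum_erase I lam hiI] at hs
      have : ∑ j ∈ I.erase i, lam j ≤ ∑ j ∈ I.erase i, lam m / (8 * p) :=
        Finset.sum_le_sum fun j hj => (hno j (Finset.mem_of_mem_erase hj)).le
      rw [Finset.sum_const, Finset.card_erase_of_mem hiI, lP_card.1 hI, nsmul_eq_mul] at this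
      have hc : ((p - 1 : ℕ) : ℝ) = p - 1 := by
        rw [Nat.cast_sub (by omega)]; simp
      rw [hc] at this
      have h3 : ((p:ℝ) - 1) * (lam m / (8 * p)) ≤ lam m / 8 := by
        rw [mul_div_assoc', div_le_div_iff₀ (by positivity) (by norm_num)]
        nlinarith
      linarith
    obtain ⟨j, hj, hjl⟩ := hex
    have h4 := lsum_erase hA hI hj
    have h5 : A ≤ lam m / (16 * p) := by
      rw [le_div_iff₀ (by positivity)]; linarith
    have h6 : lam m / (8 * p) = 2 * (lam m / (16 * p)) := by field_simp; norm_num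
    linarith
  push Not at h1
  have hlt : lam i < lam m := by
    rcases lt_or_eq_of_le (hm i) with h | h
    · exact h
    · exfalso
      have : lfw p lam i * lam m ≤ 2 * n.choose p := by
        refine key 2 (by norm_num) i fun I hI hmI => ?_
        have := lsum_erase hA hI hmI
        linarith
      nlinarith
  refine ⟨hlt, ?_⟩
  have hgap : 0 < lam m - lam i := by linarith
  have hfi : 0 ≤ lfw p lam i := lfw_nonneg hl i
  have hf16 : lfw p lam m ≤ lfw p lam i / 16 := by
    have : lfw p lam m * lam m ≤ lfw p lam i / 16 * lam m := by nlinarith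
    exact le_of_mul_le_mul_right this hmpos
  rw [mul_div_assoc', le_div_iff₀ hgap]
  have h7 : lam m - lam i ≤ 9/8 * lam m := by linarith
  have h8 : (5/4) * lfw p lam i * (lam m - lam i) ≤ (5/4) * lfw p lam i * (9/8 * lam m) :=
    mul_le_mul_of_nonneg_left h7 (by positivity)
  have h9 : 2 * lam m * (15/16 * lfw p lam i) ≤ 2 * lam m * (lfw p lam i - lfw p lam m) :=
    mul_le_mul_of_nonneg_left (by linarith) (by positivity)
  nlinarith [mul_nonneg hfi hmpos.le]

/-- growth of the trace of the weights -/
lemma ltrace_growth {p : ℕ} (hp : 2 ≤ p) (hpn : p < n) {lam : Fin n → ℝ} (hl : lam ∈ GammaHat n p)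
    (el : pMA n p lam = 1) {A : ℝ} 
    (hA : ∀ s : Finset (Fin n), s.card = p - 1 → -A ≤ ∑ i ∈ s, lam i)
    {m : Fin n} (hbig : 2 * A ≤ lam m) (h2 : 2 ≤ lam m) :
    lam m / 2 ≤ (1 + ∑ i, lfw p lam i) ^ (n.choose p) := by
  set T := ∑ i, lfw p lam i with hT
  have hTI : ∀ I ∈ lP n p, 1 / (∑ j ∈ I, lam j) ≤ T := by
    intro I hI
    have hne : I.Nonempty := by
      rw [← Finset.card_pos, lP_card.1 hI]; omega
    obtain ⟨i, hi⟩ := hne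
    exact (lfw_single_le hl hI hi).trans
      (Finset.single_le_sum (f := fun i => lfw p lam i) (fun i _ => lfw_nonneg hl i)
        (Finset.mem_univ i))
  have hTn : 0 ≤ T := Finset.sum_nonneg fun i _ => lfw_nonneg hl i
  have hsplit := Finset.prod_filter_mul_prod_filter_not (lP n p) (fun I => m ∈ I)
    (fun I => ∑ j ∈ I, lam j)
  have el' : ∏ I ∈ lP n p, ∑ j ∈ I, lam j = 1 := el
  rw [el'] at hsplit
  set P1 := ∏ I ∈ (lP n p).filter (fun I => m ∈ I), ∑ j ∈ I, lam j
  set P2 := ∏ I ∈ (lP n p).filter (fun I => ¬ m ∈ I), ∑ j ∈ I, lam j with hP2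
  have hP2pos : 0 < P2 := Finset.prod_pos fun I hI => hl I (lP_card.1 (Finset.mem_filter.1 hI).1)
  have hge : ∀ I ∈ (lP n p).filter (fun I => m ∈ I), lam m / 2 ≤ ∑ j ∈ I, lam j := by
    intro I hI
    have := lsum_erase hA (Finset.mem_filter.1 hI).1 (Finset.mem_filter.1 hI).2
    linarith
  have hP1 : lam m / 2 ≤ P1 := by
    obtain ⟨I, hI, hmI⟩ := lexists_mem (n := n) (p := p) (by omega) (by omega) m
    have hIf : I ∈ (lP n p).filter (fun I => m ∈ I) := Finset.mem_filter.2 ⟨hI, hmI⟩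
    have e := Finset.mul_prod_erase _ (fun J => ∑ j ∈ J, lam j) hIf
    have h1 : 1 ≤ ∏ J ∈ ((lP n p).filter (fun I => m ∈ I)).erase I, ∑ j ∈ J, lam j :=
      Finset.one_le_prod fun J hJ => by
        have := hge J (Finset.mem_of_mem_erase hJ); linarith
    have h3 := hge I hIf
    change lam m / 2 ≤ ∏ I ∈ (lP n p).filter (fun I => m ∈ I), ∑ j ∈ I, lam j
    rw [← e]
    nlinarith
  have hP2' : 1 / P2 ≤ (1 + T) ^ (n.choose p) := by
    have : 1 / P2 = ∏ I ∈ (lP n p).filter (fun I => ¬ m ∈ I), 1 / (∑ j ∈ I, lam j) := by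
      rw [hP2]; simp
    rw [this]
    calc _ ≤ ∏ I ∈ (lP n p).filter (fun I => ¬ m ∈ I), (1 + T) :=
          Finset.prod_le_prod
            (fun I hI => one_div_nonneg.2 (hl I (lP_card.1 (Finset.mem_filter.1 hI).1)).le)
            (fun I hI => by linarith [hTI I (Finset.mem_filter.1 hI).1])
      _ = (1 + T) ^ ((lP n p).filter (fun I => ¬ m ∈ I)).card := by simp
      _ ≤ (1 + T) ^ (n.choose p) := by
          apply pow_le_pow_right₀ (by linarith)
          calc _ ≤ (lP n p).card := Finset.card_filter_le _ _
            _ = n.choose p := by simp [lP]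
  have : P1 = 1 / P2 := by field_simp; exact hsplit
  linarith
end alg

section KI
variable {n : ℕ}
local notation "EE" => EuclideanSpace ℝ (Fin n)

/-- the key inequality -/
lemma lKI {p : ℕ} {u : EE → ℝ} (hu : ContDiff ℝ (⊤ : ℕ∞) u) (hadm : ∀ x, hessEigen u x ∈ GammaHat n p)
    (heq : ∀ x, pMA n p (hessEigen u x) = 1) (x y : EE) (b : OrthonormalBasis (Fin n) ℝ EE) :
    (n.choose p : ℝ) ≤ ∑ i, lfw p (hessEigen u x) i * lH u y (b i) (b i) := by
  obtain ⟨c, hc⟩ := leig hu y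
  have hds : (Matrix.of fun i j => (inner ℝ (c j) (b i)) ^ 2 : Matrix (Fin n) (Fin n) ℝ)
      ∈ doublyStochastic ℝ (Fin n) := by
    rw [mem_doublyStochastic_iff_sum]
    refine ⟨fun i j => ?_, fun i => ?_, fun j => ?_⟩
    · simp only [Matrix.of_apply]; exact sq_nonneg _
    · simp only [Matrix.of_apply, c.sum_sq_inner_right, b.norm_eq_one, one_pow]
    · simp only [Matrix.of_apply, b.sum_sq_inner_left, c.norm_eq_one, one_pow]
  have h := lds_ineq (hadm x) (hadm y) (heq x) (heq y) _ hds
  simp only [Matrix.of_apply] at h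
  simp only [fun i => lH_basis hu y c _ hc (b i)]
  exact h
end KI
end

noncomputable section
section abp
variable {n : ℕ}
local notation "EE" => EuclideanSpace ℝ (Fin n)
open MeasureTheory Filter Topology Metric

/-- supersolutions of some uniformly elliptic equation in nondivergence form -/
def lSuper (c C : ℝ) (w : EE → ℝ) : Prop :=
  ∀ x, ∃ (b : OrthonormalBasis (Fin n) ℝ EE) (f : Fin n → ℝ),
    (∀ i, c ≤ f i ∧ f i ≤ C) ∧ ∑ i, f i * lH w x (b i) (b i) ≤ 0

lemma lline_eq {g : EE → ℝ} (hg : ContDiff ℝ (⊤ : ℕ∞) g) (x v : EE) {c : ℝ}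
    (h : HasDerivAt (fun t : ℝ => g (x + t • v)) c 0) : ldd v g x = c := by
  have := ldd_line hg x v 0
  simp only [zero_smul, add_zero] at this
  exact this.unique h

lemma llog_smooth {w : EE → ℝ} (hw : ContDiff ℝ (⊤ : ℕ∞) w) (hw0 : ∀ x, 0 ≤ w x) {t : ℝ} (ht : 0 < t) :
    ContDiff ℝ (⊤ : ℕ∞) (fun x => Real.log (w x + t)) :=
  (hw.add contDiff_const).log fun x => by have := hw0 x; positivity

lemma llog_d1 {w : EE → ℝ} (hw : ContDiff ℝ (⊤ : ℕ∞) w) (hw0 : ∀ x, 0 ≤ w x) {t : ℝ} (ht : 0 < t)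
    (v x : EE) : ldd v (fun x => Real.log (w x + t)) x = ldd v w x / (w x + t) := by
  apply lline_eq (llog_smooth hw hw0 ht)
  have h := (ldd_line hw x v 0).add_const t
  have hne : w (x + (0:ℝ) • v) + t ≠ 0 := by have := hw0 (x + (0:ℝ) • v); positivity
  have := h.log hne
  simpa using this

lemma llog_d2 {w : EE → ℝ} (hw : ContDiff ℝ (⊤ : ℕ∞) w) (hw0 : ∀ x, 0 ≤ w x) {t : ℝ} (ht : 0 < t)
    (v x : EE) : lH (fun x => Real.log (w x + t)) x v v =
      lH w x v v / (w x + t) - (ldd v (fun x => Real.log (w x + t)) x) ^ 2 := by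
  have hs := ldd_smooth (llog_smooth hw hw0 ht) v
  unfold lH
  apply lline_eq hs
  have e : ldd v (fun x => Real.log (w x + t)) = fun x => ldd v w x / (w x + t) :=
    funext fun x => llog_d1 hw hw0 ht v x
  rw [e]
  have h := (ldd_line hw x v 0).add_const t
  have h2 := ldd_line (ldd_smooth hw v) x v 0
  have hne : w (x + (0:ℝ) • v) + t ≠ 0 := by have := hw0 (x + (0:ℝ) • v); positivity
  have := h2.div h hne
  simp only [zero_smul, add_zero] at this hne
  refine HasDerivAt.congr_deriv this ?_
  field_simp

/-- the gradient -/
def lgrad (W : EE → ℝ) (z : EE) : EE := ∑ i, ldd (EuclideanSpace.single i (1:ℝ)) W z •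
  (EuclideanSpace.single i (1:ℝ) : EE)

lemma lgrad_smooth {W : EE → ℝ} (hW : ContDiff ℝ (⊤ : ℕ∞) W) : ContDiff ℝ (⊤ : ℕ∞) (lgrad W) := by
  unfold lgrad
  exact ContDiff.sum fun i _ => (ldd_smooth hW _).smul contDiff_const

lemma lgrad_inner (W : EE → ℝ) (z v : EE) : inner ℝ (lgrad W z) v = ldd v W z := by
  conv_rhs => rw [lvec_sum v]
  simp only [lgrad, sum_inner, inner_smul_left, EuclideanSpace.inner_single_left, ldd, map_sum, map_smul]
  simp [mul_comm]

lemma lgrad_fderiv {W : EE → ℝ} (hW : ContDiff ℝ (⊤ : ℕ∞) W) (z v v' : EE) :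
    inner ℝ (fderiv ℝ (lgrad W) z v) v' = lH W z v v' := by
  have h1 : DifferentiableAt ℝ (lgrad W) z := ((lgrad_smooth hW).differentiable (by simp)) z
  have : fderiv ℝ (fun z => inner ℝ (lgrad W z) v') z v = inner ℝ (fderiv ℝ (lgrad W) z v) v' := by
    rw [fderiv_inner_apply ℝ h1 (by fun_prop)]
    simp
  rw [← this]
  simp only [lgrad_inner]
  rfl

/-- contact with a concave paraboloid -/
lemma lcontact {c C : ℝ} (hc : 0 < c) (hC : 0 < C) {w : EE → ℝ} (hw : ContDiff ℝ (⊤ : ℕ∞) w)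
    (hw0 : ∀ x, 0 ≤ w x) (hS : lSuper c C w) {t k : ℝ} (ht : 0 < t) (hk : 0 < k) (y z : EE)
    (hmin : ∀ x, Real.log (w z + t) + k * ‖z - y‖ ^ 2 ≤ Real.log (w x + t) + k * ‖x - y‖ ^ 2) :
    z + (1 / (2 * k)) • lgrad (fun x => Real.log (w x + t)) z = y ∧
    ‖z - y‖ ^ 2 ≤ n * C / (2 * c * k) ∧
    (∀ v, - (2 * k) * ‖v‖ ^ 2 ≤ lH (fun x => Real.log (w x + t)) z v v) ∧
    (∃ b : OrthonormalBasis (Fin n) ℝ EE, ∑ i, lH (fun x => Real.log (w x + t)) z (b i) (b i) ≤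
      n * (2 * k * n * C / c)) := by
  set W : EE → ℝ := fun x => Real.log (w x + t) with hWdef
  have hW : ContDiff ℝ (⊤ : ℕ∞) W := llog_smooth hw hw0 ht
  have hline : ∀ v : EE, ldd v W z + 2 * k * inner ℝ (z - y) v = 0 ∧
      0 ≤ lH W z v v + 2 * k * ‖v‖ ^ 2 := by
    intro v
    have hq : ∀ s : ℝ, ‖z + s • v - y‖ ^ 2 = ‖z - y‖ ^ 2 + 2 * s * inner ℝ (z - y) v
        + s ^ 2 * ‖v‖ ^ 2 := by
      intro s
      have : z + s • v - y = (z - y) + s • v := by abel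
      rw [this, norm_add_sq_real, inner_smul_right, norm_smul, mul_pow, Real.norm_eq_abs, sq_abs]
      ring
    have := lv_second_deriv_nonneg
      (h := fun s : ℝ => W (z + s • v) + k * (‖z - y‖ ^ 2 + 2 * s * inner ℝ (z - y) v
        + s ^ 2 * ‖v‖ ^ 2))
      (h' := fun s : ℝ => ldd v W (z + s • v) + k * (2 * inner ℝ (z - y) v
        + 2 * s * ‖v‖ ^ 2)) (c := lH W z v v + 2 * k * ‖v‖ ^ 2) ?_ ?_ ?_
    · refine ⟨?_, this.2⟩
      have h1 := this.1
      simp at h1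
      linarith
    · refine Filter.Eventually.of_forall fun s => ?_
      have := hmin (z + s • v)
      rw [hq] at this
      simpa using this
    · refine Filter.Eventually.of_forall fun s => ?_
      refine (ldd_line hW z v s).add (HasDerivAt.const_mul k ?_)
      have h1 : HasDerivAt (fun s : ℝ => 2 * s * inner ℝ (z - y) v) (2 * inner ℝ (z - y) v) s := by
        simpa using ((hasDerivAt_id s).const_mul 2).mul_const (inner ℝ (z - y) v)
      have h2 : HasDerivAt (fun s : ℝ => s ^ 2 * ‖v‖ ^ 2) (2 * s * ‖v‖ ^ 2) s := by
        simpa using (hasDerivAt_pow 2 s).mul_const (‖v‖ ^ 2)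
      exact (h1.const_add _).add h2
    · have h0 := ldd_line (ldd_smooth hW v) z v 0
      simp only [zero_smul, add_zero] at h0
      refine h0.add ?_
      have h2 : HasDerivAt (fun s : ℝ => 2 * inner ℝ (z - y) v + 2 * s * ‖v‖ ^ 2) (2 * ‖v‖ ^ 2) 0 := by
        simpa using (((hasDerivAt_id (0:ℝ)).const_mul 2).mul_const (‖v‖ ^ 2)).const_add
          (2 * inner ℝ (z - y) v)
      refine HasDerivAt.congr_deriv (h2.const_mul k) ?_
      ring
  obtain ⟨b, f, hf, hsum⟩ := hS z
  have hwt : 0 < w z + t := by have := hw0 z; linarith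
  have hsum2 : ∑ i, f i * lH W z (b i) (b i) ≤ - (4 * c * k ^ 2 * ‖z - y‖ ^ 2) := by
    have e1 : ∀ i, f i * lH W z (b i) (b i) = (f i * lH w z (b i) (b i)) / (w z + t)
        - f i * (2 * k * inner ℝ (z - y) (b i)) ^ 2 := by
      intro i
      have h1 := llog_d2 hw hw0 ht (b i) z
      have h2 := (hline (b i)).1
      have h3 : ldd (b i) W z = - (2 * k * inner ℝ (z - y) (b i)) := by linarith
      have h1' : lH W z (b i) (b i) = lH w z (b i) (b i) / (w z + t) - (ldd (b i) W z) ^ 2 := h1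
      rw [h1', h3]; ring
    rw [Finset.sum_congr rfl fun i _ => e1 i, Finset.sum_sub_distrib, ← Finset.sum_div]
    have h4 : (∑ i, f i * lH w z (b i) (b i)) / (w z + t) ≤ 0 :=
      div_nonpos_of_nonpos_of_nonneg hsum hwt.le
    have h5 : 4 * c * k ^ 2 * ‖z - y‖ ^ 2 ≤ ∑ i, f i * (2 * k * inner ℝ (z - y) (b i)) ^ 2 := by
      rw [← b.sum_sq_inner_left (z - y), Finset.mul_sum]
      refine Finset.sum_le_sum fun i _ => ?_
      have := mul_le_mul_of_nonneg_right (hf i).1 (sq_nonneg (2 * k * inner ℝ (z - y) (b i)))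
      linarith
    linarith
  have hlow : ∀ i, -(2 * k) ≤ lH W z (b i) (b i) := by
    intro i
    have := (hline (b i)).2
    rw [b.norm_eq_one] at this
    linarith
  refine ⟨?_, ?_, ?_, b, ?_⟩
  · apply ext_inner_right ℝ
    intro v
    have := (hline v).1
    rw [inner_add_left, inner_smul_left, lgrad_inner]
    have h3 : ldd v W z = - (2 * k * inner ℝ (z - y) v) := by linarith
    rw [h3, inner_sub_left]
    simp
    field_simp
    ring
  · have h6 : -(2 * k * n * C) ≤ ∑ i, f i * lH W z (b i) (b i) := by
      have : ∑ i : Fin n, (-(2 * k * C)) ≤ ∑ i, f i * lH W z (b i) (b i) := by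
        refine Finset.sum_le_sum fun i _ => ?_
        have h7 := (hf i).1
        have h8 := (hf i).2
        have h9 := hlow i
        have h10 : 0 ≤ f i * (lH W z (b i) (b i) + 2 * k) :=
          mul_nonneg (by linarith) (by linarith)
        nlinarith
      simp at this
      linarith
    rw [le_div_iff₀ (by positivity)]
    have h11 : 4 * c * k ^ 2 * ‖z - y‖ ^ 2 ≤ 2 * k * n * C := by linarith
    have h12 : 2 * k * (‖z - y‖ ^ 2 * (2 * c * k)) ≤ 2 * k * (n * C) := by linarith
    exact le_of_mul_le_mul_left h12 (by positivity)
  · intro v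
    linarith [(hline v).2]
  · have hupper : ∀ j, lH W z (b j) (b j) ≤ 2 * k * n * C / c := by
      intro j
      rcases le_or_gt (lH W z (b j) (b j)) 0 with h | h
      · exact h.trans (by positivity)
      rw [le_div_iff₀ hc]
      have hsum3 : ∑ i, f i * lH W z (b i) (b i) ≤ 0 := by
        refine hsum2.trans ?_
        have : 0 ≤ 4 * c * k ^ 2 * ‖z - y‖ ^ 2 := by positivity
        linarith
      have h13 : ∀ i, 0 ≤ f i * (lH W z (b i) (b i) + 2 * k) := fun i =>
        mul_nonneg (by linarith [(hf i).1]) (by linarith [hlow i])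
      have h14 := Finset.single_le_sum (fun i _ => h13 i) (Finset.mem_univ j)
      have h15 : ∑ i, f i * (lH W z (b i) (b i) + 2 * k) ≤ 2 * k * n * C := by
        have : ∑ i, f i * (lH W z (b i) (b i) + 2 * k) =
            ∑ i, f i * lH W z (b i) (b i) + ∑ i, f i * (2 * k) := by
          rw [← Finset.sum_add_distrib]
          exact Finset.sum_congr rfl fun i _ => by ring
        rw [this]
        have h16 : ∑ i, f i * (2 * k) ≤ ∑ i : Fin n, C * (2 * k) :=
          Finset.sum_le_sum fun i _ => mul_le_mul_of_nonneg_right (hf i).2 (by positivity)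
        simp at h16
        linarith
      have h17 := (hf j).1
      nlinarith
    have := Finset.sum_le_sum (s := Finset.univ) fun j _ => hupper j
    simpa using this

/-- determinant bound -/
lemma ldet_bound {W : EE → ℝ} (hW : ContDiff ℝ (⊤ : ℕ∞) W) (z : EE) {k τ : ℝ} (hk : 0 < k)
    (hlow : ∀ v, - (2 * k) * ‖v‖ ^ 2 ≤ lH W z v v)
    (b : OrthonormalBasis (Fin n) ℝ EE) (hb : ∑ i, lH W z (b i) (b i) ≤ 2 * k * τ) :
    |(fderiv ℝ (fun z => z + (1 / (2 * k)) • lgrad W z) z).det| ≤ (n + τ) ^ n := by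
  obtain ⟨e, he⟩ := leig hW z
  set h := hessEigen W z
  have hgd : DifferentiableAt ℝ (lgrad W) z := ((lgrad_smooth hW).differentiable (by simp)) z
  have hf : ∀ v v', inner ℝ (fderiv ℝ (fun z => z + (1 / (2 * k)) • lgrad W z) z v) v' =
      inner ℝ v v' + 1 / (2 * k) * lH W z v v' := by
    intro v v'
    rw [fderiv_fun_add (by fun_prop) (by fun_prop), fderiv_fun_const_smul hgd]
    simp [inner_add_left, inner_smul_left, lgrad_fderiv hW]
  have hpos : ∀ i, 0 ≤ 1 + 1 / (2 * k) * h i := by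
    intro i
    have h1 := hlow (e i)
    rw [he, real_inner_self_eq_norm_sq, e.norm_eq_one] at h1
    have : -(2 * k) ≤ h i := by linarith
    have h2 : 1 / (2 * k) * (-(2 * k)) ≤ 1 / (2 * k) * h i :=
      mul_le_mul_of_nonneg_left this (by positivity)
    have h3 : 1 / (2 * k) * (-(2 * k)) = -1 := by field_simp
    linarith
  have hle : ∀ i, 1 + 1 / (2 * k) * h i ≤ n + τ := by
    intro i
    have h1 := Finset.single_le_sum (fun i _ => hpos i) (Finset.mem_univ i)
    refine h1.trans ?_
    have h2 : ∑ i, h i = ∑ i, lH W z (e i) (e i) := by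
      refine Finset.sum_congr rfl fun i _ => ?_
      rw [he, real_inner_self_eq_norm_sq, e.norm_eq_one]; simp
    rw [Finset.sum_add_distrib, ← Finset.mul_sum, h2, lH_trace hW z e b]
    have h3 : 1 / (2 * k) * ∑ i, lH W z (b i) (b i) ≤ 1 / (2 * k) * (2 * k * τ) :=
      mul_le_mul_of_nonneg_left hb (by positivity)
    have h4 : 1 / (2 * k) * (2 * k * τ) = τ := by field_simp
    simp
    simp at h3 h4
    linarith
  have hdet : (fderiv ℝ (fun z => z + (1 / (2 * k)) • lgrad W z) z).det =
      ∏ i, (1 + 1 / (2 * k) * h i) := by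
    rw [ContinuousLinearMap.det, ← LinearMap.det_toMatrix e.toBasis, ← Matrix.det_diagonal]
    congr 1
    ext i j
    rw [LinearMap.toMatrix_apply, e.coe_toBasis_repr_apply, e.repr_apply_apply, e.coe_toBasis,
      real_inner_comm]
    have := hf (e j) (e i)
    rw [he] at this
    erw [this]
    rw [Matrix.diagonal_apply]
    by_cases hij : i = j
    · subst hij
      rw [real_inner_self_eq_norm_sq, e.norm_eq_one]; simp
    · rw [e.inner_eq_zero hij, e.inner_eq_zero (Ne.symm hij)]; simp [hij]
  rw [hdet, abs_of_nonneg (Finset.prod_nonneg fun i _ => hpos i)]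
  calc _ ≤ ∏ i : Fin n, ((n:ℝ) + τ) := Finset.prod_le_prod (fun i _ => hpos i) (fun i _ => hle i)
    _ = _ := by simp
end abp
end

noncomputable section
section meas
variable {n : ℕ}
local notation "EE" => EuclideanSpace ℝ (Fin n)
open MeasureTheory Filter Topology Metric

lemma lball_scale (x y : EE) {a r : ℝ} (ha : 0 < a) :
    volume (ball x (a * r)) = ENNReal.ofReal (a ^ n) * volume (ball y r) := by
  rw [Measure.addHaar_ball_mul_of_pos volume x ha r, Measure.addHaar_ball_center volume y]
  simp

lemma lmeas {c C : ℝ} (hc : 0 < c) (hC : 0 < C) : ∃ M μ : ℝ, 1 ≤ M ∧ 0 < μ ∧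
    ∀ w : EE → ℝ, ContDiff ℝ (⊤ : ℕ∞) w → (∀ x, 0 ≤ w x) → lSuper c C w → ∀ t r : ℝ, 0 < t → 0 < r →
    ∀ xc x1 : EE, dist x1 xc ≤ 3 * r → w x1 ≤ t →
    ENNReal.ofReal μ * volume (ball xc r) ≤ volume ({z | w z ≤ M * t} ∩ ball xc r) := by
  set κ : ℝ := 2 * (n + 1) * C / c with hκ
  have hκ0 : 0 < κ := by positivity
  set τ : ℝ := n * n * C / c with hτ
  have hτ0 : 0 ≤ τ := by positivity
  set D : ℝ := (n + τ) ^ n + 1 with hD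
  have hD0 : 0 < D := by positivity
  refine ⟨2 * Real.exp (16 * κ), (1/2) ^ n / D, ?_, by positivity, ?_⟩
  · have := Real.one_le_exp (show 0 ≤ 16 * κ by positivity)
    linarith
  intro w hw hw0 hS t r ht hr xc x1 hx1 hwx1
  set k : ℝ := κ / r ^ 2 with hk
  have hk0 : 0 < k := by positivity
  have hkr : k * r ^ 2 = κ := by rw [hk]; field_simp
  set W : EE → ℝ := fun x => Real.log (w x + t) with hWdef
  have hW : ContDiff ℝ (⊤ : ℕ∞) W := llog_smooth hw hw0 ht
  set Y : EE → EE := fun z => z + (1 / (2 * k)) • lgrad W z with hY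
  have hYs : ContDiff ℝ (⊤ : ℕ∞) Y := contDiff_id.add ((lgrad_smooth hW).const_smul _)
  set A : Set EE := {z | z ∈ ball xc r ∧ w z ≤ 2 * Real.exp (16 * κ) * t ∧
    |(fderiv ℝ Y z).det| ≤ D} with hA
  have hAm : MeasurableSet A := by
    have h1 : IsClosed {z | w z ≤ 2 * Real.exp (16 * κ) * t} :=
      isClosed_le hw.continuous continuous_const
    have h2 : IsClosed {z | |(fderiv ℝ Y z).det| ≤ D} := by
      refine isClosed_le ?_ continuous_const
      have : Continuous (fderiv ℝ Y) := hYs.continuous_fderiv (by simp)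
      exact (ContinuousLinearMap.continuous_det.comp this).abs
    exact isOpen_ball.measurableSet.inter (h1.measurableSet.inter h2.measurableSet)
  have hsub : ball xc (r / 2) ⊆ Set.image Y A := by
    intro y hy
    have hcont : Continuous fun x => W x + k * ‖x - y‖ ^ 2 :=
      hW.continuous.add (by fun_prop)
    have hlim : Tendsto (fun x => W x + k * ‖x - y‖ ^ 2) (cocompact EE) atTop := by
      have h1 : Tendsto (fun x : EE => Real.log t + k * (dist x y) ^ 2) (cocompact EE) atTop := by
        refine tendsto_atTop_add_const_left _ _ ?_
        refine Tendsto.const_mul_atTop hk0 ?_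
        exact (tendsto_pow_atTop (two_ne_zero)).comp (tendsto_dist_right_cocompact_atTop y)
      refine tendsto_atTop_mono (fun x => ?_) h1
      rw [dist_eq_norm]
      have := Real.log_le_log ht (show t ≤ w x + t by linarith [hw0 x])
      have h3 : Real.log t ≤ W x := this
      linarith
    obtain ⟨z, hz⟩ := hcont.exists_forall_le hlim
    obtain ⟨h1, h2, h3, b, h4⟩ := lcontact hc hC hw hw0 hS ht hk0 y z hz
    have hzy : ‖z - y‖ < r / 2 := by
      refine lt_of_pow_lt_pow_left₀ 2 (by positivity) (h2.trans_lt ?_)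
      rw [div_lt_iff₀ (by positivity)]
      have : (r / 2) ^ 2 * (2 * c * k) = (n + 1) * C := by
        have : (r / 2) ^ 2 * (2 * c * k) = (k * r ^ 2) * c / 2 := by ring
        rw [this, hkr, hκ]; field_simp
      rw [this]; nlinarith
    refine ⟨z, ⟨?_, ?_, ?_⟩, h1⟩
    · rw [mem_ball] at hy ⊢
      have := dist_triangle z y xc
      rw [dist_eq_norm z y] at this
      linarith
    · have h5 := hz x1
      have h6 : ‖x1 - y‖ ≤ 4 * r := by
        rw [← dist_eq_norm]
        rw [mem_ball] at hy
        have := dist_triangle x1 xc y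
        rw [dist_comm xc y] at this
        linarith
      have h7 : k * ‖x1 - y‖ ^ 2 ≤ 16 * κ := by
        rw [← hkr]
        have : ‖x1 - y‖ ^ 2 ≤ (4 * r) ^ 2 := by gcongr
        nlinarith
      have h8 : W x1 ≤ Real.log (2 * t) := Real.log_le_log (by linarith [hw0 x1]) (by linarith)
      have h9 : 0 ≤ k * ‖z - y‖ ^ 2 := by positivity
      have h10 : W z ≤ Real.log (2 * t) + 16 * κ := by linarith
      have h11 : w z + t ≤ Real.exp (Real.log (2 * t) + 16 * κ) := by
        rw [← Real.log_le_iff_le_exp (by linarith [hw0 z])]; exact h10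
      rw [Real.exp_add, Real.exp_log (by positivity)] at h11
      nlinarith
    · have := ldet_bound hW z hk0 h3 b (τ := τ) (by rw [hτ]; refine h4.trans (le_of_eq ?_); ring)
      exact this.trans (by rw [hD]; linarith)
  have h1 : volume (ball xc (r / 2)) ≤ ENNReal.ofReal D * volume A := by
    calc _ ≤ volume (Set.image Y A) := measure_mono hsub
      _ ≤ ∫⁻ x in A, ENNReal.ofReal |(fderiv ℝ Y x).det| := by
        refine addHaar_image_le_lintegral_abs_det_fderiv volume hAm (fun x _ => ?_)
        exact ((hYs.differentiable (by simp)) x).hasFDerivAt.hasFDerivWithinAt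
      _ ≤ ∫⁻ x in A, ENNReal.ofReal D := by
        refine setLIntegral_mono measurable_const (fun x hx => ENNReal.ofReal_le_ofReal hx.2.2)
      _ = _ := by simp
  have h2 : volume (ball xc (r / 2)) = ENNReal.ofReal ((1/2) ^ n) * volume (ball xc r) := by
    rw [← lball_scale xc xc (by norm_num)]; congr 2; ring
  rw [h2] at h1
  have h3 : volume A ≤ volume ({z | w z ≤ 2 * Real.exp (16 * κ) * t} ∩ ball xc r) :=
    measure_mono fun z hz => ⟨hz.2.1, hz.1⟩
  refine le_trans ?_ h3
  rw [ENNReal.ofReal_div_of_pos hD0, div_eq_mul_inv, mul_assoc, mul_comm (_⁻¹), ← mul_assoc,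
    ← div_eq_mul_inv]
  refine ENNReal.div_le_of_le_mul ?_
  rwa [mul_comm (volume A)]
end meas
end

noncomputable section
section ink
variable {n : ℕ}
local notation "EE" => EuclideanSpace ℝ (Fin n)
open MeasureTheory Filter Topology Metric

lemma link_geom {E : Set EE} (hE : IsClosed E) {x0 x : EE} (hx0 : x0 ∈ E) {R : ℝ}
    (hx : x ∈ ball x0 R) (hxE : x ∉ E) : ∃ (c : EE) (r : ℝ), 0 < r ∧ r ≤ R ∧ x ∈ closedBall c r ∧
      ball c r ⊆ ball x0 R \ E ∧ ∃ x1 ∈ E, dist x1 c ≤ 3 * r := by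
  obtain ⟨x1, hx1, hd⟩ := hE.exists_infDist_eq_dist ⟨x0, hx0⟩ x
  have hpos : 0 < infDist x E := (hE.notMem_iff_infDist_pos ⟨x0, hx0⟩).1 hxE
  have hle : infDist x E ≤ dist x x0 := infDist_le_dist_of_mem hx0
  set r := infDist x E / 2 with hr
  have hr0 : 0 < r := by positivity
  have hdx : 0 < ‖x - x0‖ := by rw [← dist_eq_norm]; linarith
  rw [dist_eq_norm] at hle
  rw [mem_ball, dist_eq_norm] at hx
  set c : EE := x - (r / ‖x - x0‖) • (x - x0) with hc
  have hxc : dist x c = r := by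
    rw [dist_eq_norm, hc, sub_sub_cancel, norm_smul, Real.norm_eq_abs, abs_of_pos (by positivity)]
    field_simp
  have hcx0 : dist c x0 = ‖x - x0‖ - r := by
    have : c - x0 = (1 - r / ‖x - x0‖) • (x - x0) := by rw [hc, sub_smul, one_smul]; abel
    rw [dist_eq_norm, this, norm_smul, Real.norm_eq_abs, abs_of_nonneg]
    · field_simp
    · rw [sub_nonneg, div_le_one hdx]; linarith
  refine ⟨c, r, hr0, by linarith, by rw [mem_closedBall, hxc], ?_, x1, hx1, ?_⟩
  · intro z hz
    rw [mem_ball] at hz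
    refine ⟨?_, fun hzE => ?_⟩
    · rw [mem_ball]
      linarith [dist_triangle z c x0]
    · have h1 := infDist_le_dist_of_mem (x := x) hzE
      have h2 := dist_triangle x c z
      rw [dist_comm c z] at h2
      linarith
  · have h2 := dist_triangle x1 x c
    rw [dist_comm x1 x, ← hd] at h2
    linarith

lemma link_step {c C : ℝ} (hc : 0 < c) (hC : 0 < C) : ∃ M η : ℝ, 1 ≤ M ∧ 0 < η ∧ η < 1 ∧
    ∀ w : EE → ℝ, ContDiff ℝ (⊤ : ℕ∞) w → (∀ x, 0 ≤ w x) → lSuper c C w → ∀ t R : ℝ, 0 < t → 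
    ∀ x0 : EE, w x0 ≤ t →
    volume.real (ball x0 R ∩ {x | M * t < w x}) ≤ (1 - η) * volume.real (ball x0 R ∩ {x | t < w x}) := by
  obtain ⟨M, μ, hM, hμ, H⟩ := lmeas (n := n) hc hC
  refine ⟨M, min (μ / 6 ^ n) (1/2), hM, by positivity, by
    refine (min_le_right _ _).trans_lt (by norm_num), ?_⟩
  intro w hw hw0 hS t R ht x0 hx0
  set E : Set EE := {x | w x ≤ t} with hE
  have hEc : IsClosed E := isClosed_le hw.continuous continuous_const
  set F : Set EE := ball x0 R ∩ {x | t < w x} with hF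
  have hFE : F = ball x0 R \ E := by ext x; simp [hF, hE]
  have hFo : IsOpen F := isOpen_ball.inter (isOpen_lt continuous_const hw.continuous)
  have hFfin : volume F ≠ ⊤ := ((measure_mono Set.inter_subset_left).trans_lt measure_ball_lt_top).ne
  have hch : ∀ x : F, ∃ (c : EE) (r : ℝ), 0 < r ∧ r ≤ R ∧ (x : EE) ∈ closedBall c r ∧
      ball c r ⊆ F ∧ ∃ x1 ∈ E, dist x1 c ≤ 3 * r := by
    rintro ⟨x, hx⟩
    have hx2 : x ∈ ball x0 R \ E := hFE ▸ hx
    obtain ⟨c, r, g1, g2, g3, g4, g5⟩ := link_geom hEc hx0 hx2.1 hx2.2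
    exact ⟨c, r, g1, g2, g3, hFE ▸ g4, g5⟩
  choose cc rr hr0 hrR hmem hsub hx1 using hch
  obtain ⟨s, -, hdis, hcov⟩ := Vitali.exists_disjoint_subfamily_covering_enlargement_closedBall
    (Set.univ : Set F) cc rr R (fun a _ => hrR a) 5 (by norm_num)
  have hdis2 : s.PairwiseDisjoint fun a => ball (cc a) (rr a) :=
    hdis.mono fun a => ball_subset_closedBall
  have hscount : s.Countable := hdis2.countable_of_isOpen (fun a _ => isOpen_ball)
    (fun a _ => nonempty_ball.2 (hr0 a))
  set G : Set EE := {z | w z ≤ M * t} with hG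
  have hGc : IsClosed G := isClosed_le hw.continuous continuous_const
  have key : ENNReal.ofReal (μ / 6 ^ n) * volume F ≤ volume (F ∩ G) := by
    have h1 : F ⊆ ⋃ a ∈ s, ball (cc a) (6 * rr a) := by
      intro x hx
      obtain ⟨b, hb, hbs⟩ := hcov ⟨x, hx⟩ trivial
      refine Set.mem_biUnion hb ?_
      have h2 := hbs (hmem ⟨x, hx⟩)
      rw [mem_closedBall] at h2
      rw [mem_ball]
      linarith [hr0 b]
    have h2 : volume F ≤ ∑' a : s, volume (ball (cc a) (6 * rr a)) :=
      (measure_mono h1).trans (measure_biUnion_le volume hscount _)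
    have h3 : volume (⋃ a ∈ s, (G ∩ ball (cc a) (rr a))) =
        ∑' a : s, volume (G ∩ ball (cc a) (rr a)) := by
      refine measure_biUnion hscount ?_ (fun a _ => hGc.measurableSet.inter measurableSet_ball)
      exact hdis2.mono fun a => Set.inter_subset_right
    have h4 : volume (⋃ a ∈ s, (G ∩ ball (cc a) (rr a))) ≤ volume (F ∩ G) := by
      refine measure_mono (Set.iUnion₂_subset fun a _ z hz => ⟨hsub a hz.2, hz.1⟩)
    refine le_trans ?_ h4
    rw [h3]
    calc _ ≤ ENNReal.ofReal (μ / 6 ^ n) * ∑' a : s, volume (ball (cc a) (6 * rr a)) := by gcongr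
      _ = ∑' a : s, ENNReal.ofReal (μ / 6 ^ n) * volume (ball (cc a) (6 * rr a)) := by
        rw [ENNReal.tsum_mul_left]
      _ ≤ _ := by
        refine ENNReal.tsum_le_tsum fun a => ?_
        obtain ⟨x1, hx1E, hx1d⟩ := hx1 a
        have := H w hw hw0 hS t (rr a) ht (hr0 a) (cc a) x1 hx1d hx1E
        refine le_trans (le_of_eq ?_) this
        rw [lball_scale (cc a) (cc a) (by norm_num), ← mul_assoc, ← ENNReal.ofReal_mul (by positivity)]
        congr 2
        field_simp
  have key2 : μ / 6 ^ n * volume.real F ≤ volume.real (F ∩ G) := by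
    have h5 : volume (F ∩ G) ≠ ⊤ := ((measure_mono Set.inter_subset_left).trans_lt hFfin.lt_top).ne
    have := ENNReal.toReal_mono h5 key
    rwa [ENNReal.toReal_mul, ENNReal.toReal_ofReal (by positivity)] at this
  have h6 : ball x0 R ∩ {x | M * t < w x} ⊆ F \ G := by
    rintro x ⟨h1, h2⟩
    have h2' : M * t < w x := h2
    refine ⟨⟨h1, ?_⟩, ?_⟩
    · show t < w x
      nlinarith
    · exact not_le.2 h2'
  have h7 : volume.real (ball x0 R ∩ {x | M * t < w x}) ≤ volume.real (F \ G) :=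
    measureReal_mono h6 ((measure_mono Set.sdiff_subset).trans_lt hFfin.lt_top).ne
  have h8 : volume.real (F ∩ G) + volume.real (F \ G) = volume.real F :=
    measureReal_inter_add_sdiff hGc.measurableSet hFfin
  have h9 : min (μ / 6 ^ n) (1/2) * volume.real F ≤ μ / 6 ^ n * volume.real F :=
    mul_le_mul_of_nonneg_right (min_le_left _ _) measureReal_nonneg
  linarith

lemma link_decay {c C : ℝ} (hc : 0 < c) (hC : 0 < C) (w : EE → ℝ) (hw : ContDiff ℝ (⊤ : ℕ∞) w)
    (hw0 : ∀ x, 0 ≤ w x) (hS : lSuper c C w) (hinf : ∀ t > 0, ∃ x, w x ≤ t) {t ε : ℝ} (ht : 0 < t)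
    (hε : 0 < ε) : ∃ x0 : EE, ∀ R : ℝ, volume.real (ball x0 R ∩ {x | t < w x}) ≤
      ε * volume.real (ball x0 R) := by
  obtain ⟨M, η, hM, hη, hη1, H⟩ := link_step (n := n) hc hC
  obtain ⟨k, hk⟩ := exists_pow_lt_of_lt_one hε (show 1 - η < 1 by linarith)
  have hM0 : 0 < M := by linarith
  obtain ⟨x0, hx0⟩ := hinf (t / M ^ k) (by positivity)
  refine ⟨x0, fun R => ?_⟩
  have key : ∀ j : ℕ, volume.real (ball x0 R ∩ {x | M ^ j * (t / M ^ k) < w x}) ≤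
      (1 - η) ^ j * volume.real (ball x0 R) := by
    intro j
    induction j with
    | zero =>
      simp only [pow_zero, one_mul]
      exact measureReal_mono Set.inter_subset_left measure_ball_lt_top.ne
    | succ j ih =>
      have h1 := H w hw hw0 hS (M ^ j * (t / M ^ k)) R (by positivity) x0 (by
        refine hx0.trans ?_
        have := one_le_pow₀ (n := j) hM
        have h2 : 0 < t / M ^ k := by positivity
        nlinarith)
      rw [pow_succ', mul_assoc]
      refine h1.trans ?_
      rw [pow_succ', mul_assoc]
      exact mul_le_mul_of_nonneg_left ih (by linarith)
  have := key k
  have e : M ^ k * (t / M ^ k) = t := by field_simp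
  rw [e] at this
  exact this.trans (mul_le_mul_of_nonneg_right hk.le measureReal_nonneg)

lemma link_common {ι : Type*} (S : Finset ι) {c C : ℝ} (hc : 0 < c) (hC : 0 < C) (w : ι → EE → ℝ)
    (hw : ∀ i, ContDiff ℝ (⊤ : ℕ∞) (w i))
    (hw0 : ∀ i x, 0 ≤ w i x) (hS : ∀ i, lSuper c C (w i)) (hinf : ∀ i, ∀ t > 0, ∃ x, w i x ≤ t)
    {t : ℝ} (ht : 0 < t) : ∃ x, ∀ i ∈ S, w i x ≤ t := by
  set ε : ℝ := 1 / (2 ^ n * (S.card + 1)) with hε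
  have hε0 : 0 < ε := by positivity
  choose x0 hx0 using fun i => link_decay hc hC (w i) (hw i) (hw0 i) (hS i) (hinf i) ht hε0
  set R : ℝ := 1 + ∑ i ∈ S, ‖x0 i‖ with hR
  have hR0 : 0 < R := by positivity
  by_contra hcon
  push Not at hcon
  have hV : 0 < volume.real (ball (0:EE) R) :=
    ENNReal.toReal_pos (measure_ball_pos volume _ hR0).ne' measure_ball_lt_top.ne
  have h1 : ball (0:EE) R ⊆ ⋃ i ∈ S, (ball (x0 i) (2 * R) ∩ {x | t < w i x}) := by
    intro x hx
    obtain ⟨i, hi, hix⟩ := hcon x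
    refine Set.mem_biUnion hi ⟨?_, hix⟩
    rw [mem_ball] at hx ⊢
    have h2 := dist_triangle x 0 (x0 i)
    have h3 : ‖x0 i‖ ≤ ∑ i ∈ S, ‖x0 i‖ := Finset.single_le_sum (f := fun i => ‖x0 i‖)
      (fun i _ => norm_nonneg _) hi
    rw [dist_zero_left] at h2
    linarith
  have h2 : volume.real (ball (0:EE) R) ≤
      ∑ i ∈ S, volume.real (ball (x0 i) (2 * R) ∩ {x | t < w i x}) := by
    refine (measureReal_mono h1 ?_).trans (measureReal_biUnion_finset_le _ _)
    refine ((measure_biUnion_finset_le _ _).trans_lt ?_).ne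
    refine ENNReal.sum_lt_top.2 fun i _ => ?_
    exact (measure_mono Set.inter_subset_left).trans_lt measure_ball_lt_top
  have h3 : ∀ i ∈ S, volume.real (ball (x0 i) (2 * R) ∩ {x | t < w i x}) ≤
      1 / (S.card + 1) * volume.real (ball (0:EE) R) := by
    intro i _
    refine (hx0 i (2 * R)).trans (le_of_eq ?_)
    rw [Measure.real, lball_scale (x0 i) 0 (by norm_num), ENNReal.toReal_mul,
      ENNReal.toReal_ofReal (by positivity), ← mul_assoc, hε]
    congr 1
    field_simp
  have h4 := h2.trans (Finset.sum_le_sum h3)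
  rw [Finset.sum_const, nsmul_eq_mul, ← mul_assoc] at h4
  have h5 : (S.card : ℝ) * (1 / (S.card + 1)) < 1 := by
    rw [mul_one_div, div_lt_one (by positivity)]; linarith
  nlinarith
end ink
end

noncomputable section
section liou
variable {n : ℕ}
local notation "EE" => EuclideanSpace ℝ (Fin n)
open Filter Topology Metric

lemma lfour {u : EE → ℝ} (hu : ContDiff ℝ (⊤ : ℕ∞) u) (b e : EE) :
    ldd b (ldd b (ldd e (ldd e u))) = ldd e (ldd e (ldd b (ldd b u))) := by
  rw [ldd_comm (ldd_smooth hu e) b e, ldd_comm hu b e,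
    ldd_comm (ldd_smooth (ldd_smooth hu b) e) b e, ldd_comm (ldd_smooth hu b) b e]

/-- the sup of a pure second derivative -/
def lsup (u : EE → ℝ) (e : EE) : ℝ := ⨆ x, lH u x e e

/-- linearized concavity with uniform ellipticity -/
def lEll (c C : ℝ) (u : EE → ℝ) : Prop :=
  ∀ x, ∃ (b : OrthonormalBasis (Fin n) ℝ EE) (f : Fin n → ℝ), (∀ i, c ≤ f i ∧ f i ≤ C) ∧
    ∀ y, ∑ i, f i * lH u x (b i) (b i) ≤ ∑ i, f i * lH u y (b i) (b i)

lemma lH_smooth {u : EE → ℝ} (hu : ContDiff ℝ (⊤ : ℕ∞) u) (v w : EE) :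
    ContDiff ℝ (⊤ : ℕ∞) (fun x => lH u x v w) := ldd_smooth (ldd_smooth hu w) v

lemma lell_super {u : EE → ℝ} (hu : ContDiff ℝ (⊤ : ℕ∞) u) {c C : ℝ} (h : lEll c C u) (e : EE) (s : ℝ) :
    lSuper c C (fun x => s - lH u x e e) := by
  intro x
  obtain ⟨b, f, hf, hmin⟩ := h x
  refine ⟨b, f, hf, ?_⟩
  have e1 : ∀ i, lH (fun x => s - lH u x e e) x (b i) (b i) =
      - ldd e (ldd e (ldd (b i) (ldd (b i) u))) x := by
    intro i
    rw [← lfour hu]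
    unfold lH
    rw [ldd_const_sub, ldd_neg]
  have := lv_second_deriv_nonneg (h := fun t : ℝ => ∑ i, f i * lH u (x + t • e) (b i) (b i))
    (h' := fun t : ℝ => ∑ i, f i * ldd e (ldd (b i) (ldd (b i) u)) (x + t • e))
    (c := ∑ i, f i * ldd e (ldd e (ldd (b i) (ldd (b i) u))) x) ?_ ?_ ?_
  · simp_rw [e1]
    simp only [mul_neg, Finset.sum_neg_distrib]
    linarith [this.2]
  · refine Filter.Eventually.of_forall fun t => ?_
    simpa using hmin (x + t • e)
  · refine Filter.Eventually.of_forall fun t => ?_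
    refine HasDerivAt.fun_sum fun i _ => HasDerivAt.const_mul _ ?_
    exact ldd_line (lH_smooth hu (b i) (b i)) x e t
  · refine HasDerivAt.fun_sum fun i _ => HasDerivAt.const_mul _ ?_
    have := ldd_line (ldd_smooth (lH_smooth hu (b i) (b i)) e) x e 0
    simp only [zero_smul, add_zero] at this
    exact this

section
lemma lsup_le {u : EE → ℝ} {K : ℝ} (hK : ∀ x e, lH u x e e ≤ K * ‖e‖ ^ 2) (x e : EE) : lH u x e e ≤ lsup u e :=
  le_ciSup (f := fun x => lH u x e e) ⟨K * ‖e‖ ^ 2, by rintro _ ⟨y, rfl⟩; exact hK y e⟩ x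

lemma lsup_near {u : EE → ℝ} {c C K : ℝ} (hu : ContDiff ℝ (⊤ : ℕ∞) u) (hc : 0 < c) (hC : 0 < C)
    (h : lEll c C u) (hK : ∀ x e, lH u x e e ≤ K * ‖e‖ ^ 2) (S : Finset EE) {t : ℝ} (ht : 0 < t) :
    ∃ z, ∀ e ∈ S, lsup u e - t ≤ lH u z e e := by
  have hinf : ∀ e : EE, ∀ t > 0, ∃ x, lsup u e - lH u x e e ≤ t := by
    intro e t ht
    obtain ⟨x, hx⟩ := exists_lt_of_lt_ciSup (f := fun x => lH u x e e) (show lsup u e - t < lsup u e by linarith)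
    exact ⟨x, by linarith⟩
  obtain ⟨z, hz⟩ := link_common S hc hC (fun e x => lsup u e - lH u x e e)
    (fun e => contDiff_const.sub (lH_smooth hu e e)) (fun e x => by linarith [lsup_le hK x e])
    (fun e => lell_super hu h e _) hinf ht
  exact ⟨z, fun e he => by linarith [hz e he]⟩

lemma lH_add_self {u : EE → ℝ} (hu : ContDiff ℝ (⊤ : ℕ∞) u) (x v w : EE) :
    lH u x (v + w) (v + w) = lH u x v v + 2 * lH u x v w + lH u x w w := by
  have := lH_symm hu x v w
  simp only [lH_eq hu] at *
  simp only [map_add, add_apply]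
  linarith

lemma lH_expand {u : EE → ℝ} (hu : ContDiff ℝ (⊤ : ℕ∞) u) (a : OrthonormalBasis (Fin n) ℝ EE) (x v : EE) :
    lH u x v v = ∑ i, ∑ j, inner ℝ (a i) v * inner ℝ (a j) v * lH u x (a i) (a j) := by
  conv_lhs => rw [← a.sum_repr' v]
  simp only [lH_eq hu, map_sum, map_smul, FunLike.coe_sum, Finset.sum_apply,
    FunLike.coe_smul, Pi.smul_apply, smul_eq_mul]
  rw [Finset.sum_comm]
  refine Finset.sum_congr rfl fun i _ => ?_
  try rw [Finset.mul_sum]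
  refine Finset.sum_congr rfl fun j _ => ?_
  ring

lemma lH_attain {u : EE → ℝ} {c C K : ℝ} (hu : ContDiff ℝ (⊤ : ℕ∞) u) (hc : 0 < c) (hC : 0 < C)
    (h : lEll c C u) (hK : ∀ x e, lH u x e e ≤ K * ‖e‖ ^ 2)
    (a : OrthonormalBasis (Fin n) ℝ EE) (x : EE) (j0 : Fin n) :
    lH u x (a j0) (a j0) = lsup u (a j0) := by
  classical
  set S : Finset EE := Finset.univ.image (fun i => a i) ∪
    Finset.univ.image (fun ij : Fin n × Fin n => a ij.1 + a ij.2) with hS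
  have hS1 : ∀ i, a i ∈ S := fun i => Finset.mem_union_left _ (Finset.mem_image_of_mem _ (Finset.mem_univ i))
  have hS2 : ∀ i j, a i + a j ∈ S := fun i j =>
    Finset.mem_union_right _ (Finset.mem_image.2 ⟨(i, j), Finset.mem_univ _, rfl⟩)
  -- two near-optimal points have close Hessians
  have hclose : ∀ t : ℝ, ∀ z z', (∀ e ∈ S, lsup u e - t ≤ lH u z e e) →
      (∀ e ∈ S, lsup u e - t ≤ lH u z' e e) → ∀ e : EE, ‖e‖ = 1 →
      lH u z' e e - lH u z e e ≤ n * (n * (2 * t)) := by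
    intro t z z' hz hz' e he
    have hij : ∀ i j, |lH u z' (a i) (a j) - lH u z (a i) (a j)| ≤ 2 * t := by
      intro i j
      have q1 := lH_add_self hu z (a i) (a j)
      have q2 := lH_add_self hu z' (a i) (a j)
      have q3 := hz _ (hS1 i)
      have q4 := hz _ (hS1 j)
      have q5 := hz _ (hS2 i j)
      have q6 := hz' _ (hS1 i)
      have q7 := hz' _ (hS1 j)
      have q8 := hz' _ (hS2 i j)
      have r1 := lsup_le hK z (a i)
      have r2 := lsup_le hK z (a j)
      have r3 := lsup_le hK z (a i + a j)
      have r4 := lsup_le hK z' (a i)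
      have r5 := lsup_le hK z' (a j)
      have r6 := lsup_le hK z' (a i + a j)
      rw [abs_le]
      constructor <;> linarith
    rw [lH_expand hu a z e, lH_expand hu a z' e, ← Finset.sum_sub_distrib]
    have : ∀ i ∈ Finset.univ, ∑ j, inner ℝ (a i) e * inner ℝ (a j) e * lH u z' (a i) (a j) -
        ∑ j, inner ℝ (a i) e * inner ℝ (a j) e * lH u z (a i) (a j) ≤ n * (2 * t) := by
      intro i _
      rw [← Finset.sum_sub_distrib]
      have : ∀ j ∈ Finset.univ, inner ℝ (a i) e * inner ℝ (a j) e * lH u z' (a i) (a j) -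
        inner ℝ (a i) e * inner ℝ (a j) e * lH u z (a i) (a j) ≤ 2 * t := by
        intro j _
        rw [← mul_sub]
        refine (le_abs_self _).trans ?_
        rw [abs_mul, abs_mul]
        have s1 : |inner ℝ (a i) e| ≤ 1 := by
          simpa [he] using abs_real_inner_le_norm (a i) e
        have s2 : |inner ℝ (a j) e| ≤ 1 := by
          simpa [he] using abs_real_inner_le_norm (a j) e
        have s3 : |inner ℝ (a i) e| * |inner ℝ (a j) e| ≤ 1 := by
          have := mul_le_mul s1 s2 (abs_nonneg _) zero_le_one
          simpa using this
        have s4 := hij i j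
        have s5 := abs_nonneg (lH u z' (a i) (a j) - lH u z (a i) (a j))
        have s6 := mul_le_mul_of_nonneg_right s3 s5
        linarith
      have := Finset.sum_le_sum this
      simpa using this
    have := Finset.sum_le_sum this
    simpa using this
  have hkey : ∀ t : ℝ, 0 < t → lsup u (a j0) - lH u x (a j0) (a j0) ≤
      (n + C * n * (1 + n * (n * 2)) / c) * t := by
    intro t ht
    obtain ⟨z, hz⟩ := lsup_near hu hc hC h hK S ht
    have hup : ∀ e : EE, ‖e‖ = 1 → lH u x e e ≤ lH u z e e + (1 + n * (n * 2)) * t := by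
      intro e he
      obtain ⟨z', hz'⟩ := lsup_near hu hc hC h hK (insert e S) ht
      have h1 := hclose t z z' hz (fun e he => hz' e (Finset.mem_insert_of_mem he)) e he
      have h2 := hz' e (Finset.mem_insert_self _ _)
      have h3 := lsup_le hK x e
      linarith
    obtain ⟨b, f, hf, hmin⟩ := h z
    have h1 := hmin x
    set T := (1 + n * (n * 2)) * t with hT
    have hT0 : 0 < T := by positivity
    have h2 : ∑ i, c * (lH u z (b i) (b i) + T - lH u x (b i) (b i)) ≤
        ∑ i, (f i * lH u z (b i) (b i) - f i * lH u x (b i) (b i) + C * T) := by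
      refine Finset.sum_le_sum fun i _ => ?_
      have g1 := hup (b i) (b.norm_eq_one i)
      have g2 := mul_le_mul_of_nonneg_right (hf i).1 (show 0 ≤ lH u z (b i) (b i) + T - lH u x (b i) (b i) by linarith)
      have g3 := mul_le_mul_of_nonneg_right (hf i).2 hT0.le
      linarith
    rw [← Finset.mul_sum, Finset.sum_sub_distrib, Finset.sum_add_distrib, Finset.sum_add_distrib,
      Finset.sum_sub_distrib, lH_trace hu z b a, lH_trace hu x b a] at h2
    simp only [Finset.sum_const, Finset.card_univ, Fintype.card_fin, nsmul_eq_mul] at h2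
    have h3 : ∑ i, (lsup u (a i) - t) ≤ ∑ i, lH u z (a i) (a i) :=
      Finset.sum_le_sum fun i _ => hz _ (hS1 i)
    rw [Finset.sum_sub_distrib] at h3
    simp only [Finset.sum_const, Finset.card_univ, Fintype.card_fin, nsmul_eq_mul] at h3
    have h4 := Finset.single_le_sum (f := fun i => lsup u (a i) - lH u x (a i) (a i))
      (fun i _ => by linarith [lsup_le hK x (a i)]) (Finset.mem_univ j0)
    simp only [Finset.sum_sub_distrib] at h4
    have hnT : 0 ≤ (n:ℝ) * T := by positivity
    have h5 : (∑ i, lH u z (a i) (a i) - ∑ i, lH u x (a i) (a i)) ≤ n * (C * T) / c := by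
      rw [le_div_iff₀ hc]
      nlinarith
    have h6 : (n:ℝ) * (C * T) / c = C * n * (1 + n * (n * 2)) / c * t := by rw [hT]; ring
    rw [h6] at h5
    linarith
  refine le_antisymm (lsup_le hK x _) ?_
  by_contra hcon
  push Not at hcon
  set Q := (n + C * n * (1 + n * (n * 2)) / c) with hQ
  have hQ0 : 0 ≤ Q := by positivity
  set d := lsup u (a j0) - lH u x (a j0) (a j0) with hd
  have hd0 : 0 < d := by linarith
  have := hkey (d / (2 * (Q + 1))) (by positivity)
  rw [mul_div_assoc', le_div_iff₀ (by positivity)] at this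
  nlinarith

lemma lH_const {u : EE → ℝ} {c C K : ℝ} (hu : ContDiff ℝ (⊤ : ℕ∞) u) (hc : 0 < c) (hC : 0 < C)
    (h : lEll c C u) (hK : ∀ x e, lH u x e e ≤ K * ‖e‖ ^ 2) (hn : 0 < n) (x y e : EE) :
    lH u x e e = lH u y e e := by
  by_cases he : e = 0
  · subst he; simp [lH_eq hu]
  have hne : ‖e‖ ≠ 0 := norm_ne_zero_iff.2 he
  set e' : EE := ‖e‖⁻¹ • e with he'
  have hee : e = ‖e‖ • e' := by rw [he', smul_smul, mul_inv_cancel₀ hne, one_smul]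
  have hn1 : ‖e'‖ = 1 := by rw [he', norm_smul]; simp [hne]
  let j0 : Fin n := ⟨0, hn⟩
  obtain ⟨a, ha⟩ := Orthonormal.exists_orthonormalBasis_extension_of_card_eq (𝕜 := ℝ) (E := EE)
    (ι := Fin n) (by simp) (v := fun _ => e') (s := {j0}) (by
      constructor
      · intro i; simpa using hn1
      · intro i j hij; exact absurd (Subsingleton.elim i j) hij)
  have ha0 := ha j0 rfl
  have key : ∀ x, lH u x e' e' = lsup u e' := by
    intro x
    have := lH_attain hu hc hC h hK a x j0
    rwa [ha0] at this
  have hsc : ∀ x, lH u x e e = ‖e‖ ^ 2 * lsup u e' := by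
    intro x
    rw [← key x, hee]
    simp only [lH_eq hu, map_smul, FunLike.coe_smul, Pi.smul_apply, smul_eq_mul]
    rw [← hee]; ring
  rw [hsc, hsc]
end

lemma lquad {u : EE → ℝ} (hu : ContDiff ℝ (⊤ : ℕ∞) u) (h : ∀ x y e, lH u x e e = lH u y e e) :
    IsQuadraticPolynomial u := by
  refine ⟨hessianMatrix u 0, fun i => ldd (EuclideanSpace.single i 1) u 0, u 0, ?_, ?_⟩
  · have := lhess_herm hu 0
    ext i j
    have h2 := congrFun (congrFun this i) j
    simpa using h2
  intro x
  have e1 : (∑ i, ∑ j, hessianMatrix u 0 i j * x i * x j) = lH u 0 x x := by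
    rw [lH_mulVec hu]
    refine Finset.sum_congr rfl fun i _ => ?_
    simp only [Matrix.mulVec, dotProduct, Finset.mul_sum]
    exact Finset.sum_congr rfl fun j _ => by ring
  have e2 : (∑ i, ldd (EuclideanSpace.single i 1) u 0 * x i) = ldd x u 0 := by
    unfold ldd
    conv_rhs => rw [lvec_sum x]
    simp [map_sum, mul_comm]
  rw [e1, e2]
  set q := lH u 0 x x with hq
  have d1 : ∀ t : ℝ, HasDerivAt (fun t : ℝ => ldd x u (0 + t • x) - t * q) 0 t := by
    intro t
    have := (ldd_line (ldd_smooth hu x) 0 x t).sub ((hasDerivAt_id t).mul_const q)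
    refine this.congr_deriv ?_
    have h3 : ldd x (ldd x u) (0 + t • x) = q := h (0 + t • x) 0 x
    rw [h3]; ring
  have c1 : ∀ t : ℝ, ldd x u (0 + t • x) - t * q = ldd x u 0 := by
    intro t
    have := is_const_of_deriv_eq_zero (fun t => (d1 t).differentiableAt) (fun t => (d1 t).deriv) t 0
    simpa using this
  have d2 : ∀ t : ℝ, HasDerivAt (fun t : ℝ => u (0 + t • x) - t * ldd x u 0 - t ^ 2 * (q / 2)) 0 t := by
    intro t
    have := ((ldd_line hu 0 x t).sub ((hasDerivAt_id t).mul_const (ldd x u 0))).sub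
      ((hasDerivAt_pow 2 t).mul_const (q / 2))
    refine this.congr_deriv ?_
    have := c1 t
    simp
    simp at this
    linarith
  have := is_const_of_deriv_eq_zero (fun t => (d2 t).differentiableAt) (fun t => (d2 t).deriv) 1 0
  simp at this
  linarith
end liou
end

noncomputable section
section third
variable {n : ℕ}
local notation "EE" => EuclideanSpace ℝ (Fin n)
open Filter Topology Metric

lemma lH_curve {g : EE → ℝ} (hg : ContDiff ℝ (⊤ : ℕ∞) g) (x0 e : EE) {v w : ℝ → EE} {v' w' : EE} {h : ℝ}
    (hv : HasDerivAt v v' h) (hw : HasDerivAt w w' h) :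
    HasDerivAt (fun h : ℝ => lH g (x0 + h • e) (v h) (w h))
      (lH (ldd e g) (x0 + h • e) (v h) (w h) + lH g (x0 + h • e) v' (w h)
        + lH g (x0 + h • e) (v h) w') h := by
  have hB : DifferentiableAt ℝ (fderiv ℝ (fderiv ℝ g)) (x0 + h • e) :=
    (((hg.fderiv_right (m := (⊤ : ℕ∞)) (by simp)).fderiv_right (m := (⊤ : ℕ∞)) (by simp)).differentiable
      (by simp)) _
  have h2 : HasDerivAt (fun t : ℝ => x0 + t • e) e h := by
    simpa using ((hasDerivAt_id h).smul_const e).const_add x0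
  have h3 : HasDerivAt (fun t : ℝ => fderiv ℝ (fderiv ℝ g) (x0 + t • e))
      (fderiv ℝ (fderiv ℝ (fderiv ℝ g)) (x0 + h • e) e) h := by
    exact HasFDerivAt.comp_hasDerivAt (𝕜 := ℝ) (l := fderiv ℝ (fderiv ℝ g))
      (l' := fderiv ℝ (fderiv ℝ (fderiv ℝ g)) (x0 + h • e)) (f := fun t : ℝ => x0 + t • e) (f' := e) h
      hB.hasFDerivAt h2
  have h4 := (h3.clm_apply hv).clm_apply hw
  have e1 : ∀ y v w, lH g y v w = fderiv ℝ (fderiv ℝ g) y v w := fun y v w => lH_eq hg y v w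
  have e2 : lH (ldd e g) (x0 + h • e) (v h) (w h) =
      fderiv ℝ (fderiv ℝ (fderiv ℝ g)) (x0 + h • e) e (v h) (w h) := by
    have : lH (ldd e g) (x0 + h • e) (v h) (w h) = ldd e (fun y => lH g y (v h) (w h)) (x0 + h • e) := by
      unfold lH
      rw [ldd_comm hg (w h) e, ldd_comm (ldd_smooth hg (w h)) (v h) e]
    rw [this]
    simp only [e1]
    unfold ldd
    rw [fderiv_clm_apply (by fun_prop) (by fun_prop), fderiv_clm_apply hB (by fun_prop)]
    simp
  simp only [e1]
  rw [e2]
  refine h4.congr_deriv ?_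
  simp
  try ring

lemma lrot (S : EE →L[ℝ] EE) (hS : ∀ v w, inner ℝ (S v) w = - inner ℝ v (S w)) :
    ∃ R : ℝ → EE →L[ℝ] EE, R 0 = ContinuousLinearMap.id ℝ EE ∧
      (∀ v h, HasDerivAt (fun h => R h v) (R h (S v)) h) ∧
      (∀ h v w, inner ℝ (R h v) (R h w) = inner ℝ v w) := by
  have hz : NormedSpace.exp ((0:ℝ) • S) = ContinuousLinearMap.id ℝ EE := by
    have : (0:ℝ) • S = 0 := zero_smul ℝ S
    rw [this, NormedSpace.exp_zero]; rfl
  refine ⟨fun h => NormedSpace.exp (h • S), hz, ?_, ?_⟩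
  · intro v h
    have := (hasDerivAt_exp_smul_const (𝕂 := ℝ) S h).clm_apply (hasDerivAt_const h v)
    simpa using this
  · intro h v w
    have hd : ∀ v h, HasDerivAt (fun h : ℝ => NormedSpace.exp (h • S) v) (S (NormedSpace.exp (h • S) v)) h := by
      intro v h
      have := (hasDerivAt_exp_smul_const' (𝕂 := ℝ) S h).clm_apply (hasDerivAt_const h v)
      simpa using this
    have hd2 : ∀ h : ℝ, HasDerivAt (fun h : ℝ => inner ℝ (NormedSpace.exp (h • S) v) (NormedSpace.exp (h • S) w)) 0 h := by
      intro h
      refine ((hd v h).inner ℝ (hd w h)).congr_deriv ?_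
      rw [hS]; ring
    have := is_const_of_deriv_eq_zero (fun t => (hd2 t).differentiableAt) (fun t => (hd2 t).deriv) h 0
    simp only [hz] at this
    simpa using this

lemma lthird {p : ℕ} {u : EE → ℝ} (hu : ContDiff ℝ (⊤ : ℕ∞) u)
    (hadm : ∀ x, hessEigen u x ∈ GammaHat n p)
    (heq : ∀ x, pMA n p (hessEigen u x) = 1) (x0 : EE) (b : OrthonormalBasis (Fin n) ℝ EE)
    (hb : ∀ i v, lH u x0 v (b i) = hessEigen u x0 i * inner ℝ (b i) v) (e : EE)
    (S : EE →L[ℝ] EE) (hS : ∀ v w, inner ℝ (S v) w = - inner ℝ v (S w)) :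
    0 ≤ ∑ i, lfw p (hessEigen u x0) i * (lH (ldd e (ldd e u)) x0 (b i) (b i)
      + 4 * lH (ldd e u) x0 (b i) (S (b i)) + 2 * lH u x0 (S (S (b i))) (b i)
      + 2 * lH u x0 (S (b i)) (S (b i))) := by
  obtain ⟨R, hR0, hRd, hRi⟩ := lrot S hS
  have hu1 := ldd_smooth hu e
  set f := lfw p (hessEigen u x0) with hf
  have := lv_second_deriv_nonneg
    (h := fun h : ℝ => ∑ i, f i * lH u (x0 + h • e) (R h (b i)) (R h (b i)))
    (h' := fun h : ℝ => ∑ i, f i * (lH (ldd e u) (x0 + h • e) (R h (b i)) (R h (b i))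
        + lH u (x0 + h • e) (R h (S (b i))) (R h (b i))
        + lH u (x0 + h • e) (R h (b i)) (R h (S (b i)))))
    (c := ∑ i, f i * (lH (ldd e (ldd e u)) x0 (b i) (b i)
      + 4 * lH (ldd e u) x0 (b i) (S (b i)) + 2 * lH u x0 (S (S (b i))) (b i)
      + 2 * lH u x0 (S (b i)) (S (b i)))) ?_ ?_ ?_
  · exact this.2
  · refine Filter.Eventually.of_forall fun h => ?_
    have h0 : ∑ i, f i * lH u (x0 + (0:ℝ) • e) (R 0 (b i)) (R 0 (b i)) = n.choose p := by
      rw [← lfw_self (hadm x0)]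
      refine Finset.sum_congr rfl fun i _ => ?_
      rw [hR0]
      simp [hb]
      simp [hf]
    refine h0.le.trans ?_
    have ho : Orthonormal ℝ (fun i => R h (b i)) := by
      rw [orthonormal_iff_ite]
      intro i j
      rw [hRi]
      exact (orthonormal_iff_ite.1 b.orthonormal) i j
    obtain ⟨a, ha⟩ := Orthonormal.exists_orthonormalBasis_extension_of_card_eq (𝕜 := ℝ) (E := EE)
      (ι := Fin n) (by simp) (v := fun i => R h (b i)) (s := Set.univ) (by
        exact ho.comp _ Subtype.val_injective)
    have hK := lKI hu hadm heq x0 (x0 + h • e) a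
    simp only [fun i => ha i (Set.mem_univ i)] at hK
    exact hK
  · refine Filter.Eventually.of_forall fun h => ?_
    refine HasDerivAt.fun_sum fun i _ => HasDerivAt.const_mul _ ?_
    exact lH_curve hu x0 e (hRd _ h) (hRd _ h)
  · refine HasDerivAt.fun_sum fun i _ => HasDerivAt.const_mul _ ?_
    have q1 := lH_curve hu1 x0 e (hRd (b i) 0) (hRd (b i) 0)
    have q2 := lH_curve hu x0 e (hRd (S (b i)) 0) (hRd (b i) 0)
    have q3 := lH_curve hu x0 e (hRd (b i) 0) (hRd (S (b i)) 0)
    refine ((q1.add q2).add q3).congr_deriv ?_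
    simp only [hR0, zero_smul, add_zero, ContinuousLinearMap.id_apply]
    have s1 := lH_symm hu1 x0 (b i) (S (b i))
    have s2 := lH_symm hu x0 (b i) (S (S (b i)))
    linarith

/-- the explicit skew map -/
def lskew (b : OrthonormalBasis (Fin n) ℝ EE) (m : Fin n) (s : Fin n → ℝ) : EE →L[ℝ] EE :=
  ∑ j, s j • ((innerSL ℝ (b m)).smulRight (b j) - (innerSL ℝ (b j)).smulRight (b m))

lemma lskew_apply (b : OrthonormalBasis (Fin n) ℝ EE) (m : Fin n) (s : Fin n → ℝ) (v : EE) :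
    lskew b m s v = ∑ j, s j • ((inner ℝ (b m) v : ℝ) • b j - (inner ℝ (b j) v : ℝ) • b m) := by
  simp [lskew]

lemma lskew_skew (b : OrthonormalBasis (Fin n) ℝ EE) (m : Fin n) (s : Fin n → ℝ) (v w : EE) :
    inner ℝ (lskew b m s v) w = - inner ℝ v (lskew b m s w) := by
  rw [lskew_apply, lskew_apply, sum_inner, inner_sum, ← Finset.sum_neg_distrib]
  refine Finset.sum_congr rfl fun j _ => ?_
  simp only [inner_smul_left, inner_smul_right, inner_sub_left, inner_sub_right]
  simp only [real_inner_comm v, real_inner_comm w]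
  simp
  ring

lemma lskew_coef (b : OrthonormalBasis (Fin n) ℝ EE) (m : Fin n) (s : Fin n → ℝ) (k i : Fin n) :
    inner ℝ (b k) (lskew b m s (b i)) = (if i = m then s k else 0) - (if k = m then s i else 0) := by
  rw [lskew_apply, inner_sum]
  simp only [inner_smul_right, inner_sub_right, orthonormal_iff_ite.1 b.orthonormal, mul_sub,
    Finset.sum_sub_distrib]
  congr 1
  · simp [eq_comm]
  · simp [eq_comm]

lemma lthird2 {p : ℕ} {u : EE → ℝ} (hu : ContDiff ℝ (⊤ : ℕ∞) u)
    (hadm : ∀ x, hessEigen u x ∈ GammaHat n p)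
    (heq : ∀ x, pMA n p (hessEigen u x) = 1) (x0 : EE) (b : OrthonormalBasis (Fin n) ℝ EE)
    (hb : ∀ i v, lH u x0 v (b i) = hessEigen u x0 i * inner ℝ (b i) v) (m : Fin n)
    (s : Fin n → ℝ) (hs : s m = 0) :
    0 ≤ ∑ i, lfw p (hessEigen u x0) i * lH (ldd (b m) (ldd (b m) u)) x0 (b i) (b i)
      + ∑ j, (-4 * (lfw p (hessEigen u x0) j - lfw p (hessEigen u x0) m) * s j *
          lH (ldd (b m) u) x0 (b j) (b m)
        + 2 * (lfw p (hessEigen u x0) j - lfw p (hessEigen u x0) m) *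
          (hessEigen u x0 m - hessEigen u x0 j) * s j ^ 2) := by
  have h := lthird hu hadm heq x0 b hb (b m) (lskew b m s) (lskew_skew b m s)
  set f := lfw p (hessEigen u x0) with hf
  set lam := hessEigen u x0 with hlam
  have hu1 := ldd_smooth hu (b m)
  set S := lskew b m s with hS
  have hco := lskew_coef b m s
  rw [← hS] at hco
  have e1 : ∀ i, lH (ldd (b m) u) x0 (b i) (S (b i)) =
      (if i = m then ∑ k, s k * lH (ldd (b m) u) x0 (b i) (b k) else 0) -
      s i * lH (ldd (b m) u) x0 (b i) (b m) := by
    intro i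
    have : lH (ldd (b m) u) x0 (b i) (S (b i)) =
        ∑ k, inner ℝ (b k) (S (b i)) * lH (ldd (b m) u) x0 (b i) (b k) := by
      conv_lhs => rw [← b.sum_repr' (S (b i))]
      simp only [lH_eq hu1, map_sum, map_smul, smul_eq_mul]
    rw [this]
    simp only [hco, sub_mul, Finset.sum_sub_distrib]
    congr 1
    · split_ifs <;> simp
    · simp
  have hsq : ∀ k i, (inner ℝ (b k) (S (b i))) ^ 2 = (if i = m then s k ^ 2 else 0) +
      (if k = m then s i ^ 2 else 0) := by
    intro k i
    rw [hco]
    by_cases h1 : i = m <;> by_cases h2 : k = m <;> simp [h1, h2, hs]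
  have e2 : ∀ i, lH u x0 (S (S (b i))) (b i) = - lam i * ∑ k, (inner ℝ (b k) (S (b i))) ^ 2 := by
    intro i
    rw [hb, b.sum_sq_inner_right (S (b i)), ← real_inner_self_eq_norm_sq]
    have := lskew_skew b m s (b i) (S (b i))
    rw [← hS] at this
    rw [this]; ring
  have e3 : ∀ i, lH u x0 (S (b i)) (S (b i)) = ∑ k, (inner ℝ (b k) (S (b i))) ^ 2 * lam k :=
    fun i => lH_basis hu x0 b lam hb _
  have e4 : ∀ i, 2 * lH u x0 (S (S (b i))) (b i) + 2 * lH u x0 (S (b i)) (S (b i)) =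
      (if i = m then ∑ k, 2 * (lam k - lam i) * s k ^ 2 else 0) + 2 * (lam m - lam i) * s i ^ 2 := by
    intro i
    rw [e2, e3, Finset.mul_sum, Finset.mul_sum, Finset.mul_sum, ← Finset.sum_add_distrib]
    have : ∀ k, 2 * (-lam i * inner ℝ (b k) (S (b i)) ^ 2) + 2 * (inner ℝ (b k) (S (b i)) ^ 2 * lam k)
        = (if i = m then 2 * (lam k - lam i) * s k ^ 2 else 0) +
          (if k = m then 2 * (lam k - lam i) * s i ^ 2 else 0) := by
      intro k
      rw [hsq]
      split_ifs <;> ring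
    simp only [this, Finset.sum_add_distrib]
    congr 1
    · split_ifs <;> simp
    · simp
  have e5 : ∀ i, f i * (lH (ldd (b m) (ldd (b m) u)) x0 (b i) (b i)
      + 4 * lH (ldd (b m) u) x0 (b i) (S (b i)) + 2 * lH u x0 (S (S (b i))) (b i)
      + 2 * lH u x0 (S (b i)) (S (b i))) =
      f i * lH (ldd (b m) (ldd (b m) u)) x0 (b i) (b i) +
      (if i = m then f m * (∑ k, 4 * s k * lH (ldd (b m) u) x0 (b m) (b k) +
        ∑ k, 2 * (lam k - lam m) * s k ^ 2) else 0) +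
      (- 4 * f i * s i * lH (ldd (b m) u) x0 (b i) (b m) + f i * (2 * (lam m - lam i) * s i ^ 2)) := by
    intro i
    have e4i := e4 i
    have : f i * (lH (ldd (b m) (ldd (b m) u)) x0 (b i) (b i)
      + 4 * lH (ldd (b m) u) x0 (b i) (S (b i)) + 2 * lH u x0 (S (S (b i))) (b i)
      + 2 * lH u x0 (S (b i)) (S (b i))) = f i * (lH (ldd (b m) (ldd (b m) u)) x0 (b i) (b i)
      + 4 * lH (ldd (b m) u) x0 (b i) (S (b i)) + (2 * lH u x0 (S (S (b i))) (b i)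
      + 2 * lH u x0 (S (b i)) (S (b i)))) := by ring
    rw [this, e4i, e1]
    by_cases him : i = m
    · subst him
      simp only [if_true]
      have : ∑ k, 4 * s k * lH (ldd (b i) u) x0 (b i) (b k) =
          4 * ∑ k, s k * lH (ldd (b i) u) x0 (b i) (b k) := by
        rw [Finset.mul_sum]; exact Finset.sum_congr rfl fun k _ => by ring
      rw [this]; ring
    · simp only [him, if_false]; ring
  rw [Finset.sum_congr rfl fun i _ => e5 i, Finset.sum_add_distrib, Finset.sum_add_distrib,
    Finset.sum_ite_eq' Finset.univ m, if_pos (Finset.mem_univ m), add_assoc,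
    ← Finset.sum_add_distrib, Finset.mul_sum, ← Finset.sum_add_distrib] at h
  refine h.trans (le_of_eq ?_)
  congr 1
  refine Finset.sum_congr rfl fun j _ => ?_
  rw [lH_symm hu1 x0 (b m) (b j)]
  ring

end third
end

noncomputable section
section pog
variable {n : ℕ}
local notation "EE" => EuclideanSpace ℝ (Fin n)
open Filter Topology Metric

lemma l1d {q q' q'' : ℝ → ℝ} (h1 : ∀ t, HasDerivAt q (q' t) t) (h2 : ∀ t, HasDerivAt q' (q'' t) t)
    {K L : ℝ} (hK0 : 0 ≤ K) (hK : ∀ t, q t ≤ q 0 → q'' t ≤ K) (hL : ∀ t, L ≤ q t)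
    (hT : ∃ T > 0, q 0 < q T) (hd : q' 0 ≤ 0) : q' 0 ^ 2 ≤ 2 * K * (q 0 - L) := by
  rcases hd.eq_or_lt with h0 | h0
  · rw [h0]
    have := mul_nonneg hK0 (sub_nonneg.2 (hL 0))
    nlinarith
  obtain ⟨T, hT0, hTq⟩ := hT
  have hq'c : Continuous q' := continuous_iff_continuousAt.2 fun t => (h2 t).continuousAt
  have hqc : Continuous q := continuous_iff_continuousAt.2 fun t => (h1 t).continuousAt
  obtain ⟨ξ, hξ, hξ2⟩ := exists_hasDerivAt_eq_slope q q' hT0 hqc.continuousOn (fun t _ => h1 t)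
  have hξ3 : 0 ≤ q' ξ := by
    rw [hξ2]; exact div_nonneg (by linarith) (by linarith)
  have hcomp : IsCompact (Set.Icc (0:ℝ) T ∩ {t | 0 ≤ q' t}) :=
    isCompact_Icc.inter_right (isClosed_le continuous_const hq'c)
  obtain ⟨s, ⟨hsI, hs0⟩, hleast⟩ := hcomp.exists_isLeast ⟨ξ, ⟨hξ.1.le, hξ.2.le⟩, hξ3⟩
  have hs0' : 0 ≤ q' s := hs0
  have hneg : ∀ t, 0 ≤ t → t < s → q' t < 0 := by
    intro t ht hts
    by_contra hcon
    push Not at hcon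
    have := hleast ⟨⟨ht, by linarith [hsI.2]⟩, hcon⟩
    linarith
  have hspos : 0 < s := by
    rcases hsI.1.eq_or_lt with h | h
    · rw [← h] at hs0'; linarith
    · exact h
  have hqs : q' s = 0 := by
    refine le_antisymm ?_ hs0'
    have hcl : IsClosed {t | q' t ≤ 0} := isClosed_le hq'c continuous_const
    have hsub : Set.Ioo 0 s ⊆ {t | q' t ≤ 0} := fun t ht => (hneg t ht.1.le ht.2).le
    have := closure_minimal hsub hcl
    rw [closure_Ioo hspos.ne] at this
    exact this ⟨hspos.le, le_rfl⟩
  have hanti : AntitoneOn q (Set.Icc 0 s) := by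
    refine antitoneOn_of_deriv_nonpos (convex_Icc 0 s) hqc.continuousOn
      (fun t _ => (h1 t).differentiableAt.differentiableWithinAt) ?_
    intro t ht
    rw [interior_Icc] at ht
    rw [(h1 t).deriv]
    exact (hneg t ht.1.le ht.2).le
  have hE : ∀ t, HasDerivAt (fun t => q' t ^ 2 / 2 - K * q t) (q' t * (q'' t - K)) t := by
    intro t
    refine ((((h2 t).pow 2).div_const 2).sub ((h1 t).const_mul K)).congr_deriv ?_
    simp; ring
  have hmono : MonotoneOn (fun t => q' t ^ 2 / 2 - K * q t) (Set.Icc 0 s) := by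
    refine monotoneOn_of_deriv_nonneg (convex_Icc 0 s)
      (continuous_iff_continuousAt.2 fun t => (hE t).continuousAt).continuousOn
      (fun t _ => (hE t).differentiableAt.differentiableWithinAt) ?_
    intro t ht
    rw [interior_Icc] at ht
    rw [(hE t).deriv]
    have g1 := hneg t ht.1.le ht.2
    have g2 := hK t (hanti ⟨le_rfl, hspos.le⟩ ⟨ht.1.le, ht.2.le⟩ ht.1.le)
    nlinarith
  have := hmono ⟨le_rfl, hspos.le⟩ ⟨hspos.le, le_rfl⟩ hspos.le
  simp only [hqs] at this
  have g3 := mul_le_mul_of_nonneg_left (hL s) hK0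
  nlinarith

lemma lgradbd {u : EE → ℝ} (hu : ContDiff ℝ (⊤ : ℕ∞) u) {C0 : ℝ} (hC0 : 0 < C0)
    (hlow : ∀ x, C0⁻¹ * ‖x‖ ^ 2 - C0 ≤ u x) (x0 : EE) {K : ℝ} (hK0 : 0 ≤ K)
    (hK : ∀ y e : EE, ‖e‖ = 1 → u y ≤ u x0 → lH u y e e ≤ K) (ν : EE) (hν : ‖ν‖ = 1) :
    (ldd ν u x0) ^ 2 ≤ 2 * K * (u x0 + C0) := by
  have key : ∀ ν : EE, ‖ν‖ = 1 → ldd ν u x0 ≤ 0 → (ldd ν u x0) ^ 2 ≤ 2 * K * (u x0 + C0) := by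
    intro ν hν hd
    have := l1d (q := fun t : ℝ => u (x0 + t • ν)) (q' := fun t : ℝ => ldd ν u (x0 + t • ν))
      (q'' := fun t : ℝ => ldd ν (ldd ν u) (x0 + t • ν)) (fun t => ldd_line hu x0 ν t)
      (fun t => ldd_line (ldd_smooth hu ν) x0 ν t) (L := -C0) hK0 (fun t ht => ?_) (fun t => ?_) ?_ (by simpa using hd)
    · simpa using this
    · simp only [zero_smul, add_zero] at ht
      exact hK _ ν hν ht
    · refine le_trans ?_ (hlow _)
      have : 0 ≤ C0⁻¹ * ‖x0 + t • ν‖ ^ 2 := by positivity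
      linarith
    · set s := 1 + C0 * (|u x0| + C0 + 1) with hs
      have hs1 : 1 ≤ s := by
        have : 0 ≤ C0 * (|u x0| + C0 + 1) := by positivity
        linarith
      refine ⟨‖x0‖ + s, by positivity, ?_⟩
      simp only [zero_smul, add_zero]
      refine lt_of_lt_of_le ?_ (hlow _)
      have g1 : s ≤ ‖x0 + (‖x0‖ + s) • ν‖ := by
        have h3 := norm_sub_norm_le ((‖x0‖ + s) • ν) (-x0)
        rw [norm_smul, hν, norm_neg, sub_neg_eq_add, Real.norm_eq_abs,
          abs_of_nonneg (by positivity)] at h3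
        rw [add_comm x0]
        linarith
      have g2 : s ≤ ‖x0 + (‖x0‖ + s) • ν‖ ^ 2 := by nlinarith
      have g3 : C0⁻¹ * s ≤ C0⁻¹ * ‖x0 + (‖x0‖ + s) • ν‖ ^ 2 :=
        mul_le_mul_of_nonneg_left g2 (by positivity)
      have g4 : C0⁻¹ * s = C0⁻¹ + (|u x0| + C0 + 1) := by rw [hs]; field_simp
      have g5 : 0 < C0⁻¹ := by positivity
      have g6 := le_abs_self (u x0)
      linarith
  rcases le_total (ldd ν u x0) 0 with h | h
  · exact key ν hν h
  · have e1 : ldd (-ν) u x0 = - ldd ν u x0 := by simp [ldd]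
    have := key (-ν) (by rw [norm_neg]; exact hν) (by rw [e1]; linarith)
    rw [e1] at this
    simpa using this

lemma lpogo_local {u g : EE → ℝ} (hu : ContDiff ℝ (⊤ : ℕ∞) u) (hg : ContDiff ℝ (⊤ : ℕ∞) g)
    (α : ℕ) (x0 : EE) (hg0 : 0 < g x0) (hu0 : u x0 < 1)
    (hmax : ∀ y, u y < 1 → g y * (1 - u y) ^ α * Real.exp (‖y‖ ^ 2 / 2) ≤
      g x0 * (1 - u x0) ^ α * Real.exp (‖x0‖ ^ 2 / 2)) (ν : EE) (hν : ‖ν‖ = 1) :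
    ldd ν g x0 / g x0 - α * (ldd ν u x0 / (1 - u x0)) + inner ℝ x0 ν = 0 ∧
    lH g x0 ν ν / g x0 - (ldd ν g x0 / g x0) ^ 2 - α * (lH u x0 ν ν / (1 - u x0) +
      (ldd ν u x0 / (1 - u x0)) ^ 2) + 1 ≤ 0 := by
  have hcg : Continuous fun t : ℝ => g (x0 + t • ν) := hg.continuous.comp (by fun_prop)
  have hcu : Continuous fun t : ℝ => u (x0 + t • ν) := hu.continuous.comp (by fun_prop)
  have ev : ∀ᶠ t in 𝓝 (0:ℝ), 0 < g (x0 + t • ν) ∧ u (x0 + t • ν) < 1 := by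
    refine (hcg.continuousAt.eventually_const_lt (by simpa using hg0)).and
      (hcu.continuousAt.eventually_lt_const (by simpa using hu0))
  have hq : ∀ s : ℝ, ‖x0 + s • ν‖ ^ 2 = ‖x0‖ ^ 2 + 2 * s * inner ℝ x0 ν + s ^ 2 := by
    intro s
    rw [norm_add_sq_real, inner_smul_right, norm_smul, mul_pow, Real.norm_eq_abs, sq_abs, hν]
    ring
  have hθ : (1 - u x0) ≠ 0 := by linarith
  have hg00 : g x0 ≠ 0 := hg0.ne'
  have := lv_second_deriv_nonpos
    (h := fun t : ℝ => Real.log (g (x0 + t • ν)) + α * Real.log (1 - u (x0 + t • ν)) +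
      (‖x0‖ ^ 2 + 2 * t * inner ℝ x0 ν + t ^ 2) / 2)
    (h' := fun t : ℝ => ldd ν g (x0 + t • ν) / g (x0 + t • ν) +
      α * (- ldd ν u (x0 + t • ν) / (1 - u (x0 + t • ν))) + (inner ℝ x0 ν + t))
    (c := lH g x0 ν ν / g x0 - (ldd ν g x0 / g x0) ^ 2 - α * (lH u x0 ν ν / (1 - u x0) +
      (ldd ν u x0 / (1 - u x0)) ^ 2) + 1) ?_ ?_ ?_
  · refine ⟨?_, this.2⟩
    have h1 := this.1
    simp only [zero_smul, add_zero] at h1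
    rw [← h1]; ring
  · filter_upwards [ev] with t ht
    have h1 := hmax _ ht.2
    have p1 : 0 < 1 - u (x0 + t • ν) := by linarith [ht.2]
    have p0 : 0 < 1 - u x0 := by linarith
    have h2 := Real.log_le_log (by have := ht.1; positivity) h1
    have p2 := ht.1.ne'
    rw [Real.log_mul (by positivity) (by positivity), Real.log_mul p2 (by positivity),
      Real.log_mul (by positivity) (by positivity), Real.log_mul hg00 (by positivity),
      Real.log_pow, Real.log_pow, Real.log_exp, Real.log_exp, hq] at h2
    simpa using h2
  · filter_upwards [ev] with t ht
    have d1 := (ldd_line hg x0 ν t).log ht.1.ne'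
    have d2 := ((ldd_line hu x0 ν t).const_sub 1).log (show 1 - u (x0 + t • ν) ≠ 0 by linarith [ht.2])
    have d3 : HasDerivAt (fun t : ℝ => (‖x0‖ ^ 2 + 2 * t * inner ℝ x0 ν + t ^ 2) / 2)
        (inner ℝ x0 ν + t) t := by
      refine ((((((hasDerivAt_id t).const_mul 2).mul_const (inner ℝ x0 ν)).const_add
        (‖x0‖ ^ 2)).add (hasDerivAt_pow 2 t)).div_const 2).congr_deriv ?_
      simp; ring
    exact (d1.add (d2.const_mul (α:ℝ))).add d3
  · have a1 := ldd_line hg x0 ν 0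
    have a2 := ldd_line (ldd_smooth hg ν) x0 ν 0
    have a3 := ldd_line hu x0 ν 0
    have a4 := ldd_line (ldd_smooth hu ν) x0 ν 0
    have d1 := a2.div a1 (by simpa using hg00)
    have d2 := (a4.neg).div (a3.const_sub 1) (by simpa using hθ)
    refine ((d1.add (d2.const_mul (α:ℝ))).add ((hasDerivAt_id (0:ℝ)).const_add (inner ℝ x0 ν))).congr_deriv ?_
    simp only [zero_smul, add_zero, lH, Pi.neg_apply]
    field_simp
    ring
end pog
end

noncomputable section
section pogo
variable {n : ℕ}
local notation "EE" => EuclideanSpace ℝ (Fin n)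
open Filter Topology Metric

lemma larith {f lam β y x G : Fin n → ℝ} {l θ α ρ N B C3 : ℝ} (good : Fin n → Prop) [DecidablePred good]
    (hf : ∀ i, 0 ≤ f i) (hl : 2 ≤ l) (hθ : 0 < θ) (hα : 16 ≤ α) (hρ : 8 * ρ ≤ α) (hρ0 : 0 ≤ ρ)
    (hx : ∀ i, x i ^ 2 ≤ ρ) (hβ : ∀ i, β i = α * y i - x i) (hy : ∀ i, y i ^ 2 ≤ C3 * l / θ ^ 2)
    (hB : 0 ≤ B) (hC3 : 0 ≤ C3)
    (h2 : ∀ i, G i - β i ^ 2 - α * (lam i / θ + y i ^ 2) + 1 ≤ 0)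
    (hN : ∑ i, f i * lam i = N) (hbad : ∀ i, ¬ good i → f i * l ≤ B)
    (hG : ∑ i, (if good i then (5/4) * f i * β i ^ 2 else 0) ≤ ∑ i, f i * G i) :
    (3/4) * ∑ i, f i ≤ α * N / θ + n * (B * (2 * α ^ 2 + α) * C3 / θ ^ 2 + B * ρ) := by
  set D := B * (2 * α ^ 2 + α) * C3 / θ ^ 2 + B * ρ with hD
  have hD0 : 0 ≤ D := by positivity
  have hα0 : 0 < α := by linarith
  have h1 : ∑ i, f i * G i ≤ ∑ i, (f i * β i ^ 2 + α / θ * (f i * lam i) + f i * α * y i ^ 2 - f i) := by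
    refine Finset.sum_le_sum fun i _ => ?_
    have := mul_le_mul_of_nonneg_left (h2 i) (hf i)
    have e : f i * (G i - β i ^ 2 - α * (lam i / θ + y i ^ 2) + 1) =
      f i * G i - (f i * β i ^ 2 + α / θ * (f i * lam i) + f i * α * y i ^ 2 - f i) := by ring
    rw [e] at this
    linarith
  have h3 : ∀ i, (3/4) * f i - D ≤ (if good i then (5/4) * f i * β i ^ 2 else 0) -
      (f i * β i ^ 2 + f i * α * y i ^ 2 - f i) := by
    intro i
    have hxi := hx i
    have hfi := hf i
    by_cases hg : good i
    · rw [if_pos hg]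
      have k : α * y i ^ 2 ≤ β i ^ 2 / 4 + 1 / 4 := by
        have e : α * y i = β i + x i := by rw [hβ]; ring
        have e2 : α * (α * y i ^ 2) = (β i + x i) ^ 2 := by rw [← e]; ring
        have e3 : α * (α * y i ^ 2) ≤ α * (β i ^ 2 / 4 + 1 / 4) := by
          rw [e2]
          nlinarith [sq_nonneg (β i - x i), mul_nonneg (sub_nonneg.2 hα) (sq_nonneg (β i))]
        exact le_of_mul_le_mul_left e3 hα0
      have := mul_le_mul_of_nonneg_left k hfi
      nlinarith
    · rw [if_neg hg]
      have hb := hbad i hg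
      have k1 : β i ^ 2 ≤ 2 * α ^ 2 * y i ^ 2 + 2 * x i ^ 2 := by
        rw [hβ]; nlinarith [sq_nonneg (α * y i + x i)]
      have k2 : f i * y i ^ 2 ≤ B * C3 / θ ^ 2 := by
        calc f i * y i ^ 2 ≤ f i * (C3 * l / θ ^ 2) := mul_le_mul_of_nonneg_left (hy i) hfi
          _ = (f i * l) * (C3 / θ ^ 2) := by ring
          _ ≤ B * (C3 / θ ^ 2) := mul_le_mul_of_nonneg_right hb (by positivity)
          _ = _ := by ring
      have k3 : f i * (2 * x i ^ 2) ≤ B * ρ := by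
        have : f i * 2 ≤ B := le_trans (mul_le_mul_of_nonneg_left hl hfi) hb
        calc f i * (2 * x i ^ 2) = (f i * 2) * x i ^ 2 := by ring
          _ ≤ B * x i ^ 2 := mul_le_mul_of_nonneg_right this (sq_nonneg _)
          _ ≤ B * ρ := mul_le_mul_of_nonneg_left hxi hB
      have k4 : f i * β i ^ 2 ≤ 2 * α ^ 2 * (f i * y i ^ 2) + f i * (2 * x i ^ 2) := by
        have := mul_le_mul_of_nonneg_left k1 hfi
        linarith
      have k5 : (2 * α ^ 2 + α) * (f i * y i ^ 2) ≤ (2 * α ^ 2 + α) * (B * C3 / θ ^ 2) :=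
        mul_le_mul_of_nonneg_left k2 (by positivity)
      have e : D = (2 * α ^ 2 + α) * (B * C3 / θ ^ 2) + B * ρ := by rw [hD]; ring
      rw [e]
      linarith
  have h4 := Finset.sum_le_sum (s := Finset.univ) fun i _ => h3 i
  simp only [Finset.sum_sub_distrib, Finset.sum_add_distrib, ← Finset.mul_sum, hN] at h1 h4
  simp only [Finset.sum_const, Finset.card_univ, Fintype.card_fin, nsmul_eq_mul] at h4
  have e : α * N / θ = α / θ * N := by ring
  rw [e]
  linarith

/-- sum of weights at the maximum point -/
lemma lpogo_sum {p : ℕ} (hp : 2 ≤ p) {u : EE → ℝ} (hu : ContDiff ℝ (⊤ : ℕ∞) u)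
    (hadm : ∀ x, hessEigen u x ∈ GammaHat n p)
    (heq : ∀ x, pMA n p (hessEigen u x) = 1) {A : ℝ} (hA : 0 < A)
    (hsig : ∀ x, ∀ s : Finset (Fin n), s.card = p - 1 → -A ≤ ∑ i ∈ s, hessEigen u x i)
    (x0 : EE) (b : OrthonormalBasis (Fin n) ℝ EE)
    (hb : ∀ i v, lH u x0 v (b i) = hessEigen u x0 i * inner ℝ (b i) v) (m : Fin n)
    (hm : ∀ i, hessEigen u x0 i ≤ hessEigen u x0 m)
    (hbig : 16 * p * A ≤ hessEigen u x0 m) (h2 : 2 ≤ hessEigen u x0 m)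
    (hu0 : u x0 < 1) {α : ℕ} {ρ C3 : ℝ} (hα : 16 ≤ (α:ℝ)) (hρ : 8 * ρ ≤ α) (hρ0 : 0 ≤ ρ)
    (hxρ : ‖x0‖ ^ 2 ≤ ρ) (hC3 : 0 ≤ C3)
    (hgr : ∀ ν : EE, ‖ν‖ = 1 → (ldd ν u x0) ^ 2 ≤ C3 * hessEigen u x0 m)
    (hmax : ∀ y, u y < 1 → lH u y (b m) (b m) * (1 - u y) ^ α * Real.exp (‖y‖ ^ 2 / 2) ≤
      lH u x0 (b m) (b m) * (1 - u x0) ^ α * Real.exp (‖x0‖ ^ 2 / 2)) :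
    (3/4) * ∑ i, lfw p (hessEigen u x0) i ≤ α * (n.choose p) / (1 - u x0) +
      n * ((16 * p * n.choose p) * (2 * (α:ℝ) ^ 2 + α) * C3 / (1 - u x0) ^ 2 + (16 * p * n.choose p) * ρ) := by
  classical
  set lam := hessEigen u x0 with hlam
  set f := lfw p lam with hf
  set g : EE → ℝ := fun x => lH u x (b m) (b m) with hg
  have hgs : ContDiff ℝ (⊤ : ℕ∞) g := lH_smooth hu _ _
  have hgx : ∀ i, lH u x0 (b i) (b i) = lam i := by
    intro i; rw [hb, real_inner_self_eq_norm_sq, b.norm_eq_one]; simp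
  have hg0 : g x0 = lam m := hgx m
  have hl0 : 0 < lam m := by linarith
  have hθ : 0 < 1 - u x0 := by linarith
  have hloc : ∀ i, _ := fun i => lpogo_local hu hgs α x0 (by rw [hg0]; exact hl0) hu0 hmax (b i) (b.norm_eq_one i)
  have hdic := ldichotomy hp (hadm x0) hA (hsig x0) hm hbig
  set good : Fin n → Prop := fun i => lam i < lam m ∧ (5/4) * f i ≤
      2 * lam m * ((f i - f m) / (lam m - lam i)) with hgood
  refine larith (f := f) (lam := lam) (β := fun i => ldd (b i) g x0 / g x0)
    (y := fun i => ldd (b i) u x0 / (1 - u x0)) (x := fun i => inner ℝ x0 (b i))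
    (G := fun i => lH g x0 (b i) (b i) / g x0) good (fun i => lfw_nonneg (hadm x0) i) h2 hθ hα hρ hρ0
    (fun i => ?_) (fun i => ?_) (fun i => ?_) (by positivity) hC3 (fun i => ?_) (lfw_self (hadm x0))
    (fun i hi => ?_) ?_
  · refine le_trans ?_ hxρ
    have := abs_real_inner_le_norm x0 (b i)
    rw [b.norm_eq_one, mul_one] at this
    exact sq_le_sq' (abs_le.1 this).1 (abs_le.1 this).2
  · have := (hloc i).1
    linarith
  · simp only [div_pow]
    exact div_le_div_of_nonneg_right (hgr _ (b.norm_eq_one i)) (by positivity)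
  · have := (hloc i).2
    rwa [hgx i] at this
  · rcases hdic i with h | h
    · exact h
    · exact absurd h hi
  · set s : Fin n → ℝ := fun j => if good j then ldd (b j) g x0 / (lam m - lam j) else 0 with hs
    have hsm : s m = 0 := by
      simp only [hs]; rw [if_neg]; intro h; exact lt_irrefl _ h.1
    have h3 := lthird2 hu hadm heq x0 b hb m s hsm
    rw [← hlam, ← hf] at h3
    have h4 : ∑ j, (-4 * (f j - f m) * s j * lH (ldd (b m) u) x0 (b j) (b m)
        + 2 * (f j - f m) * (lam m - lam j) * s j ^ 2) ≤
        - ∑ j, lam m * (if good j then (5/4) * f j * (ldd (b j) g x0 / g x0) ^ 2 else 0) := by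
      rw [← Finset.sum_neg_distrib]
      refine Finset.sum_le_sum fun j _ => ?_
      have e : lH (ldd (b m) u) x0 (b j) (b m) = ldd (b j) g x0 := rfl
      rw [e]
      by_cases hj : good j
      · simp only [hs, if_pos hj]
        have hd : 0 < lam m - lam j := by linarith [hj.1]
        have k := mul_le_mul_of_nonneg_right hj.2 (sq_nonneg (ldd (b j) g x0))
        rw [hg0]
        have e1 : -4 * (f j - f m) * (ldd (b j) g x0 / (lam m - lam j)) * ldd (b j) g x0 +
          2 * (f j - f m) * (lam m - lam j) * (ldd (b j) g x0 / (lam m - lam j)) ^ 2 =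
          - ((2 * lam m * ((f j - f m) / (lam m - lam j)) * ldd (b j) g x0 ^ 2) / lam m) := by
          field_simp; ring
        have e2 : lam m * (5 / 4 * f j * (ldd (b j) g x0 / lam m) ^ 2) =
          (5 / 4 * f j * ldd (b j) g x0 ^ 2) / lam m := by field_simp
        rw [e1, e2]
        exact neg_le_neg (div_le_div_of_nonneg_right k hl0.le)
      · simp [hs, if_neg hj]
    have h5 : ∑ i, f i * (lH g x0 (b i) (b i) / g x0) =
        (∑ i, f i * lH (ldd (b m) (ldd (b m) u)) x0 (b i) (b i)) / lam m := by
      rw [Finset.sum_div]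
      refine Finset.sum_congr rfl fun i _ => ?_
      rw [hg0, mul_div_assoc]; rfl
    rw [h5, le_div_iff₀ hl0, mul_comm, Finset.mul_sum]
    linarith

end pogo
end

noncomputable section
section pogofinal
variable {n : ℕ}
local notation "EE" => EuclideanSpace ℝ (Fin n)
open Filter Topology Metric

lemma lH_cont {u : EE → ℝ} (hu : ContDiff ℝ (⊤ : ℕ∞) u) :
    Continuous fun z : EE × EE => lH u z.1 z.2 z.2 := by
  simp only [lH_eq hu]
  have h1 : Continuous (fderiv ℝ (fderiv ℝ u)) :=
    ((lsm_fderiv hu).fderiv_right (m := (⊤ : ℕ∞)) (by simp)).continuous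
  exact ((h1.comp continuous_fst).clm_apply continuous_snd).clm_apply continuous_snd

lemma lH_le_max {u : EE → ℝ} (hu : ContDiff ℝ (⊤ : ℕ∞) u) (x : EE)
    (b : OrthonormalBasis (Fin n) ℝ EE)
    (hb : ∀ i v, lH u x v (b i) = hessEigen u x i * inner ℝ (b i) v) {K : ℝ}
    (hK : ∀ i, hessEigen u x i ≤ K) (e : EE) : lH u x e e ≤ K * ‖e‖ ^ 2 := by
  rw [lH_basis hu x b _ hb, ← b.sum_sq_inner_right e, Finset.mul_sum]
  refine Finset.sum_le_sum fun i _ => ?_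
  rw [mul_comm]
  exact mul_le_mul_of_nonneg_right (hK i) (sq_nonneg _)

lemma lpogo_num {S θ Θ a k b c : ℝ} (hθ : 0 < θ) (hΘ : θ ≤ Θ) (ha : 0 ≤ a) (hk : 0 ≤ k)
    (hc : 0 ≤ c) (h : (3/4) * S ≤ a / θ + k * (b / θ ^ 2 + c)) :
    S * θ ^ 2 ≤ (4/3) * (a * Θ + k * (b + c * Θ ^ 2)) := by
  have h1 := mul_le_mul_of_nonneg_right h (sq_nonneg θ)
  have e1 : (a / θ + k * (b / θ ^ 2 + c)) * θ ^ 2 = a * θ + k * (b + c * θ ^ 2) := by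
    field_simp
  have e2 : a * θ + k * (b + c * θ ^ 2) ≤ a * Θ + k * (b + c * Θ ^ 2) := by gcongr
  linarith

lemma lpogo_num2 {S θ Θ l C6 : ℝ} {N α : ℕ} (hα : 2 * N ≤ α) (hθ : 0 < θ) (hΘ : θ ≤ Θ)
    (hS : 0 ≤ S) (hC : S * θ ^ 2 ≤ C6) (hl : l / 2 ≤ (1 + S) ^ N) :
    l * θ ^ α ≤ 2 * (Θ ^ 2 + C6) ^ N * Θ ^ (α - 2 * N) := by
  have h5 : (1 + S) * θ ^ 2 ≤ Θ ^ 2 + C6 := by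
    have : θ ^ 2 ≤ Θ ^ 2 := by gcongr
    linarith
  have hpow : θ ^ α = (θ ^ 2) ^ N * θ ^ (α - 2 * N) := by
    rw [← pow_mul, ← pow_add]; congr 1; omega
  have h0 : 0 ≤ (1 + S) * θ ^ 2 := by positivity
  have h6 : 0 ≤ Θ ^ 2 + C6 := h0.trans h5
  calc l * θ ^ α ≤ (2 * (1 + S) ^ N) * θ ^ α := by
        gcongr; linarith
    _ = 2 * ((1 + S) * θ ^ 2) ^ N * θ ^ (α - 2 * N) := by rw [hpow, mul_pow]; ring
    _ ≤ 2 * (Θ ^ 2 + C6) ^ N * Θ ^ (α - 2 * N) := by gcongr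

set_option maxHeartbeats 1000000 in
lemma lpogo {p : ℕ} (hp : 2 ≤ p) (hpn : p < n) {A C0 : ℝ} (hA : 0 < A) (hC0 : 0 < C0) :
    ∃ (α : ℕ) (K : ℝ), ∀ u : EE → ℝ, ContDiff ℝ (⊤ : ℕ∞) u →
      (∀ x, hessEigen u x ∈ GammaHat n p) → (∀ x, pMA n p (hessEigen u x) = 1) →
      (∀ x, ∀ s : Finset (Fin n), s.card = p - 1 → -A ≤ ∑ i ∈ s, hessEigen u x i) →
      (∀ x, C0⁻¹ * ‖x‖ ^ 2 - C0 ≤ u x) →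
      ∀ x e : EE, ‖e‖ = 1 → u x < 1 → (1 - u x) ^ α * lH u x e e ≤ K := by
  set ρ := C0 * (1 + C0) with hρ
  set Θ := 1 + C0 with hΘ
  set N := n.choose p with hN
  set α : ℕ := 2 * N + 16 + ⌈8 * ρ⌉₊ with hα
  set C3 := 2 * Real.exp (ρ / 2) * (1 + C0) with hC3
  set C6 := (4/3) * (α * N * Θ + n * ((16 * p * N) * (2 * (α:ℝ) ^ 2 + α) * C3 + (16 * p * N) * ρ * Θ ^ 2)) with hC6
  set T := 16 * p * A + 2 * A + 2 with hT
  set K1 := T * Θ ^ α + 2 * (Θ ^ 2 + C6) ^ N * Θ ^ (α - 2 * N) with hK1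
  have hρ0 : 0 ≤ ρ := by positivity
  have hΘ0 : 0 < Θ := by positivity
  have hC30 : 0 ≤ C3 := by positivity
  have hC60 : 0 ≤ C6 := by positivity
  have hT0 : 0 ≤ T := by positivity
  have hK10 : 0 ≤ K1 := by positivity
  have hα16 : 16 ≤ (α:ℝ) := by
    have : 16 ≤ α := by omega
    exact_mod_cast this
  have hαρ : 8 * ρ ≤ α := by
    refine (Nat.le_ceil _).trans ?_
    have : ⌈8 * ρ⌉₊ ≤ α := by omega
    exact_mod_cast this
  refine ⟨α, K1 * Real.exp (ρ / 2), ?_⟩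
  intro u hu hadm heq hsig hlow x e he hux
  by_cases hpos : lH u x e e ≤ 0
  · refine le_trans (mul_nonpos_of_nonneg_of_nonpos (pow_nonneg (by linarith) _) hpos) (by positivity)
  push Not at hpos
  have hball : ∀ y, u y ≤ 1 → ‖y‖ ^ 2 ≤ ρ := by
    intro y hy
    have h1 := hlow y
    have h2 : C0⁻¹ * ‖y‖ ^ 2 ≤ 1 + C0 := by linarith
    rw [inv_mul_le_iff₀ hC0] at h2
    exact h2
  have hθle : ∀ y, 1 - u y ≤ Θ := by
    intro y
    have h1 := hlow y
    have : 0 ≤ C0⁻¹ * ‖y‖ ^ 2 := by positivity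
    rw [hΘ]; linarith
  set G : EE × EE → ℝ := fun z => lH u z.1 z.2 z.2 * (1 - u z.1) ^ α * Real.exp (‖z.1‖ ^ 2 / 2) with hG
  have hGc : Continuous G := by
    have h1 : Continuous fun z : EE × EE => u z.1 := hu.continuous.comp continuous_fst
    exact ((lH_cont hu).mul ((continuous_const.sub h1).pow _)).mul
      (Real.continuous_exp.comp (((continuous_fst.norm).pow 2).div_const 2))
  have hcomp : IsCompact ({y : EE | u y ≤ 1} ×ˢ sphere (0:EE) 1) := by
    refine IsCompact.prod ?_ (isCompact_sphere _ _)
    refine (isCompact_closedBall (0:EE) (Real.sqrt ρ)).of_isClosed_subset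
      (isClosed_le hu.continuous continuous_const) ?_
    intro y hy
    rw [mem_closedBall_zero_iff]
    exact Real.le_sqrt_of_sq_le (hball y hy)
  obtain ⟨⟨x0, e0⟩, ⟨hx0, he0⟩, hmax⟩ := hcomp.exists_isMaxOn ⟨(x, e), hux.le, by simpa using he⟩ hGc.continuousOn
  have hmax' : ∀ y v : EE, ‖v‖ = 1 → u y ≤ 1 → G (y, v) ≤ G (x0, e0) := by
    intro y v hv hy
    exact hmax ⟨hy, by simpa using hv⟩
  have he0' : ‖e0‖ = 1 := by simpa using he0
  have hx0' : u x0 ≤ 1 := hx0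
  have hGpos : 0 < G (x0, e0) := by
    refine lt_of_lt_of_le ?_ (hmax' x e he hux.le)
    have : 0 < 1 - u x := by linarith
    simp only [hG]; positivity
  have hu0 : u x0 < 1 := by
    refine lt_of_le_of_ne hx0' fun h => ?_
    simp only [hG, h, sub_self] at hGpos
    rw [zero_pow (by omega)] at hGpos
    simp at hGpos
  set θ := 1 - u x0 with hθ
  have hθ0 : 0 < θ := by linarith
  obtain ⟨b, hb⟩ := leig hu x0
  have hne : Nonempty (Fin n) := ⟨⟨0, by omega⟩⟩
  obtain ⟨m, hm⟩ := Finite.exists_max (hessEigen u x0)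
  set l := hessEigen u x0 m with hl
  have hgm : lH u x0 (b m) (b m) = l := by
    rw [hb, real_inner_self_eq_norm_sq, b.norm_eq_one]; simp [hl]
  have hel : lH u x0 e0 e0 ≤ l := by
    have := lH_le_max hu x0 b hb hm e0
    simpa [he0'] using this
  have hGl : G (x0, e0) ≤ l * θ ^ α * Real.exp (‖x0‖ ^ 2 / 2) := by
    simp only [hG]; gcongr
  have hmax2 : ∀ y v : EE, ‖v‖ = 1 → u y ≤ 1 →
      lH u y v v * (1 - u y) ^ α * Real.exp (‖y‖ ^ 2 / 2) ≤ l * θ ^ α * Real.exp (‖x0‖ ^ 2 / 2) :=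
    fun y v hv hy => (hmax' y v hv hy).trans hGl
  have hl0 : 0 < l := by
    have h1 := lt_of_lt_of_le hGpos hGl
    by_contra h
    push Not at h
    have : l * θ ^ α * Real.exp (‖x0‖ ^ 2 / 2) ≤ 0 :=
      mul_nonpos_of_nonpos_of_nonneg (mul_nonpos_of_nonpos_of_nonneg h (by positivity)) (by positivity)
    linarith
  have hexp : Real.exp (‖x0‖ ^ 2 / 2) ≤ Real.exp (ρ / 2) :=
    Real.exp_le_exp.2 (by linarith [hball x0 hx0'])
  have hkey : l * θ ^ α ≤ K1 := by
    have hΘθ : θ ≤ Θ := hθle x0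
    by_cases hTl : l < T
    · calc l * θ ^ α ≤ T * Θ ^ α := by gcongr
        _ ≤ K1 := by rw [hK1]; have : 0 ≤ 2 * (Θ ^ 2 + C6) ^ N * Θ ^ (α - 2 * N) := by positivity
                     linarith
    · push Not at hTl
      have hpA : 0 ≤ 16 * p * A := by positivity
      have hbig : 16 * p * A ≤ l := by linarith
      have hbigA : 2 * A ≤ l := by linarith
      have h2 : 2 ≤ l := by linarith
      have hgr : ∀ ν : EE, ‖ν‖ = 1 → (ldd ν u x0) ^ 2 ≤ C3 * l := by
        intro ν hν
        have h1 := lgradbd hu hC0 hlow x0 (K := l * Real.exp (ρ / 2)) (by positivity) ?_ ν hν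
        · refine h1.trans ?_
          rw [hC3]
          have : u x0 + C0 ≤ 1 + C0 := by linarith
          calc 2 * (l * Real.exp (ρ / 2)) * (u x0 + C0) ≤ 2 * (l * Real.exp (ρ / 2)) * (1 + C0) := by gcongr
            _ = _ := by ring
        · intro y v hv hy
          by_cases hnn : lH u y v v ≤ 0
          · exact hnn.trans (by positivity)
          push Not at hnn
          have h3 := hmax2 y v hv (by linarith)
          have h4 : lH u y v v * θ ^ α * 1 ≤ lH u y v v * (1 - u y) ^ α * Real.exp (‖y‖ ^ 2 / 2) := by
            have : θ ≤ 1 - u y := by linarith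
            have h5 : 1 ≤ Real.exp (‖y‖ ^ 2 / 2) := Real.one_le_exp (by positivity)
            have h6 : 0 ≤ 1 - u y := by linarith
            gcongr
          have h7 : lH u y v v * θ ^ α ≤ (l * Real.exp (ρ / 2)) * θ ^ α := by
            calc lH u y v v * θ ^ α = lH u y v v * θ ^ α * 1 := by ring
              _ ≤ l * θ ^ α * Real.exp (‖x0‖ ^ 2 / 2) := h4.trans h3
              _ ≤ l * θ ^ α * Real.exp (ρ / 2) := by gcongr
              _ = _ := by ring
          exact le_of_mul_le_mul_right h7 (by positivity)
      have hsum := lpogo_sum hp hu hadm heq hA hsig x0 b hb m hm hbig h2 hu0 hα16 hαρ hρ0 (hball x0 hx0') hC30 hgr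
        (fun y hy => by rw [hgm]; exact hmax2 y (b m) (b.norm_eq_one m) hy.le)
      have htr := ltrace_growth hp hpn (hadm x0) (heq x0) (hsig x0) (m := m) hbigA h2
      set S := ∑ i, lfw p (hessEigen u x0) i with hS
      have hS0 : 0 ≤ S := Finset.sum_nonneg fun i _ => lfw_nonneg (hadm x0) i
      have hS1 : S * θ ^ 2 ≤ C6 := by
        exact lpogo_num hθ0 hΘθ (by positivity) (by positivity) (by positivity) hsum
      have h9 := lpogo_num2 (by omega : 2 * N ≤ α) hθ0 hΘθ hS0 hS1 htr
      refine h9.trans ?_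
      rw [hK1]
      have : 0 ≤ T * Θ ^ α := by positivity
      linarith
  have h1 := hmax2 x e he hux.le
  have h2 : lH u x e e * (1 - u x) ^ α * 1 ≤ lH u x e e * (1 - u x) ^ α * Real.exp (‖x‖ ^ 2 / 2) := by
    have h5 : 1 ≤ Real.exp (‖x‖ ^ 2 / 2) := Real.one_le_exp (by positivity)
    have h6 : 0 ≤ 1 - u x := by linarith
    gcongr
  calc (1 - u x) ^ α * lH u x e e = lH u x e e * (1 - u x) ^ α * 1 := by ring
    _ ≤ l * θ ^ α * Real.exp (‖x0‖ ^ 2 / 2) := h2.trans h1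
    _ ≤ K1 * Real.exp (ρ / 2) := by gcongr

/-- rescaling -/
lemma lscale_fderiv {F : Type*} [NormedAddCommGroup F] [NormedSpace ℝ F] {g : EE → F} (hg : Differentiable ℝ g)
    (R : ℝ) (y : EE) :
    fderiv ℝ (fun z => g (R • z)) y = R • fderiv ℝ g (R • y) := by
  have h1 : HasFDerivAt (fun z : EE => R • z) (R • ContinuousLinearMap.id ℝ EE) y :=
    (hasFDerivAt_id y).const_smul R
  have h2 := ((hg (R • y)).hasFDerivAt.comp y h1).fderiv
  refine h2.trans ?_
  ext v
  simp

lemma lscale_H {u : EE → ℝ} (hu : ContDiff ℝ (⊤ : ℕ∞) u) {R : ℝ} (hR : R ≠ 0) (y v w : EE) :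
    lH (fun z => R⁻¹ ^ 2 * u (R • z)) y v w = lH u (R • y) v w := by
  have hs : ContDiff ℝ (⊤ : ℕ∞) (fun z : EE => R⁻¹ ^ 2 * u (R • z)) :=
    contDiff_const.mul (hu.comp (contDiff_const_smul R))
  have h1 : ldd w (fun z : EE => R⁻¹ ^ 2 * u (R • z)) = fun z => R⁻¹ * ldd w u (R • z) := by
    funext z
    unfold ldd
    have hd : DifferentiableAt ℝ (fun z : EE => u (R • z)) z :=
      ((hu.comp (contDiff_const_smul R)).differentiable (by simp)) z
    rw [fderiv_const_mul hd, lscale_fderiv (lsm_diff hu)]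
    simp only [smul_apply, smul_eq_mul]
    field_simp
  unfold lH
  rw [h1]
  have hw := ldd_smooth hu w
  unfold ldd at hw ⊢
  have hd : DifferentiableAt ℝ (fun z : EE => fderiv ℝ u (R • z) w) y :=
    ((hw.comp (contDiff_const_smul R)).differentiable (by simp)) y
  rw [fderiv_const_mul hd]
  have := lscale_fderiv (lsm_diff hw) R y
  rw [this]
  simp only [smul_apply, smul_eq_mul]
  field_simp

lemma lscale_eigen {u : EE → ℝ} (hu : ContDiff ℝ (⊤ : ℕ∞) u) {R : ℝ} (hR : R ≠ 0) (y : EE) :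
    hessEigen (fun z => R⁻¹ ^ 2 * u (R • z)) y = hessEigen u (R • y) := by
  have hs : ContDiff ℝ (⊤ : ℕ∞) (fun z : EE => R⁻¹ ^ 2 * u (R • z)) :=
    contDiff_const.mul (hu.comp (contDiff_const_smul R))
  have : hessianMatrix (fun z => R⁻¹ ^ 2 * u (R • z)) y = hessianMatrix u (R • y) := by
    ext i j
    rw [lhess_eq hs, lhess_eq hu, lscale_H hu hR]
  unfold hessEigen
  rw [this]

lemma lHbound {p : ℕ} (hp : 2 ≤ p) (hpn : p ≤ n) {u : EE → ℝ} (hu : ContDiff ℝ (⊤ : ℕ∞) u)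
    (hadm : ∀ x, hessEigen u x ∈ GammaHat n p)
    (heq : ∀ x, pMA n p (hessEigen u x) = 1) (hq : QuadraticGrowth u) {A : ℝ} (hA : 0 < A)
    (hsig : ∀ x, ∀ s : Finset (Fin n), s.card = p - 1 → -A ≤ ∑ i ∈ s, hessEigen u x i) :
    ∃ K : ℝ, 1 ≤ K ∧ ∀ x i, hessEigen u x i ≤ K := by
  rcases hpn.eq_or_lt with rfl | hlt
  · refine ⟨1 + A, by linarith, fun x i => ?_⟩
    have h1 := heq x
    have e : (Finset.univ : Finset (Fin p)).powersetCard p = {Finset.univ} := by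
      have := Finset.powersetCard_self (Finset.univ : Finset (Fin p))
      simpa using this
    unfold pMA at h1
    rw [e, Finset.prod_singleton, ← Finset.add_sum_erase _ _ (Finset.mem_univ i)] at h1
    have h2 := hsig x (Finset.univ.erase i) (by rw [Finset.card_erase_of_mem (Finset.mem_univ i)]; simp)
    linarith
  · obtain ⟨C0, hC0, hlow⟩ := hq
    obtain ⟨α, K, hK⟩ := lpogo hp hlt hA hC0
    refine ⟨max 1 (|K| * 2 ^ α), le_max_left _ _, fun x i => ?_⟩
    refine le_trans ?_ (le_max_right _ _)
    obtain ⟨b, hb⟩ := leig hu x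
    have hgi : lH u x (b i) (b i) = hessEigen u x i := by
      rw [hb, real_inner_self_eq_norm_sq, b.norm_eq_one]; simp
    set R : ℝ := 1 + 2 * |u x| with hR
    have hR1 : 1 ≤ R := by rw [hR]; linarith [abs_nonneg (u x)]
    have hR0 : R ≠ 0 := by linarith
    set v : EE → ℝ := fun z => R⁻¹ ^ 2 * u (R • z) with hv
    have hs : ContDiff ℝ (⊤ : ℕ∞) v :=
      contDiff_const.mul (hu.comp (contDiff_const_smul R))
    have hRx : R • (R⁻¹ • x) = x := by rw [smul_smul, mul_inv_cancel₀ hR0, one_smul]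
    have hinv : R⁻¹ ^ 2 ≤ 1 := by
      rw [inv_pow]; exact inv_le_one_of_one_le₀ (one_le_pow₀ hR1)
    have hvx : v (R⁻¹ • x) ≤ 1 / 2 := by
      simp only [hv, hRx]
      rw [inv_pow, inv_mul_le_iff₀ (by positivity)]
      nlinarith [le_abs_self (u x), abs_nonneg (u x)]
    have h1 := hK v hs (fun y => by rw [lscale_eigen hu hR0]; exact hadm _)
      (fun y => by rw [lscale_eigen hu hR0]; exact heq _)
      (fun y => by rw [lscale_eigen hu hR0]; exact hsig _)
      (fun y => by
        have h3 := mul_le_mul_of_nonneg_left (hlow (R • y)) (sq_nonneg R⁻¹)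
        refine le_trans ?_ h3
        rw [norm_smul, mul_pow, Real.norm_eq_abs, sq_abs]
        have e : R⁻¹ ^ 2 * (C0⁻¹ * (R ^ 2 * ‖y‖ ^ 2) - C0) = C0⁻¹ * ‖y‖ ^ 2 - R⁻¹ ^ 2 * C0 := by
          field_simp
        rw [e]
        nlinarith)
      (R⁻¹ • x) (b i) (b.norm_eq_one i) (by linarith)
    rw [lscale_H hu hR0, hRx, hgi] at h1
    by_cases hn : hessEigen u x i ≤ 0
    · exact hn.trans (by positivity)
    · push Not at hn
      have h4 : (1/2 : ℝ) ^ α * hessEigen u x i ≤ (1 - v (R⁻¹ • x)) ^ α * hessEigen u x i := by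
        have : (1/2:ℝ) ≤ 1 - v (R⁻¹ • x) := by linarith
        gcongr
      have h5 := (h4.trans h1).trans (le_abs_self K)
      rw [one_div, inv_pow, inv_mul_le_iff₀ (by positivity)] at h5
      linarith

end pogofinal

end

/-- **Liouville theorem for the `p`-Monge–Ampère equation (weak version of
`(p−1)`-plurisubharmonicity).** A smooth entire `p`-plurisubharmonic solution of
`M_p(D²u) = 1` with quadratic growth such that all sums of `p−1` distinct eigenvalues of
`D²u` are bounded below by `−A` is a quadratic polynomial. -/
theorem liouville_p_MA_lower_bound (n p : ℕ) (hn : 2 ≤ n) (hp : 2 ≤ p) (hpn : p ≤ n)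
    (u : EuclideanSpace ℝ (Fin n) → ℝ) (hu : ContDiff ℝ (⊤ : ℕ∞) u)
    (hadm : ∀ x, hessEigen u x ∈ GammaHat n p)
    (heq : ∀ x, pMA n p (hessEigen u x) = 1)
    (hquad : QuadraticGrowth u)
    (A : ℝ) (hA : 0 < A)
    (hsig : ∀ x, ∀ s : Finset (Fin n), s.card = p - 1 → -A ≤ ∑ i ∈ s, hessEigen u x i) :
    IsQuadraticPolynomial u := by
  obtain ⟨K, hK1, hK⟩ := lHbound hp hpn hu hadm heq hquad hA hsig
  obtain ⟨c, C, hc, hC, hcC⟩ := lfw_bounds (n := n) (p := p) (by omega) hpn hK1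
  have hell : lEll c C u := by
    intro x
    obtain ⟨b, hb⟩ := leig hu x
    refine ⟨b, lfw p (hessEigen u x), hcC _ (hadm x) (heq x) (hK x), fun y => ?_⟩
    refine le_trans (le_of_eq ?_) (lKI hu hadm heq x y b)
    rw [← lfw_self (hadm x)]
    refine Finset.sum_congr rfl fun i _ => ?_
    rw [hb, real_inner_self_eq_norm_sq, b.norm_eq_one]; simp
  refine lquad hu (lH_const (K := K) hu hc hC hell (fun x e => ?_) (by omega))
  obtain ⟨b, hb⟩ := leig hu x
  exact lH_le_max hu x b hb (hK x) e
end
end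

section
/- Let n ≥ 2 and let Γ ⊆ ℝⁿ be a convex invariant cone, and let f be a concave elliptic Hessian operator on Γ satisfying condition N with constants N₁, N₂ > 0. Let Ω ⊂ ℝⁿ be a bounded domain and let u be a smooth admissible function on Ω, continuous up to the boundary, solving F(D²u) = 1 in Ω with u = 0 on ∂Ω, and satisfying condition D with constants D₁, D₂ > 0. Then there exist constants α > 0 and C > 0, depending only on ‖u‖_{C⁰(Ω)}, N₁, N₂, D₁, D₂ and diam(Ω), such that sup_Ω ( (−u)^α |Du| ) ≤ C. -/
open scoped BigOperators

noncomputable section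

open Filter Topology

/-- Final algebraic step. -/
lemma c1_algebra (n : ℕ) (hn : 0 < n) (α ε d D₁ D₂ N₁ N₂ c3 P v : ℝ) (hα : 0 < α) (hε : 0 < ε)
    (hd : 0 < d) (hD₂ : 0 < D₂) (hN₁ : 0 < N₁)
    (hεd : (9 + 4 / α) * ε * d ^ 2 ≤ 1 / 2) (hP : 0 < P) (hv : 0 < v)
    (hc3 : c3 = 2 / ε * (n * (2 * D₂ * (9 / 4 * α + 1)) + α))
    (lam xi q a2 F : Fin n → ℝ) (hxi : ∑ i, xi i ^ 2 = 1) (hF : ∀ i, 0 < F i)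
    (hq : ∀ i, |q i| ≤ ε * d)
    (h1 : ∀ i, lam i * xi i / P - α * P * xi i / v + q i = 0)
    (h2 : ∀ i, a2 i / P - (lam i * xi i / P) ^ 2 - α * lam i / v - α * (P * xi i / v) ^ 2 + ε ≤ 0)
    (h3 : ∑ i, F i * a2 i = 0) (h4 : ∑ i, F i * lam i = 1)
    (hD : ∀ i, D₁ < lam i → F i * lam i ≤ D₂)
    (hN : ∀ C : ℝ, 0 < C → (∑ i, F i) ≤ C → ∀ i, 1 / (N₁ * C ^ N₂) ≤ F i) :
    P ^ 2 ≤ n * (2 * ε * d / α) ^ 2 * v ^ 2 ∨ P ^ 2 ≤ 2 * D₁ / α * v ∨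
      P ^ 2 * v ^ N₂ ≤ 2 * D₂ * N₁ * c3 ^ N₂ / α * v := by
  by_cases hA : P ^ 2 ≤ n * (2 * ε * d / α) ^ 2 * v ^ 2
  · exact Or.inl hA
  by_cases hB : P ^ 2 ≤ 2 * D₁ / α * v
  · exact Or.inr (Or.inl hB)
  refine Or.inr (Or.inr ?_)
  push Not at hA hB
  -- lam large
  have hbig : D₁ < α * P ^ 2 / (2 * v) := by
    rw [lt_div_iff₀ (by positivity)]
    have := mul_lt_mul_of_pos_left hB hα
    have e : α * (2 * D₁ / α * v) = D₁ * (2 * v) := by field_simp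
    linarith
  have hlam : ∀ i, |q i| < α * |P * xi i / v| / 2 → α * P ^ 2 / (2 * v) ≤ lam i := by
    intro i hi
    have hx0 : xi i ≠ 0 := by
      intro h0
      rw [h0] at hi
      simp at hi
      linarith [abs_nonneg (q i)]
    have e : lam i = α * P ^ 2 / v - P * q i / xi i := by
      have := h1 i
      field_simp at this ⊢
      linarith
    have e2 : |P * q i / xi i| ≤ α * P ^ 2 / (2 * v) := by
      rw [abs_div, abs_mul, abs_of_pos hP, div_le_iff₀ (abs_pos.mpr hx0)]
      rw [abs_div, abs_mul, abs_of_pos hP, abs_of_pos hv] at hi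
      have := mul_le_mul_of_nonneg_left hi.le hP.le
      calc P * |q i| ≤ _ := this
        _ = _ := by field_simp
    have e3 : α * P ^ 2 / v = 2 * (α * P ^ 2 / (2 * v)) := by field_simp
    rw [e, e3]
    linarith [le_abs_self (P * q i / xi i)]
  have hgood : ∀ i, |q i| < α * |P * xi i / v| / 2 → F i * P ^ 2 ≤ 2 * D₂ * v / α := by
    intro i hi
    have l := hlam i hi
    have := hD i (hbig.trans_le l)
    have t := mul_le_mul_of_nonneg_left l (hF i).le
    have t2 := t.trans this
    have e : F i * (α * P ^ 2 / (2 * v)) = F i * P ^ 2 * α / (2 * v) := by ring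
    rw [e, div_le_iff₀ (by positivity)] at t2
    rw [le_div_iff₀ hα]
    linarith
  have hxi1 : ∀ i, xi i ^ 2 ≤ 1 := by
    intro i
    rw [← hxi]
    exact Finset.single_le_sum (f := fun i => xi i ^ 2) (fun i _ => sq_nonneg _) (Finset.mem_univ i)
  have hK : ∀ i, F i * ((lam i * xi i / P) ^ 2 + α * (P * xi i / v) ^ 2)
      ≤ ε / 2 * F i + 2 * D₂ * (9 / 4 * α + 1) / v := by
    intro i
    have e : lam i * xi i / P = α * (P * xi i / v) - q i := by
      have := h1 i
      have e' : α * (P * xi i / v) = α * P * xi i / v := by ring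
      linarith
    rw [e]
    set s := P * xi i / v with hs
    have hpos : 0 ≤ 2 * D₂ * (9 / 4 * α + 1) / v := by positivity
    by_cases hi : |q i| < α * |s| / 2
    · have g := hgood i hi
      have b1 : (α * s - q i) ^ 2 ≤ (3 / 2 * (α * |s|)) ^ 2 := by
        apply sq_le_sq'
        · have := abs_le.mp hi.le
          have := neg_abs_le s
          have := mul_le_mul_of_nonneg_left this hα.le
          linarith
        · have := abs_le.mp hi.le
          have := mul_le_mul_of_nonneg_left (le_abs_self s) hα.le
          linarith
      have b2 : (3 / 2 * (α * |s|)) ^ 2 = 9 / 4 * α ^ 2 * s ^ 2 := by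
        rw [mul_pow, mul_pow, sq_abs]; ring
      have b3 : s ^ 2 ≤ P ^ 2 / v ^ 2 := by
        rw [hs, div_pow, mul_pow]
        gcongr
        have := mul_le_mul_of_nonneg_left (hxi1 i) (sq_nonneg P)
        linarith
      calc F i * ((α * s - q i) ^ 2 + α * s ^ 2)
          ≤ F i * ((9 / 4 * α ^ 2 + α) * s ^ 2) := by
            apply mul_le_mul_of_nonneg_left _ (hF i).le; linarith
        _ ≤ F i * ((9 / 4 * α ^ 2 + α) * (P ^ 2 / v ^ 2)) := by
            apply mul_le_mul_of_nonneg_left _ (hF i).le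
            apply mul_le_mul_of_nonneg_left b3; positivity
        _ = (F i * P ^ 2) * ((9 / 4 * α ^ 2 + α) / v ^ 2) := by ring
        _ ≤ (2 * D₂ * v / α) * ((9 / 4 * α ^ 2 + α) / v ^ 2) := by
            apply mul_le_mul_of_nonneg_right g; positivity
        _ = 2 * D₂ * (9 / 4 * α + 1) / v := by field_simp
        _ ≤ _ := by have := hF i; linarith [mul_pos hε this]
    · push Not at hi
      have b1 : (α * s - q i) ^ 2 ≤ (3 * |q i|) ^ 2 := by
        have h5 : |α * s| ≤ 2 * |q i| := by rw [abs_mul, abs_of_pos hα]; linarith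
        have h6 := abs_le.mp h5
        have h7 := abs_le.mp (le_refl |q i|)
        apply sq_le_sq' <;> linarith
      have b2 : α * s ^ 2 ≤ 4 / α * q i ^ 2 := by
        have h5 : (α * |s|) ^ 2 ≤ (2 * |q i|) ^ 2 := by
          apply pow_le_pow_left₀ (by positivity); linarith
        rw [mul_pow, mul_pow, sq_abs, sq_abs] at h5
        rw [div_mul_eq_mul_div, le_div_iff₀ hα]
        nlinarith
      have b3 : (3 * |q i|) ^ 2 = 9 * q i ^ 2 := by rw [mul_pow, sq_abs]; ring
      have b4 : q i ^ 2 ≤ (ε * d) ^ 2 := by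
        rw [← sq_abs]; exact pow_le_pow_left₀ (abs_nonneg _) (hq i) 2
      have b5 : (9 + 4 / α) * q i ^ 2 ≤ ε / 2 := by
        calc (9 + 4 / α) * q i ^ 2 ≤ (9 + 4 / α) * (ε * d) ^ 2 := by gcongr
          _ = ε * ((9 + 4 / α) * ε * d ^ 2) := by ring
          _ ≤ ε * (1 / 2) := by gcongr
          _ = _ := by ring
      calc F i * ((α * s - q i) ^ 2 + α * s ^ 2) ≤ F i * (ε / 2) := by
            apply mul_le_mul_of_nonneg_left _ (hF i).le; linarith
        _ ≤ _ := by linarith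
  have hsum : ∑ i, F i ≤ c3 / v := by
    have s1 : ∑ i, (F i * (a2 i) / P - F i * ((lam i * xi i / P) ^ 2 + α * (P * xi i / v) ^ 2)
        - α / v * (F i * lam i) + ε * F i) ≤ 0 := by
      apply Finset.sum_nonpos
      intro i _
      have := mul_nonpos_of_nonneg_of_nonpos (hF i).le (h2 i)
      calc _ = F i * (a2 i / P - (lam i * xi i / P) ^ 2 - α * lam i / v
          - α * (P * xi i / v) ^ 2 + ε) := by ring
        _ ≤ 0 := this
    have s2 := Finset.sum_le_sum (s := Finset.univ) (fun i _ => hK i)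
    rw [Finset.sum_add_distrib, Finset.sum_sub_distrib, Finset.sum_sub_distrib, ← Finset.sum_div,
      h3, ← Finset.mul_sum, ← Finset.mul_sum, h4] at s1
    rw [Finset.sum_add_distrib, ← Finset.mul_sum] at s2
    simp only [Finset.sum_const, Finset.card_univ, Fintype.card_fin, nsmul_eq_mul] at s2
    rw [hc3, le_div_iff₀ hv]
    have s3 : ε / 2 * ∑ i, F i ≤ (n * (2 * D₂ * (9 / 4 * α + 1)) + α) / v := by
      have : (n * (2 * D₂ * (9 / 4 * α + 1)) + α) / v
        = n * (2 * D₂ * (9 / 4 * α + 1) / v) + α / v * 1 := by ring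
      rw [this]
      simp only [zero_div] at s1
      linarith
    rw [le_div_iff₀ hv] at s3
    have := mul_le_mul_of_nonneg_left s3 (show 0 ≤ 2 / ε by positivity)
    calc _ = 2 / ε * (ε / 2 * (∑ i, F i) * v) := by field_simp
      _ ≤ _ := this
  have hc3pos : 0 < c3 := by rw [hc3]; positivity
  have hN' := hN (c3 / v) (by positivity) hsum
  obtain ⟨i, hi⟩ : ∃ i, |q i| < α * |P * xi i / v| / 2 := by
    by_contra hcon
    push Not at hcon
    apply absurd hA
    push Not
    have : ∀ i, P ^ 2 * xi i ^ 2 ≤ (2 * ε * d / α) ^ 2 * v ^ 2 := by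
      intro i
      have h5 : |P * xi i| ≤ 2 * ε * d / α * v := by
        have := (hcon i).trans (hq i)
        rw [abs_div, abs_of_pos hv] at this
        rw [div_mul_eq_mul_div, le_div_iff₀ hα]
        have e : α * (|P * xi i| / v) / 2 = α * |P * xi i| / (2 * v) := by field_simp
        rw [e, div_le_iff₀ (by positivity)] at this
        linarith
      have := pow_le_pow_left₀ (abs_nonneg _) h5 2
      rw [sq_abs] at this
      calc _ = (P * xi i) ^ 2 := by ring
        _ ≤ _ := this
        _ = _ := by ring
    have t := Finset.sum_le_sum (s := Finset.univ) (fun i _ => this i)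
    rw [← Finset.mul_sum, hxi] at t
    simp only [Finset.sum_const, Finset.card_univ, Fintype.card_fin, nsmul_eq_mul] at t
    linarith
  have g := hgood i hi
  have l := hN' i
  have vN : 0 < v ^ N₂ := Real.rpow_pos_of_pos hv _
  have cN : 0 < c3 ^ N₂ := Real.rpow_pos_of_pos hc3pos _
  rw [Real.div_rpow hc3pos.le hv.le] at l
  have l2 : v ^ N₂ ≤ F i * (N₁ * c3 ^ N₂) := by
    have : 1 / (N₁ * (c3 ^ N₂ / v ^ N₂)) = v ^ N₂ / (N₁ * c3 ^ N₂) := by field_simp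
    rw [this, div_le_iff₀ (by positivity)] at l
    exact l
  calc P ^ 2 * v ^ N₂ ≤ P ^ 2 * (F i * (N₁ * c3 ^ N₂)) := by gcongr
    _ = (F i * P ^ 2) * (N₁ * c3 ^ N₂) := by ring
    _ ≤ (2 * D₂ * v / α) * (N₁ * c3 ^ N₂) := by gcongr
    _ = _ := by ring

/-- One-dimensional second order necessary condition. -/
lemma second_order_max (g g' : ℝ → ℝ) (g2 : ℝ) (hg : ∀ᶠ t in 𝓝 (0:ℝ), HasDerivAt g (g' t) t)
    (hg' : HasDerivAt g' g2 0) (hmax : IsLocalMax g 0) : g' 0 = 0 ∧ g2 ≤ 0 := by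
  have h0 : g' 0 = 0 := hmax.hasDerivAt_eq_zero hg.self_of_nhds
  refine ⟨h0, ?_⟩
  by_contra hpos
  push Not at hpos
  have hd : deriv g =ᶠ[𝓝 0] g' := hg.mono fun t ht => ht.deriv
  have hdd : deriv (deriv g) 0 = g2 := by rw [hd.deriv_eq]; exact hg'.deriv
  have hmin : IsLocalMin g 0 := isLocalMin_of_deriv_deriv_pos (by rw [hdd]; exact hpos)
    (by rw [hd.self_of_nhds, h0]) hg.self_of_nhds.continuousAt
  have hc : g =ᶠ[𝓝 0] fun _ => g 0 := by
    filter_upwards [hmin, hmax] with t h1 h2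
    exact le_antisymm h2 h1
  have : deriv (deriv g) 0 = 0 := by
    rw [hc.deriv.deriv_eq]; simp
  linarith

/-- The one-dimensional maximum condition for `log a + α log b + c`. -/
lemma second_order_log (α : ℝ) (a a' b b' c c' : ℝ → ℝ) (a2 b2 c2 : ℝ)
    (ha : ∀ᶠ t in 𝓝 (0:ℝ), HasDerivAt a (a' t) t) (ha' : HasDerivAt a' a2 0)
    (hb : ∀ᶠ t in 𝓝 (0:ℝ), HasDerivAt b (b' t) t) (hb' : HasDerivAt b' b2 0)
    (hc : ∀ᶠ t in 𝓝 (0:ℝ), HasDerivAt c (c' t) t) (hc' : HasDerivAt c' c2 0)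
    (a0 : 0 < a 0) (b0 : 0 < b 0)
    (hmax : IsLocalMax (fun t => Real.log (a t) + α * Real.log (b t) + c t) 0) :
    a' 0 / a 0 + α * (b' 0 / b 0) + c' 0 = 0 ∧
    (a2 / a 0 - (a' 0 / a 0) ^ 2) + α * (b2 / b 0 - (b' 0 / b 0) ^ 2) + c2 ≤ 0 := by
  have hac := ha.self_of_nhds.continuousAt.eventually (lt_mem_nhds a0)
  have hbc := hb.self_of_nhds.continuousAt.eventually (lt_mem_nhds b0)
  have hmain := second_order_max _ (fun t => a' t / a t + α * (b' t / b t) + c' t)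
    ((a2 * a 0 - a' 0 * a' 0) / a 0 ^ 2 + α * ((b2 * b 0 - b' 0 * b' 0) / b 0 ^ 2) + c2)
    (by
      filter_upwards [ha, hb, hc, hac, hbc] with t h1 h2 h3 h4 h5
      exact ((h1.log h4.ne').add ((h2.log h5.ne').const_mul α)).add h3)
    (((ha'.div ha.self_of_nhds a0.ne').add
      ((hb'.div hb.self_of_nhds b0.ne').const_mul α)).add hc') hmax
  refine ⟨hmain.1, ?_⟩
  have := hmain.2
  have e1 : (a2 / a 0 - (a' 0 / a 0) ^ 2) = (a2 * a 0 - a' 0 * a' 0) / a 0 ^ 2 := by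
    field_simp
  have e2 : (b2 / b 0 - (b' 0 / b 0) ^ 2) = (b2 * b 0 - b' 0 * b' 0) / b 0 ^ 2 := by
    field_simp
  rw [e1, e2]; exact this

lemma fderiv_eq_sum_fpd {n : ℕ} (f : (Fin n → ℝ) → ℝ) (lam w : Fin n → ℝ) :
    fderiv ℝ f lam w = ∑ i, fpd f i lam * w i := by
  have := LinearMap.pi_apply_eq_sum_univ (fderiv ℝ f lam).toLinearMap w
  simp only [ContinuousLinearMap.coe_coe, smul_eq_mul] at this
  rw [this]
  apply Finset.sum_congr rfl
  intro i _
  rw [mul_comm]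
  congr 2
  ext j
  simp [Pi.single_apply, eq_comm]

/-- Tangent plane inequality for concave functions. -/
lemma concave_tangent {n : ℕ} {Γ : Set (Fin n → ℝ)} {f : (Fin n → ℝ) → ℝ}
    (hf : ConcaveOn ℝ Γ f) {x y : Fin n → ℝ} (hx : x ∈ Γ) (hy : y ∈ Γ)
    (hd : DifferentiableAt ℝ f x) : f y ≤ f x + fderiv ℝ f x (y - x) := by
  have hg : HasDerivAt (fun t : ℝ => f (x + t • (y - x))) (fderiv ℝ f x (y - x)) 0 := by
    have h1 : HasDerivAt (fun t : ℝ => x + t • (y - x)) (y - x) 0 := by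
      simpa using ((hasDerivAt_id (0:ℝ)).smul_const (y - x)).const_add x
    have h2 : HasFDerivAt f (fderiv ℝ f x) (x + (0:ℝ) • (y - x)) := by
      simpa using hd.hasFDerivAt
    exact h2.comp_hasDerivAt (0:ℝ) h1
  have hcc : ConcaveOn ℝ (Set.Icc (0:ℝ) 1) (fun t : ℝ => f (x + t • (y - x))) := by
    refine ⟨convex_Icc 0 1, ?_⟩
    intro s hs t ht a b ha hb hab
    have key : ∀ r ∈ Set.Icc (0:ℝ) 1, x + r • (y - x) ∈ Γ := by
      intro r hr
      exact hf.1.add_smul_sub_mem hx hy hr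
    have := hf.2 (key s hs) (key t ht) ha hb hab
    convert this using 2
    have : b = 1 - a := by linarith
    subst this
    ext i
    simp
    ring
  have := hcc.slope_le_of_hasDerivAt (x := 0) (y := 1) (by simp) (by simp) (by norm_num) hg
  rw [slope_def_field] at this
  simp at this
  simp only [map_sub]
  linarith

/-- Euler's identity. -/
lemma euler_fpd {n : ℕ} {Γ : Set (Fin n → ℝ)} {f : (Fin n → ℝ) → ℝ} {x : Fin n → ℝ} (hx : x ∈ Γ)
    (hd : DifferentiableAt ℝ f x)
    (hh : ∀ lam ∈ Γ, ∀ t : ℝ, 0 < t → f (t • lam) = t * f lam) :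
    ∑ i, fpd f i x * x i = f x := by
  rw [← fderiv_eq_sum_fpd]
  have h1 : HasDerivAt (fun t : ℝ => t • x) x 1 := by
    simpa using (hasDerivAt_id (1:ℝ)).smul_const x
  have h2 : HasFDerivAt f (fderiv ℝ f x) ((1:ℝ) • x) := by
    simpa using hd.hasFDerivAt
  have h3 := h2.comp_hasDerivAt (1:ℝ) h1
  have h4 : HasDerivAt (fun t : ℝ => t * f x) (f x) 1 := by
    simpa using (hasDerivAt_id (1:ℝ)).mul_const (f x)
  have h5 : (f ∘ fun t : ℝ => t • x) =ᶠ[𝓝 1] fun t : ℝ => t * f x := by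
    filter_upwards [lt_mem_nhds (show (0:ℝ) < 1 by norm_num)] with t ht
    exact hh x hx t ht
  exact h3.unique (h4.congr_of_eventuallyEq h5)

/-- Schur-Horn type monotonicity. -/
lemma schur_mono {n : ℕ} {Γ : Set (Fin n → ℝ)} {f : (Fin n → ℝ) → ℝ} (hf : ConcaveOn ℝ Γ f)
    (hΓ : ∀ lam ∈ Γ, ∀ σ : Equiv.Perm (Fin n), lam ∘ σ ∈ Γ)
    (hs : ∀ lam ∈ Γ, ∀ σ : Equiv.Perm (Fin n), f (lam ∘ σ) = f lam)
    {μ : Fin n → ℝ} (hμ : μ ∈ Γ) {S : Matrix (Fin n) (Fin n) ℝ}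
    (hS : S ∈ doublyStochastic ℝ (Fin n)) :
    S.mulVec μ ∈ Γ ∧ f μ ≤ f (S.mulVec μ) := by
  have hS' : S ∈ (doublyStochastic ℝ (Fin n) : Set (Matrix (Fin n) (Fin n) ℝ)) := hS
  rw [doublyStochastic_eq_convexHull_permMatrix] at hS'
  have hconv : Convex ℝ {T : Matrix (Fin n) (Fin n) ℝ | T.mulVec μ ∈ {x ∈ Γ | f μ ≤ f x}} := by
    intro A hA B hB a b ha hb hab
    have := hf.convex_ge (f μ) hA hB ha hb hab
    simp only [Set.mem_ofPred_eq, Matrix.add_mulVec, Matrix.smul_mulVec] at this ⊢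
    exact this
  have hsub := convexHull_min (s := {σ.permMatrix ℝ | σ : Equiv.Perm (Fin n)}) (by
    rintro _ ⟨σ, rfl⟩
    have : (σ.permMatrix ℝ).mulVec μ = μ ∘ σ := by
      rw [Matrix.permMatrix_mulVec]
    simp only [Set.mem_ofPred_eq, this]
    exact ⟨hΓ μ hμ σ, (hs μ hμ σ).ge⟩) hconv
  exact hsub hS'

/-- Spectral decomposition of the Hessian. -/
lemma hess_spectral {n : ℕ} (u : EuclideanSpace ℝ (Fin n) → ℝ) (y : EuclideanSpace ℝ (Fin n))
    (hu : ContDiffAt ℝ 2 u y) : ∃ b : OrthonormalBasis (Fin n) ℝ (EuclideanSpace ℝ (Fin n)),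
    ∀ v w, fderiv ℝ (fderiv ℝ u) y v w =
      ∑ j, hessEigen u y j * (inner ℝ (b j) v * inner ℝ (b j) w) := by
  have hsymm : IsSymmSndFDerivAt ℝ u y := hu.isSymmSndFDerivAt (by simp)
  have hA : (hessianMatrix u y).IsHermitian := by
    ext i j
    simp only [Matrix.conjTranspose_apply, hessianMatrix, iteratedFDeriv_two_apply, star_trivial]
    exact hsymm _ _
  have hE : hessEigen u y = hA.eigenvalues := by
    unfold hessEigen; rw [dif_pos hA]
  refine ⟨hA.eigenvectorBasis, ?_⟩
  have hexp : ∀ v : EuclideanSpace ℝ (Fin n), v = ∑ i, v i • EuclideanSpace.single i (1:ℝ) := by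
    intro v
    ext k
    simp [Finset.sum_apply, Pi.single_apply]
  have hquad : ∀ v w, fderiv ℝ (fderiv ℝ u) y v w =
      inner ℝ v (WithLp.toLp 2 ((hessianMatrix u y).mulVec w.ofLp)) := by
    intro v w
    conv_lhs => rw [hexp v, hexp w]
    simp only [map_sum, map_smul, _root_.sum_apply, _root_.smul_apply, smul_eq_mul,
      PiLp.inner_apply, Matrix.mulVec, dotProduct, hessianMatrix, iteratedFDeriv_two_apply,
      Real.inner_apply, Finset.mul_sum]
    simp
    rw [Finset.sum_comm]
    refine Finset.sum_congr rfl fun i _ => ?_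
    try rw [Finset.mul_sum]
    refine Finset.sum_congr rfl fun j _ => ?_
    ring
  intro v w
  have h1 : ∀ j, fderiv ℝ (fderiv ℝ u) y w (hA.eigenvectorBasis j) =
      hessEigen u y j * inner ℝ (hA.eigenvectorBasis j) w := by
    intro j
    rw [hquad, hA.mulVec_eigenvectorBasis, hE]
    have : WithLp.toLp 2 (hA.eigenvalues j • (hA.eigenvectorBasis j).ofLp) =
      hA.eigenvalues j • hA.eigenvectorBasis j := rfl
    rw [this, inner_smul_right, real_inner_comm]
  rw [hsymm v w]
  conv_lhs => rw [← hA.eigenvectorBasis.sum_repr' v]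
  rw [map_sum]
  refine Finset.sum_congr rfl fun j _ => ?_
  rw [map_smul, h1, smul_eq_mul]
  ring

/-- Linearised operator: `h(y) = ∑ fᵢ D²u(y)(eᵢ,eᵢ)` is minimal at `x₀`. -/
lemma linearised_min {n : ℕ} {Γ : Set (Fin n → ℝ)} {f : (Fin n → ℝ) → ℝ}
    (hΓ : IsConvexInvariantCone Γ) (hf : IsConcaveEllipticHessianOp Γ f)
    (u : EuclideanSpace ℝ (Fin n) → ℝ) (x y : EuclideanSpace ℝ (Fin n))
    (hux : hessEigen u x ∈ Γ) (huy : hessEigen u y ∈ Γ)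
    (hfx : f (hessEigen u x) = 1) (hfy : f (hessEigen u y) = 1)
    (hy : ContDiffAt ℝ 2 u y)
    (e : OrthonormalBasis (Fin n) ℝ (EuclideanSpace ℝ (Fin n))) :
    ∑ i, fpd f i (hessEigen u x) * hessEigen u x i ≤
      ∑ i, fpd f i (hessEigen u x) * fderiv ℝ (fderiv ℝ u) y (e i) (e i) := by
  obtain ⟨b, hb⟩ := hess_spectral u y hy
  obtain ⟨ho, -, hcv, -, -, hperm⟩ := hΓ
  obtain ⟨hC2, hcc, hsym, -, -, hhom⟩ := hf
  let S : Matrix (Fin n) (Fin n) ℝ := fun i j => ‖(inner ℝ (b j) (e i) : ℝ)‖ ^ 2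
  have hS : S ∈ doublyStochastic ℝ (Fin n) := by
    rw [mem_doublyStochastic_iff_sum]
    refine ⟨fun i j => by positivity, fun i => ?_, fun j => ?_⟩
    · simp only [S]
      rw [b.sum_sq_norm_inner_right]; simp
    · simp only [S]
      rw [e.sum_sq_norm_inner_left]; simp
  have hd : ∀ i, fderiv ℝ (fderiv ℝ u) y (e i) (e i) = S.mulVec (hessEigen u y) i := by
    intro i
    rw [hb]
    simp only [Matrix.mulVec, dotProduct, S]
    refine Finset.sum_congr rfl fun j _ => ?_
    rw [Real.norm_eq_abs, sq_abs]; ring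
  obtain ⟨h1, h2⟩ := schur_mono hcc hperm hsym huy hS
  have hdiff : DifferentiableAt ℝ f (hessEigen u x) :=
    (hC2.contDiffAt (ho.mem_nhds hux)).differentiableAt (by norm_num)
  have h3 := concave_tangent hcc hux h1 hdiff
  rw [map_sub, fderiv_eq_sum_fpd, fderiv_eq_sum_fpd] at h3
  simp only [hd]
  linarith

/-- `D³u` facts: the linearised operator annihilates first derivatives. -/
lemma third_deriv_zero {n : ℕ} {Γ : Set (Fin n → ℝ)} {f : (Fin n → ℝ) → ℝ}
    (hΓ : IsConvexInvariantCone Γ) (hf : IsConcaveEllipticHessianOp Γ f)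
    (Ω : Set (EuclideanSpace ℝ (Fin n))) (hΩ : IsOpen Ω)
    (u : EuclideanSpace ℝ (Fin n) → ℝ) (hu : ∀ y ∈ Ω, ContDiffAt ℝ 3 u y)
    (hadm : ∀ y ∈ Ω, hessEigen u y ∈ Γ) (heq : ∀ y ∈ Ω, f (hessEigen u y) = 1)
    (x : EuclideanSpace ℝ (Fin n)) (hx : x ∈ Ω)
    (e : OrthonormalBasis (Fin n) ℝ (EuclideanSpace ℝ (Fin n)))
    (he : ∀ i, fderiv ℝ (fderiv ℝ u) x (e i) (e i) = hessEigen u x i)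
    (ξ : EuclideanSpace ℝ (Fin n)) :
    ∑ i, fpd f i (hessEigen u x) * fderiv ℝ (fderiv ℝ (fderiv ℝ u)) x (e i) (e i) ξ = 0 := by
  have hu1 : ContDiffAt ℝ 2 (fderiv ℝ u) x := (hu x hx).fderiv_right (by norm_num)
  have hu2 : ContDiffAt ℝ 1 (fderiv ℝ (fderiv ℝ u)) x := hu1.fderiv_right (by norm_num)
  have hdT : HasFDerivAt (fderiv ℝ (fderiv ℝ u)) (fderiv ℝ (fderiv ℝ (fderiv ℝ u)) x) x :=
    (hu2.differentiableAt (by norm_num)).hasFDerivAt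
  have hentry : ∀ v w, HasFDerivAt (fun y => fderiv ℝ (fderiv ℝ u) y v w)
      (((fderiv ℝ (fderiv ℝ (fderiv ℝ u)) x).flip v).flip w) x := by
    intro v w
    have h1 := hdT.clm_apply (hasFDerivAt_const v x)
    have h2 := h1.clm_apply (hasFDerivAt_const w x)
    refine h2.congr_fderiv ?_
    ext z
    simp
  have hsw : ∀ v w z, fderiv ℝ (fderiv ℝ (fderiv ℝ u)) x z v w =
      fderiv ℝ (fderiv ℝ (fderiv ℝ u)) x z w v := by
    intro v w z
    have hev : (fun y => fderiv ℝ (fderiv ℝ u) y v w) =ᶠ[𝓝 x]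
        (fun y => fderiv ℝ (fderiv ℝ u) y w v) := by
      filter_upwards [hΩ.mem_nhds hx] with y hy
      exact ((hu y hy).of_le (by norm_num)).isSymmSndFDerivAt (n := 2) (by simp) v w
    have := ((hentry w v).congr_of_eventuallyEq hev).unique (hentry v w)
    have := DFunLike.congr_fun this z
    simpa using this.symm
  have hs2 : ∀ v w, fderiv ℝ (fderiv ℝ (fderiv ℝ u)) x v w =
      fderiv ℝ (fderiv ℝ (fderiv ℝ u)) x w v := fun v w =>
    hu1.isSymmSndFDerivAt (by simp) v w
  have hmin : IsLocalMin (fun y => ∑ i, fpd f i (hessEigen u x) *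
      fderiv ℝ (fderiv ℝ u) y (e i) (e i)) x := by
    filter_upwards [hΩ.mem_nhds hx] with y hy
    simp only [he]
    exact linearised_min hΓ hf u x y (hadm x hx) (hadm y hy) (heq x hx) (heq y hy)
      ((hu y hy).of_le (by norm_num)) e
  have hD := HasFDerivAt.fun_sum (u := Finset.univ) (fun i _ =>
    (hentry (e i) (e i)).const_mul (fpd f i (hessEigen u x)))
  have h0 := hmin.hasFDerivAt_eq_zero hD
  have := DFunLike.congr_fun h0 ξ
  simp only [_root_.sum_apply, _root_.smul_apply, smul_eq_mul, _root_.zero_apply,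
    ContinuousLinearMap.flip_apply] at this
  rw [← this]
  refine Finset.sum_congr rfl fun i _ => ?_
  rw [hsw, hs2]

lemma max_point (n : ℕ) (hn : 0 < n) (α ε d D₁ D₂ N₁ N₂ c3 δ : ℝ) (hα : 0 < α) (hε : 0 < ε)
    (hd : 0 < d) (hD₂ : 0 < D₂) (hN₁ : 0 < N₁)
    (hεd : (9 + 4 / α) * ε * d ^ 2 ≤ 1 / 2)
    (hc3 : c3 = 2 / ε * (n * (2 * D₂ * (9 / 4 * α + 1)) + α))
    {Γ : Set (Fin n → ℝ)} {f : (Fin n → ℝ) → ℝ}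
    (hΓ : IsConvexInvariantCone Γ) (hf : IsConcaveEllipticHessianOp Γ f)
    (hN : ConditionN Γ f N₁ N₂)
    (Ω : Set (EuclideanSpace ℝ (Fin n))) (hΩ : IsOpen Ω)
    (u : EuclideanSpace ℝ (Fin n) → ℝ) (hu : ∀ y ∈ Ω, ContDiffAt ℝ 3 u y)
    (hadm : ∀ y ∈ Ω, hessEigen u y ∈ Γ) (heq : ∀ y ∈ Ω, f (hessEigen u y) = 1)
    (hD : ConditionD f u Ω D₁ D₂)
    (x p : EuclideanSpace ℝ (Fin n)) (hx : x ∈ Ω) (hxp : ‖x - p‖ ≤ d)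
    (P v : ℝ) (hP : 0 < P) (hv : 0 < v) (hPe : P = ‖gradient u x‖) (hve : v = -u x - δ)
    (ξ : EuclideanSpace ℝ (Fin n)) (hξ : ‖ξ‖ = 1) (hgξ : gradient u x = P • ξ)
    (hmax : IsLocalMax (fun y => Real.log (fderiv ℝ u y ξ) + α * Real.log (-u y - δ)
      + ε / 2 * ‖y - p‖ ^ 2) x) :
    P ^ 2 ≤ n * (2 * ε * d / α) ^ 2 * v ^ 2 ∨ P ^ 2 ≤ 2 * D₁ / α * v ∨
      P ^ 2 * v ^ N₂ ≤ 2 * D₂ * N₁ * c3 ^ N₂ / α * v := by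
  obtain ⟨e, he⟩ := hess_spectral u x ((hu x hx).of_le (by norm_num))
  have hee : ∀ i w, fderiv ℝ (fderiv ℝ u) x (e i) w = hessEigen u x i * inner ℝ (e i) w := by
    intro i w
    rw [he, Finset.sum_eq_single i]
    · simp
    · intro j _ hji
      rw [e.inner_eq_zero hji]; simp
    · simp
  have hgr : ∀ w, fderiv ℝ u x w = P * inner ℝ w ξ := by
    intro w
    have : fderiv ℝ u x w = inner ℝ (gradient u x) w := by
      rw [gradient, InnerProductSpace.toDual_symm_apply]
    rw [this, hgξ, inner_smul_left, real_inner_comm]; simp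
  have hu1 : ∀ y ∈ Ω, HasFDerivAt u (fderiv ℝ u y) y := fun y hy =>
    ((hu y hy).differentiableAt (by norm_num)).hasFDerivAt
  have hu2 : ∀ y ∈ Ω, HasFDerivAt (fderiv ℝ u) (fderiv ℝ (fderiv ℝ u) y) y := fun y hy =>
    (((hu y hy).fderiv_right (m := 2) (by norm_num)).differentiableAt (by norm_num)).hasFDerivAt
  have hu3 : HasFDerivAt (fderiv ℝ (fderiv ℝ u)) (fderiv ℝ (fderiv ℝ (fderiv ℝ u)) x) x :=
    ((((hu x hx).fderiv_right (m := 2) (by norm_num)).fderiv_right (m := 1)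
      (by norm_num)).differentiableAt (by norm_num)).hasFDerivAt
  have hline : ∀ (w : EuclideanSpace ℝ (Fin n)) (t : ℝ),
      HasDerivAt (fun t : ℝ => x + t • w) w t := by
    intro w t
    simpa using ((hasDerivAt_id t).smul_const w).const_add x
  have hlc : ∀ (w : EuclideanSpace ℝ (Fin n)),
      Tendsto (fun t : ℝ => x + t • w) (𝓝 0) (𝓝 x) := by
    intro w
    have := (hline w 0).continuousAt.tendsto
    simpa using this
  have hlΩ : ∀ w : EuclideanSpace ℝ (Fin n), ∀ᶠ t in 𝓝 (0:ℝ), x + t • w ∈ Ω := fun w =>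
    (hlc w).eventually (hΩ.mem_nhds hx)
  have key : ∀ i, _ ∧ _ := fun i => second_order_log α
    (fun t => fderiv ℝ u (x + t • e i) ξ) (fun t => fderiv ℝ (fderiv ℝ u) (x + t • e i) (e i) ξ)
    (fun t => -u (x + t • e i) - δ) (fun t => -fderiv ℝ u (x + t • e i) (e i))
    (fun t => ε / 2 * ‖x + t • e i - p‖ ^ 2) (fun t => ε * inner ℝ (x + t • e i - p) (e i))
    (fderiv ℝ (fderiv ℝ (fderiv ℝ u)) x (e i) (e i) ξ)
    (-fderiv ℝ (fderiv ℝ u) x (e i) (e i)) ε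
    (by
      filter_upwards [hlΩ (e i)] with t ht
      have h1 := (hu2 _ ht).comp_hasDerivAt t (hline (e i) t)
      have h2 := h1.clm_apply (hasDerivAt_const t ξ)
      simpa using h2)
    (by
      have h1 := (hu3.clm_apply (hasFDerivAt_const (e i) x)).clm_apply (hasFDerivAt_const ξ x)
      have h2 := h1.comp_hasDerivAt_of_eq (0:ℝ) (hline (e i) 0) (by simp)
      exact h2.congr_deriv (by simp))
    (by
      filter_upwards [hlΩ (e i)] with t ht
      have h1 := (hu1 _ ht).comp_hasDerivAt t (hline (e i) t)
      exact (h1.neg).sub_const δ)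
    (by
      have h0 : HasFDerivAt (fderiv ℝ u) (fderiv ℝ (fderiv ℝ u) x)
        (x + (0:ℝ) • e i) := by simpa using hu2 x hx
      have h1 := h0.comp_hasDerivAt (0:ℝ) (hline (e i) 0)
      have h2 := (h1.clm_apply (hasDerivAt_const (0:ℝ) (e i))).fun_neg
      simpa using h2)
    (by
      refine Eventually.of_forall fun t => ?_
      have h1 := (((hline (e i) t).sub_const p).norm_sq).const_mul (ε / 2)
      exact h1.congr_deriv (by ring))
    (by
      have h1 := ((((hline (e i) 0).sub_const p)).inner ℝ (hasDerivAt_const (0:ℝ) (e i))).const_mul ε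
      simpa using h1)
    (by
      simp only [zero_smul, add_zero]
      rw [hgr]; simp [hξ, hP])
    (by simp only [zero_smul, add_zero]; linarith)
    (by
      have h1 := (hlc (e i)).eventually hmax
      filter_upwards [h1] with t ht
      simpa using ht)
  simp only [zero_smul, add_zero] at key
  have hξξ : fderiv ℝ u x ξ = P := by rw [hgr]; simp [hξ]
  have hdiff : DifferentiableAt ℝ f (hessEigen u x) :=
    (hf.1.contDiffAt (hΓ.1.mem_nhds (hadm x hx))).differentiableAt (by norm_num)
  refine c1_algebra n hn α ε d D₁ D₂ N₁ N₂ c3 P v hα hε hd hD₂ hN₁ hεd hP hv hc3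
    (hessEigen u x) (fun i => inner ℝ (e i) ξ) (fun i => ε * inner ℝ (x - p) (e i))
    (fun i => fderiv ℝ (fderiv ℝ (fderiv ℝ u)) x (e i) (e i) ξ)
    (fun i => fpd f i (hessEigen u x)) ?_ ?_ ?_ ?_ ?_ ?_ ?_ ?_ ?_
  · have := e.sum_sq_norm_inner_right ξ
    simp only [Real.norm_eq_abs, sq_abs, hξ] at this
    rw [this]; norm_num
  · exact fun i => hf.2.2.2.1 _ (hadm x hx) i
  · intro i
    rw [abs_mul, abs_of_pos hε]
    gcongr
    refine (abs_real_inner_le_norm _ _).trans ?_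
    simpa using hxp
  · intro i
    have := (key i).1
    rw [hξξ, hee, hgr, ← hve] at this
    rw [← this]; ring
  · intro i
    have := (key i).2
    rw [hξξ, hee, hgr, ← hve, hee] at this
    refine le_trans (le_of_eq ?_) this
    simp
    ring
  · refine third_deriv_zero hΓ hf Ω hΩ u hu hadm heq x hx e ?_ ξ
    intro i; rw [hee]; simp
  · rw [euler_fpd (hadm x hx) hdiff hf.2.2.2.2.2, heq x hx]
  · exact hD x hx
  · exact hN _ (hadm x hx) (heq x hx)

lemma final_bound (m : ℕ) (N₂ c1 c2 c4 M P v : ℝ) (hm : N₂ ≤ 2 * m) (hM : 0 < M) (hc1 : 0 ≤ c1)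
    (hc2 : 0 ≤ c2) (hc4 : 0 ≤ c4) (hv : 0 < v) (hvM : v ≤ M) (hP : 0 < P)
    (h : P ^ 2 ≤ c1 * v ^ 2 ∨ P ^ 2 ≤ c2 * v ∨ P ^ 2 * v ^ N₂ ≤ c4 * v) :
    v ^ m * P ≤ √(c1 * M ^ (2 * m + 2) + c2 * M ^ (2 * m + 1) + c4 * M ^ (2 * m - N₂ + 1)) := by
  apply Real.le_sqrt_of_sq_le
  have e : (v ^ m * P) ^ 2 = v ^ (2 * m) * P ^ 2 := by rw [mul_pow, ← pow_mul, mul_comm m 2]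
  rw [e]
  have p1 : 0 ≤ c1 * M ^ (2 * m + 2) := by positivity
  have p2 : 0 ≤ c2 * M ^ (2 * m + 1) := by positivity
  have p3 : 0 ≤ c4 * M ^ (2 * m - N₂ + 1) := by positivity
  rcases h with h | h | h
  · have : v ^ (2 * m) * P ^ 2 ≤ c1 * M ^ (2 * m + 2) := by
      calc _ ≤ v ^ (2 * m) * (c1 * v ^ 2) := by gcongr
        _ = c1 * v ^ (2 * m + 2) := by ring
        _ ≤ _ := by gcongr
    linarith
  · have : v ^ (2 * m) * P ^ 2 ≤ c2 * M ^ (2 * m + 1) := by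
      calc _ ≤ v ^ (2 * m) * (c2 * v) := by gcongr
        _ = c2 * v ^ (2 * m + 1) := by ring
        _ ≤ _ := by gcongr
    linarith
  · have : v ^ (2 * m) * P ^ 2 ≤ c4 * M ^ (2 * m - N₂ + 1) := by
      have e1 : v ^ (2 * m) = v ^ (2 * m - N₂) * v ^ N₂ := by
        rw [← Real.rpow_add hv, ← Real.rpow_natCast]
        push_cast
        ring_nf
      calc _ = v ^ (2 * m - N₂) * (P ^ 2 * v ^ N₂) := by rw [e1]; ring
        _ ≤ v ^ (2 * m - N₂) * (c4 * v) := by gcongr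
        _ = c4 * v ^ (2 * m - N₂ + 1) := by rw [Real.rpow_add_one hv.ne']; ring
        _ ≤ _ := by
          have := Real.rpow_le_rpow hv.le hvM (show 0 ≤ 2 * m - N₂ + 1 by linarith)
          gcongr
    linarith

/-- **Proposition (`C¹` estimate).** For a concave elliptic Hessian operator satisfying
condition N with constants `N₁, N₂` and a solution `u` of `F(D²u) = 1` in `Ω`, `u = 0` on
`∂Ω`, satisfying condition D with constants `D₁, D₂`, one has
`sup_Ω ((−u)^α |Du|) ≤ C` with `α, C` depending only on `‖u‖_{C⁰(Ω)}`, `N₁, N₂, D₁, D₂`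
and `diam(Ω)`. -/
theorem c1_estimate (n : ℕ) (hn : 2 ≤ n)
    (N₁ N₂ : ℝ) (hN₁ : 0 < N₁) (hN₂ : 0 < N₂)
    (D₁ D₂ : ℝ) (hD₁ : 0 < D₁) (hD₂ : 0 < D₂)
    (M : ℝ) (hM : 0 < M) (d : ℝ) (hd : 0 < d) :
    ∃ α C : ℝ, 0 < α ∧ 0 < C ∧
      ∀ (Γ : Set (Fin n → ℝ)) (f : (Fin n → ℝ) → ℝ),
        IsConvexInvariantCone Γ → IsConcaveEllipticHessianOp Γ f → ConditionN Γ f N₁ N₂ →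
        ∀ (Ω : Set (EuclideanSpace ℝ (Fin n))) (u : EuclideanSpace ℝ (Fin n) → ℝ),
          IsOpen Ω → IsConnected Ω → Bornology.IsBounded Ω → Metric.diam Ω ≤ d →
          ContDiffOn ℝ (⊤ : ℕ∞) u Ω → ContinuousOn u (closure Ω) →
          (∀ x ∈ closure Ω, |u x| ≤ M) →
          (∀ x ∈ Ω, hessEigen u x ∈ Γ) →
          (∀ x ∈ Ω, f (hessEigen u x) = 1) →
          (∀ x ∈ frontier Ω, u x = 0) →
          ConditionD f u Ω D₁ D₂ →
          ∀ x ∈ Ω, (-u x) ^ α * ‖gradient u x‖ ≤ C := by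
  obtain ⟨k, hk⟩ := exists_nat_ge N₂
  set m : ℕ := 2 * k + 1 with hm
  have hmN : N₂ ≤ 2 * (m : ℝ) := by rw [hm]; push_cast; linarith
  have hmpos : (0:ℝ) < m := by rw [hm]; positivity
  set ε : ℝ := 1 / (2 * (9 + 4 / (m:ℝ)) * d ^ 2) with hεdef
  have hε : 0 < ε := by positivity
  have hεd : (9 + 4 / (m:ℝ)) * ε * d ^ 2 ≤ 1 / 2 := by
    rw [hεdef]
    apply le_of_eq
    have : (9 + 4 / (m:ℝ)) ≠ 0 := by positivity
    field_simp
  set c3 : ℝ := 2 / ε * (n * (2 * D₂ * (9 / 4 * (m:ℝ) + 1)) + (m:ℝ)) with hc3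
  have hc3pos : 0 < c3 := by positivity
  set c1 : ℝ := n * (2 * ε * d / (m:ℝ)) ^ 2 with hc1
  set c2 : ℝ := 2 * D₁ / (m:ℝ) with hc2
  set c4 : ℝ := 2 * D₂ * N₁ * c3 ^ N₂ / (m:ℝ) with hc4
  set B : ℝ := √(c1 * M ^ (2 * m + 2) + c2 * M ^ (2 * m + 1) + c4 * M ^ (2 * m - N₂ + 1)) with hB
  have hB0 : 0 ≤ B := Real.sqrt_nonneg _
  refine ⟨m, B * Real.exp (ε / 2 * d ^ 2) + 1, hmpos, by positivity, ?_⟩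
  intro Γ f hΓ hf hN Ω u hΩ _ hbd hdiam hu huc huM hadm heq hbdry hD x hx
  have hu3 : ∀ y ∈ Ω, ContDiffAt ℝ 3 u y := fun y hy =>
    (hu.contDiffAt (hΩ.mem_nhds hy)).of_le (WithTop.coe_le_coe.2 (le_top : (3 : ℕ∞) ≤ ⊤))
  rw [Real.rpow_natCast]
  by_cases hux : 0 ≤ u x
  · have h1 : (-u x) ^ m ≤ 0 := Odd.pow_nonpos ⟨k, hm⟩ (by linarith)
    have := mul_nonpos_of_nonpos_of_nonneg h1 (norm_nonneg (gradient u x))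
    have : 0 ≤ B * Real.exp (ε / 2 * d ^ 2) := by positivity
    linarith
  push Not at hux
  have hfd : ContinuousOn (fderiv ℝ u) Ω := hu.continuousOn_fderiv_of_isOpen hΩ (by simp)
  have hgn : ∀ y, ‖gradient u y‖ = ‖fderiv ℝ u y‖ := by
    intro y; rw [gradient, LinearIsometryEquiv.norm_map]
  have main : ∀ δ : ℝ, 0 < δ → δ < -u x →
      (-u x - δ) ^ m * ‖gradient u x‖ ≤ B * Real.exp (ε / 2 * d ^ 2) := by
    intro δ hδ hδx
    set K : Set (EuclideanSpace ℝ (Fin n)) := closure Ω ∩ u ⁻¹' Set.Iic (-δ) with hK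
    have hKc : IsCompact K := Metric.isCompact_of_isClosed_isBounded
      (huc.preimage_isClosed_of_isClosed isClosed_closure isClosed_Iic)
      (hbd.closure.subset Set.inter_subset_left)
    have hKΩ : K ⊆ Ω := by
      rintro y ⟨hy, hyu⟩
      by_contra hyΩ
      have hfr : y ∈ frontier Ω := by
        rw [frontier, hΩ.interior_eq]; exact ⟨hy, hyΩ⟩
      have h0 := hbdry y hfr
      have h1 : u y ≤ -δ := hyu
      linarith
    have hxK : x ∈ K := ⟨subset_closure hx, by
      have : u x ≤ -δ := by linarith
      exact this⟩
    set Φ : EuclideanSpace ℝ (Fin n) → ℝ :=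
      fun y => (-u y - δ) ^ m * ‖fderiv ℝ u y‖ * Real.exp (ε / 2 * ‖y - x‖ ^ 2) with hΦ
    have hΦc : ContinuousOn Φ K := by
      have h1 : ContinuousOn u K := huc.mono Set.inter_subset_left
      have h2 : ContinuousOn (fderiv ℝ u) K := hfd.mono hKΩ
      have h3 : Continuous (fun y : EuclideanSpace ℝ (Fin n) =>
        Real.exp (ε / 2 * ‖y - x‖ ^ 2)) := by fun_prop
      exact (((h1.neg.sub continuousOn_const).pow m).mul h2.norm).mul h3.continuousOn
    obtain ⟨x0, hx0K, hx0⟩ := hKc.exists_isMaxOn ⟨x, hxK⟩ hΦc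
    have hx0Ω := hKΩ hx0K
    have hxle : (-u x - δ) ^ m * ‖gradient u x‖ ≤ Φ x0 := by
      have := hx0 hxK
      simp only [Set.mem_ofPred_eq, hΦ, sub_self, norm_zero] at this
      rw [hgn]
      simpa using this
    by_cases hpos : Φ x0 ≤ 0
    · have : 0 ≤ B * Real.exp (ε / 2 * d ^ 2) := by positivity
      linarith
    push Not at hpos
    have hv0 : 0 ≤ -u x0 - δ := by
      have : u x0 ≤ -δ := hx0K.2
      linarith
    have hvpos : 0 < -u x0 - δ := by
      rcases hv0.lt_or_eq with h | h
      · exact h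
      · exfalso
        simp only [hΦ, ← h] at hpos
        rw [zero_pow (by omega)] at hpos
        simp at hpos
    have hPpos : 0 < ‖gradient u x0‖ := by
      rcases (norm_nonneg (gradient u x0)).lt_or_eq with h | h
      · exact h
      · exfalso
        rw [hgn] at h
        simp only [hΦ, ← h] at hpos
        simp at hpos
    set P := ‖gradient u x0‖ with hP
    set v := -u x0 - δ with hv
    set ξ : EuclideanSpace ℝ (Fin n) := P⁻¹ • gradient u x0 with hξdef
    have hξ : ‖ξ‖ = 1 := by
      rw [hξdef, norm_smul, norm_inv, Real.norm_eq_abs, abs_of_pos hPpos, ← hP,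
        inv_mul_cancel₀ hPpos.ne']
    have hgξ : gradient u x0 = P • ξ := by
      rw [hξdef, smul_smul, mul_inv_cancel₀ hPpos.ne', one_smul]
    have hdξ : fderiv ℝ u x0 ξ = P := by
      have : fderiv ℝ u x0 ξ = inner ℝ (gradient u x0) ξ := by
        rw [gradient, InnerProductSpace.toDual_symm_apply]
      rw [this, hgξ, inner_smul_left, real_inner_self_eq_norm_sq, hξ]; simp
    have hxd : ‖x0 - x‖ ≤ d := by
      rw [← dist_eq_norm]
      exact (Metric.dist_le_diam_of_mem hbd hx0Ω hx).trans hdiam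
    have hlog : ∀ a b c : ℝ, 0 < a → 0 < b →
        Real.log (b ^ m * a * Real.exp c) = Real.log a + (m:ℝ) * Real.log b + c := by
      intro a b c ha hb
      rw [Real.log_mul (by positivity) (by positivity), Real.log_mul (by positivity) ha.ne',
        Real.log_exp, Real.log_pow]
      ring
    have hmax : IsLocalMax (fun y => Real.log (fderiv ℝ u y ξ) + (m:ℝ) * Real.log (-u y - δ)
        + ε / 2 * ‖y - x‖ ^ 2) x0 := by
      have hcu : ContinuousAt (fun y => -u y - δ) x0 :=
        ((hu3 x0 hx0Ω).continuousAt.neg).sub continuousAt_const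
      have hcd : ContinuousAt (fun y => fderiv ℝ u y ξ) x0 :=
        (hfd.continuousAt (hΩ.mem_nhds hx0Ω)).clm_apply continuousAt_const
      filter_upwards [hΩ.mem_nhds hx0Ω, hcu.eventually (lt_mem_nhds hvpos),
        hcd.eventually (lt_mem_nhds (show 0 < fderiv ℝ u x0 ξ by rw [hdξ]; exact hPpos))]
        with y hy h1 h2
      have hyK : y ∈ K := ⟨subset_closure hy, by
        have : u y ≤ -δ := by linarith
        exact this⟩
      have hle : Φ y ≤ Φ x0 := hx0 hyK
      have hle2 : fderiv ℝ u y ξ ≤ ‖fderiv ℝ u y‖ := by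
        have := (fderiv ℝ u y).le_opNorm ξ
        rw [hξ, mul_one] at this
        exact (le_abs_self _).trans this
      rw [hdξ, ← hlog _ _ _ h2 h1, ← hlog _ _ _ hPpos hvpos]
      apply Real.log_le_log (by positivity)
      calc _ ≤ Φ y := by
            simp only [hΦ]
            gcongr
        _ ≤ Φ x0 := hle
        _ = _ := by simp only [hΦ, hP, hgn, hv]
    have htri := max_point n (by omega) m ε d D₁ D₂ N₁ N₂ c3 δ hmpos hε hd hD₂ hN₁ hεd hc3
      hΓ hf hN Ω hΩ u hu3 hadm heq hD x0 x hx0Ω hxd P v hPpos hvpos hP hv ξ hξ hgξ hmax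
    have hvM : v ≤ M := by
      have := huM x0 (subset_closure hx0Ω)
      have := neg_le_abs (u x0)
      rw [hv]; linarith
    have hfin := final_bound m N₂ c1 c2 c4 M P v hmN hM (by positivity) (by positivity)
      (by positivity) hvpos hvM hPpos htri
    refine hxle.trans ?_
    have : Φ x0 = v ^ m * P * Real.exp (ε / 2 * ‖x0 - x‖ ^ 2) := by
      simp only [hΦ, hP, hgn, hv]
    rw [this]
    gcongr
  have hlim : Tendsto (fun δ : ℝ => (-u x - δ) ^ m * ‖gradient u x‖) (𝓝[>] 0)
      (𝓝 ((-u x) ^ m * ‖gradient u x‖)) := by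
    have hc : Continuous (fun δ : ℝ => (-u x - δ) ^ m * ‖gradient u x‖) := by fun_prop
    have := hc.tendsto 0
    simp only [sub_zero] at this
    exact this.mono_left nhdsWithin_le_nhds
  have := le_of_tendsto hlim (by
    filter_upwards [self_mem_nhdsWithin,
      mem_nhdsWithin_of_mem_nhds (gt_mem_nhds (show (0:ℝ) < -u x by linarith))] with δ h1 h2
    exact main δ h1 h2)
  linarith
end
end
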